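/- Let K be a finite dimensional compact metric space and σ: K^ℤ → K^ℤ the full shift on the alphabet K. Then mdim(K^ℤ, σ) ≥ dim K − 1. -/

import Mathlib

open Filter Set
open scoped ENNReal

namespace MeanDimPaper

variable {X : Type*} [TopologicalSpace X]

/-- `α` is an open cover of `X`. -/
def IsOpenCover (α : Set (Set X)) : Prop :=
  (∀ U ∈ α, IsOpen U) ∧ ⋃₀ α = Set.univ

/-- The order of a cover `α`: the maximum `n ≥ 0` such that there exist `n + 1`
pairwise distinct members of `α` with nonempty common intersection. -/
noncomputable def ord (α : Set (Set X)) : ℕ∞ :=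
  ⨆ n ∈ {n : ℕ | ∃ f : Fin (n + 1) → Set X,
      Function.Injective f ∧ (∀ i, f i ∈ α) ∧ (⋂ i, f i).Nonempty}, (n : ℕ∞)

/-- `β` refines `α`: every member of `β` is contained in some member of `α`. -/
def Refines (β α : Set (Set X)) : Prop := ∀ V ∈ β, ∃ U ∈ α, V ⊆ U

/-- `D(α)`: the minimum of `ord β` over open covers `β` refining `α`. -/
noncomputable def covD (α : Set (Set X)) : ℕ∞ :=
  ⨅ β ∈ {β : Set (Set X) | IsOpenCover β ∧ Refines β α}, ord β

/-- Topological (covering) dimension: the supremum of `D(α)` over open covers `α`. -/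
noncomputable def topDim (X : Type*) [TopologicalSpace X] : ℕ∞ :=
  ⨆ α ∈ {α : Set (Set X) | IsOpenCover α}, covD α

/-- Diameter of a set with respect to a distance function `d`. -/
noncomputable def diamD (d : X → X → ℝ) (U : Set X) : ℝ :=
  sSup {r | ∃ x ∈ U, ∃ y ∈ U, r = d x y}

/-- Mesh of a cover: the supremum of the diameters of its members. -/
noncomputable def mesh (d : X → X → ℝ) (α : Set (Set X)) : ℝ :=
  sSup (diamD d '' α)

/-- `widim_ε(X, d)`: the minimum of `D(α)` over open covers `α` with `mesh(α, d) < ε`. -/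
noncomputable def widim (ε : ℝ) (d : X → X → ℝ) : ℕ∞ :=
  ⨅ α ∈ {α : Set (Set X) | IsOpenCover α ∧ mesh d α < ε}, covD α

/-- `d` is a metric on `X` compatible with the topology of `X`. -/
structure IsCompatMetric {X : Type*} [TopologicalSpace X] (d : X → X → ℝ) : Prop where
  refl : ∀ x, d x x = 0
  eq_of : ∀ x y, d x y = 0 → x = y
  symm : ∀ x y, d x y = d y x
  triangle : ∀ x y z, d x z ≤ d x y + d y z
  isOpen_iff : ∀ U : Set X, IsOpen U ↔ ∀ x ∈ U, ∃ ε > 0, ∀ y, d x y < ε → y ∈ U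

/-- The dynamical distance `d_n(x, y) = max_{0 ≤ i < n} d(Tⁱ x, Tⁱ y)`. -/
noncomputable def dynDist (d : X → X → ℝ) (T : X → X) (n : ℕ) (x y : X) : ℝ :=
  sSup {r | ∃ i < n, r = d (T^[i] x) (T^[i] y)}

/-- Mean dimension `mdim(X, T)` computed with the metric `d`:
`lim_{ε → 0} lim_{n → ∞} widim_ε(X, d_n) / n`.  The inner limit exists (by
subadditivity of `n ↦ widim_ε(X, d_n)`) so it coincides with the liminf, and the inner
quantity is monotone as `ε` decreases, so the limit as `ε → 0` is the supremum over
`ε > 0`. -/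
noncomputable def mdim (T : X → X) (d : X → X → ℝ) : ℝ≥0∞ :=
  ⨆ (ε : ℝ) (_ : 0 < ε),
    Filter.liminf (fun n : ℕ => (widim ε (dynDist d T n) : ℝ≥0∞) / (n : ℝ≥0∞)) Filter.atTop

/-- The full shift `σ` on the alphabet `K`: `σ((xₙ)ₙ) = (xₙ₊₁)ₙ`. -/
def shift (K : Type*) : (ℤ → K) → ℤ → K := fun x n => x (n + 1)

/-!
Suppose that `2 ≤ n`, `dim K ≤ n + 1` and `mdim (K^ℤ, σ) < n`; the point is that then `dim K ≤ n`.

*Cohomology.* Let `A ⊆ K` and let `F` be a field. A nonzero class in the Alexander–Spanier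
cohomology `H^k(K, A; F)` is detected at every small scale by a relative cycle of the Vietoris–Rips
complex. Over a field the `N`-fold cross power of the class is detected by the cross power of the
cycle, so it survives at every small scale, and a cover of `K^N` of mesh below the scale where the
class is defined must have order at least `N * k`. Hence `k ≤ mdim (K^ℤ, σ)`. It follows that
`H^n(K, A; ZMod p)` and `H^(n+1)(K, A; ℚ)` vanish. By the Bockstein sequences the first makes
`H^(n+1)(K, A; ℤ)` torsion free and by the second it is torsion, so it is zero.

*Obstruction theory.* Let `φ` be a map from `K` to an `(n+1)`-dimensional nerve, and let `A` be the
complement of the preimage of the open star of a top simplex. The vanishing of the pulled back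
orientation class in `H^(n+1)(K, A; ℤ)` lets one extend `φ|A`, after one suspension, to a map that
avoids the centre of the simplex. Homotopies of suspended maps compose as loops in a mapping space,
which replaces the group structure on the maps to a sphere. A general position argument, which uses
`dim K ≤ n + 1`, removes the suspension. So `φ` can be pushed off the open simplex. After finitely
many such steps it maps to the `n`-skeleton, which gives covers of order at most `n`.

For `dim K ≤ 2` only `dim K = 2` has content: if `mdim (K^ℤ, σ) < 1` then the vanishing of
`H^1(K, {x, y}; ℚ)` for all `x` and `y` makes `K` totally disconnected.
-/

/-! ### Ordered chains -/

section OrderedChains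

open Finsupp

variable {F : Type*} [CommRing F] {G H : Type*} [AddCommGroup G] [AddCommGroup H]
  {M N : Type*} [AddCommGroup M] [Module F M] [AddCommGroup N] [Module F N] {V W U : Type*}

/-- Augmented ordered simplicial chains on a vertex set `V`: a list of `n + 1` vertices is an
ordered `n`-simplex, and the empty list spans the augmentation degree `-1`. -/
abbrev OrderedChain (F V : Type*) [CommRing F] := List V →₀ F

/-- The submodule of chains supported on a set of lists. -/
abbrev chainsOn (F : Type*) [CommRing F] (S : Set (List V)) : Submodule F (OrderedChain F V) :=
  Finsupp.supported F F S

/-- The coboundary of a cochain, i.e. of a function on lists. The sign rule uses integer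
multiples, so that cochains may take values in any abelian group. -/
def coboundary (c : List V → G) (l : List V) : G :=
  ∑ i : Fin l.length, (-1 : ℤ) ^ (i : ℕ) • c (l.eraseIdx i)

/-- The simplicial boundary operator on ordered chains. -/
noncomputable def boundary : OrderedChain F V →ₗ[F] OrderedChain F V :=
  linearCombination F (coboundary fun l => single l 1)

/-- The cone operator, which adds an initial vertex to every simplex. -/
noncomputable def cone (x : V) : OrderedChain F V →ₗ[F] OrderedChain F V :=
  linearCombination F fun l => single (x :: l) 1

lemma linearMap_ext_single {f g : OrderedChain F V →ₗ[F] M}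
    (h : ∀ l, f (single l 1) = g (single l 1)) : f = g :=
  Finsupp.lhom_ext' fun l => LinearMap.ext_ring (h l)

lemma single_mem_chainsOn {S : Set (List V)} {l : List V} (h : l ∈ S) :
    (single l 1 : OrderedChain F V) ∈ chainsOn F S :=
  single_mem_supported F 1 h

lemma map_mem_of_forall_single {S : Set (List V)} (f : OrderedChain F V →ₗ[F] M)
    {P : Submodule F M} (h : ∀ l ∈ S, f (single l 1) ∈ P) {c : OrderedChain F V}
    (hc : c ∈ chainsOn F S) : f c ∈ P := by
  rw [chainsOn, supported_eq_span_single] at hc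
  refine (Submodule.span_le (p := P.comap f)).2 ?_ hc
  rintro _ ⟨l, hl, rfl⟩
  exact h l hl

lemma map_mem_of_forall_single₂ {S : Set (List V)} {S' : Set (List W)}
    (f : OrderedChain F V →ₗ[F] OrderedChain F W →ₗ[F] M) {P : Submodule F M}
    (h : ∀ l ∈ S, ∀ l' ∈ S', f (single l 1) (single l' 1) ∈ P) {c : OrderedChain F V}
    (hc : c ∈ chainsOn F S) {d : OrderedChain F W} (hd : d ∈ chainsOn F S') : f c d ∈ P :=
  map_mem_of_forall_single (f.flip d)
    (fun l hl => map_mem_of_forall_single (f (single l 1)) (h l hl) hd) hc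

lemma map_eq_of_forall_single {S : Set (List V)} {f g : OrderedChain F V →ₗ[F] M}
    (h : ∀ l ∈ S, f (single l 1) = g (single l 1)) {c : OrderedChain F V}
    (hc : c ∈ chainsOn F S) : f c = g c := by
  have := map_mem_of_forall_single (f - g) (P := ⊥) (fun l hl => by simp [h l hl]) hc
  simpa [sub_eq_zero] using this

lemma map_eq_zero_of_forall_single {S : Set (List V)} (f : OrderedChain F V →ₗ[F] M)
    (h : ∀ l ∈ S, f (single l 1) = 0) {c : OrderedChain F V} (hc : c ∈ chainsOn F S) : f c = 0 :=
  map_eq_of_forall_single (g := 0) h hc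

lemma apply_eq_zero_of_mem_chainsOn {S : Set (List V)} {c : OrderedChain F V}
    (hc : c ∈ chainsOn F S) {l : List V} (hl : l ∉ S) : c l = 0 :=
  notMem_support_iff.1 fun h => hl (hc h)

@[simp] lemma cone_single (x : V) (l : List V) :
    cone x (single l (1 : F)) = single (x :: l) 1 := by
  simp [cone]

lemma cone_mem_chainsOn {S T : Set (List V)} {x : V} (h : ∀ l ∈ S, x :: l ∈ T)
    {c : OrderedChain F V} (hc : c ∈ chainsOn F S) : cone x c ∈ chainsOn F T :=
  map_mem_of_forall_single _ (fun l hl => by simpa using single_mem_chainsOn (h l hl)) hc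

lemma linearCombination_cone (v : List V → M) (x : V) (c : OrderedChain F V) :
    linearCombination F v (cone x c) = linearCombination F (fun l => v (x :: l)) c :=
  LinearMap.congr_fun (f := linearCombination F v ∘ₗ cone x)
    (linearMap_ext_single fun l => by simp) c

@[simp] lemma coboundary_nil (c : List V → G) : coboundary c [] = 0 := by
  simp [coboundary]

lemma coboundary_cons (c : List V → G) (x : V) (l : List V) :
    coboundary c (x :: l) = c l - coboundary (fun l' => c (x :: l')) l := by
  simp [coboundary, Fin.sum_univ_succ, pow_succ, sub_eq_add_neg]

lemma coboundary_map (f : V → W) (v : List W → G) (l : List V) :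
    coboundary v (l.map f) = coboundary (fun l => v (l.map f)) l := by
  induction l generalizing v with
  | nil => simp
  | cons x l ih => simp [coboundary_cons, ih]

lemma coboundary_map_apply {H : Type*} [AddCommGroup H] (f : G →+ H) (v : List V → G) (l : List V) :
    coboundary (fun l => f (v l)) l = f (coboundary v l) := by
  simp [coboundary]

lemma coboundary_intCast (v : List V → ℤ) (l : List V) :
    coboundary (fun l => (v l : F)) l = coboundary v l :=
  coboundary_map_apply (Int.castAddHom F) v l

lemma coboundary_const_mul (r : F) (v : List V → F) (l : List V) :
    coboundary (fun l => r * v l) l = r * coboundary v l :=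
  coboundary_map_apply (AddMonoidHom.mulLeft r) v l

lemma coboundary_sub (v w : List V → G) (l : List V) :
    coboundary (fun l => v l - w l) l = coboundary v l - coboundary w l := by
  simp [coboundary, smul_sub]

lemma coboundary_coboundary (v : List V → G) (l : List V) : coboundary (coboundary v) l = 0 := by
  induction l generalizing v with
  | nil => simp
  | cons x l ih => simp [coboundary_cons, coboundary_sub, ih]

lemma coboundary_congr {v w : List V → G} {l : List V}
    (h : ∀ l', l'.length + 1 = l.length → l'.Sublist l → v l' = w l') :
    coboundary v l = coboundary w l :=
  Finset.sum_congr rfl fun i _ => by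
    rw [h _ (List.length_eraseIdx_add_one i.2) (l.eraseIdx_sublist i)]

lemma coboundary_ofFn (c : List V → G) (n : ℕ) (τ : Fin (n + 1) → V) :
    coboundary c (List.ofFn τ) =
      ∑ i : Fin (n + 1), (-1 : ℤ) ^ (i : ℕ) • c (List.ofFn fun j => τ (i.succAbove j)) := by
  induction n generalizing c with
  | zero => simp [coboundary_cons]
  | succ n ih =>
    rw [List.ofFn_succ, coboundary_cons, ih, Fin.sum_univ_succ (n := n + 1)]
    simp [List.ofFn_succ, pow_succ, sub_eq_add_neg]

@[simp] lemma boundary_single (l : List V) :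
    boundary (single l (1 : F)) = coboundary (fun l => single l 1) l := by
  simp [boundary]

lemma map_boundary_single (f : OrderedChain F V →ₗ[F] M) (l : List V) :
    f (boundary (single l 1)) = coboundary (fun l => f (single l 1)) l := by
  simpa using (coboundary_map_apply f.toAddMonoidHom (fun l => single l 1) l).symm

lemma linearCombination_boundary_single (v : List V → M) (l : List V) :
    linearCombination F v (boundary (single l 1)) = coboundary v l := by
  rw [map_boundary_single]
  simp

lemma boundary_boundary (c : OrderedChain F V) : boundary (boundary c) = 0 := by
  have : boundary ∘ₗ boundary (F := F) (V := V) = 0 := linearMap_ext_single fun l => by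
    rw [LinearMap.comp_apply, map_boundary_single]
    simpa using coboundary_coboundary (fun l => single l (1 : F)) l
  exact LinearMap.congr_fun this c

lemma boundary_cone (x : V) (c : OrderedChain F V) :
    boundary (cone x c) = c - cone x (boundary c) := by
  have : boundary ∘ₗ cone x = LinearMap.id - cone x ∘ₗ boundary (F := F) :=
    linearMap_ext_single fun l => by
      have h := map_boundary_single (F := F) (cone x) l
      simp only [cone_single] at h
      simp [coboundary_cons, ← h]
  exact LinearMap.congr_fun this c

lemma boundary_single_mem (l : List V) : boundary (single l (1 : F)) ∈
    chainsOn F {l' | l'.length + 1 = l.length ∧ l'.Sublist l} := by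
  rw [boundary_single]
  refine sum_mem fun i _ => zsmul_mem (single_mem_chainsOn ?_) _
  exact ⟨List.length_eraseIdx_add_one i.2, l.eraseIdx_sublist i⟩

/-- A list is degenerate if two consecutive entries agree. -/
def Degenerate (l : List V) : Prop := ¬ l.IsChain (· ≠ ·)

lemma not_degenerate_nil : ¬ Degenerate ([] : List V) := by simp [Degenerate]

lemma not_degenerate_singleton (x : V) : ¬ Degenerate [x] := by simp [Degenerate]

lemma degenerate_cons_cons {x y : V} {l : List V} :
    Degenerate (x :: y :: l) ↔ x = y ∨ Degenerate (y :: l) := by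
  simp only [Degenerate, List.isChain_cons_cons]
  tauto

lemma Degenerate.cons {l : List V} (h : Degenerate l) (x : V) : Degenerate (x :: l) :=
  fun hc => h hc.tail

lemma Degenerate.map {l : List V} (h : Degenerate l) (f : V → W) : Degenerate (l.map f) :=
  fun hc => h ((List.isChain_map f).1 hc |>.imp fun _ _ hne heq => hne (congrArg f heq))

lemma Degenerate.take_or_drop {l : List V} (h : Degenerate l) (k : ℕ) :
    Degenerate (l.take (k + 1)) ∨ Degenerate (l.drop k) := by
  induction k generalizing l with
  | zero => exact Or.inr h
  | succ k ih =>
    match l, h with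
    | [], h => exact absurd h not_degenerate_nil
    | [x], h => exact absurd h (not_degenerate_singleton x)
    | x :: y :: l, h =>
      rcases degenerate_cons_cons.1 h with h | h
      · exact Or.inl (by simp [degenerate_cons_cons, h])
      · exact (ih h).imp (fun h' => by simpa using h'.cons x) id

lemma boundary_single_mem_degenerate {l : List V} (h : Degenerate l) :
    boundary (single l (1 : F)) ∈ chainsOn F {l' | Degenerate l'} := by
  induction l with
  | nil => exact absurd h not_degenerate_nil
  | cons x l ih =>
    rw [← cone_single, boundary_cone]
    match l, h with
    | [], h => exact absurd h (not_degenerate_singleton x)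
    | y :: l, h =>
      rcases degenerate_cons_cons.1 h with rfl | h
      · rw [← cone_single, boundary_cone, map_sub, sub_sub_cancel]
        refine cone_mem_chainsOn (S := {l' | ∃ t, l' = x :: t}) ?_ (cone_mem_chainsOn
          (S := Set.univ) (fun l' _ => Set.mem_ofPred.2 ⟨l', rfl⟩) (by simp [chainsOn]))
        rintro _ ⟨t, rfl⟩
        exact degenerate_cons_cons.2 (Or.inl rfl)
      · exact sub_mem (single_mem_chainsOn h) (cone_mem_chainsOn (fun _ hl => hl.cons x) (ih h))

/-! ### Cross products -/

/-- The Alexander–Whitney product of a `k`-cochain on `V` with a cochain on `W`, pulled back to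
`U` along two vertex maps. -/
def crossCochain (p : U → V) (q : U → W) (k : ℕ) (v : List V → F) (w : List W → F)
    (l : List U) : F :=
  v ((l.take (k + 1)).map p) * w ((l.drop k).map q)

lemma crossCochain_succ_cons (p : U → V) (q : U → W) (k : ℕ) (v : List V → F) (w : List W → F)
    (z : U) (l : List U) :
    crossCochain p q (k + 1) v w (z :: l) = crossCochain p q k (fun l' => v (p z :: l')) w l := by
  simp [crossCochain]

lemma coboundary_crossCochain (p : U → V) (q : U → W) (k : ℕ) (v : List V → F) (w : List W → F)
    (l : List U) (hl : k + 2 ≤ l.length) :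
    coboundary (crossCochain p q k v w) l =
      coboundary v ((l.take (k + 2)).map p) * w ((l.drop (k + 1)).map q) +
        (-1) ^ k * v ((l.take (k + 1)).map p) * coboundary w ((l.drop k).map q) := by
  induction k generalizing v l with
  | zero =>
    match l, hl with
    | x :: y :: l, _ =>
      have h_cons : (fun l' => crossCochain p q 0 v w (x :: l')) =
          fun l' => v [p x] * w ((x :: l').map q) := by
        funext l'
        simp [crossCochain]
      have h_mul := coboundary_map_apply (AddMonoidHom.mulLeft (v [p x]))
        (fun l' => w ((x :: l').map q)) (y :: l)
      simp only [AddMonoidHom.coe_mulLeft] at h_mul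
      rw [coboundary_cons, h_cons, h_mul]
      simp only [crossCochain, List.take_succ_cons, List.take_zero, List.drop_zero,
        List.drop_succ_cons, List.map_cons, List.map_nil, coboundary_cons, coboundary_nil,
        coboundary_map]
      ring
  | succ k ih =>
    match l, hl with
    | x :: l, hl =>
      simp only [coboundary_cons, crossCochain_succ_cons, List.take_succ_cons,
        List.drop_succ_cons, List.map_cons]
      rw [ih _ _ (by simpa using hl), crossCochain, pow_succ]
      ring

end OrderedChains

section CrossProduct

open Finsupp

variable {F : Type*} [CommRing F] {V W U : Type*}

@[simp] lemma boundary_single_nil (r : F) : boundary (single ([] : List V) r) = 0 := by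
  simp [boundary]

lemma boundary_single_cons_nil (x : V) (l : List V) :
    boundary (single (x :: l) (1 : F)) [] = single l 1 [] := by
  have h : cone x (boundary (single l (1 : F))) ∈ chainsOn F {l | l ≠ []} :=
    cone_mem_chainsOn (S := univ) (by simp) (by simp [chainsOn])
  rw [← cone_single, boundary_cone, Finsupp.sub_apply, apply_eq_zero_of_mem_chainsOn h (by simp),
    sub_zero]

/-- The Eilenberg–Zilber product of two simplices along a pairing `m` of their vertices. It is
built as in the method of acyclic models: the product of two simplices is the cone, with apex the
product of the initial vertices, over the chain that its boundary has to be. The final term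
is the augmentation of a product of two vertices. -/
noncomputable def crossList (F : Type*) [CommRing F] (m : V → W → U) :
    List V → List W → OrderedChain F U
  | [], _ => 0
  | _ :: _, [] => 0
  | x :: a, y :: b => cone (m x y)
      (∑ i : Fin (a.length + 1), (-1 : ℤ) ^ (i : ℕ) • crossList F m ((x :: a).eraseIdx i) (y :: b) +
        (-1 : F) ^ a.length • ∑ i : Fin (b.length + 1),
          (-1 : ℤ) ^ (i : ℕ) • crossList F m (x :: a) ((y :: b).eraseIdx i) +
        single [] (single a 1 [] * single b 1 []))
  termination_by a b => a.length + b.length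
  decreasing_by
    all_goals
      simp only [List.length_eraseIdx, List.length_cons]
      grind

/-- The Eilenberg–Zilber cross product of ordered chains. -/
noncomputable def cross (m : V → W → U) :
    OrderedChain F V →ₗ[F] OrderedChain F W →ₗ[F] OrderedChain F U :=
  linearCombination F fun a => linearCombination F fun b => crossList F m a b

variable (m : V → W → U)

@[simp] lemma cross_nil_left (b : OrderedChain F W) : cross m (single [] (1 : F)) b = 0 := by
  have : cross m (single [] (1 : F)) = 0 := linearMap_ext_single fun b => by
    simp [cross, crossList]
  rw [this, LinearMap.zero_apply]

@[simp] lemma cross_nil_right (a : OrderedChain F V) : cross m a (single [] (1 : F)) = 0 := by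
  have : (cross m).flip (single [] (1 : F)) = 0 := linearMap_ext_single fun a => by
    cases a <;> simp [cross, crossList]
  exact LinearMap.congr_fun this a

/-- The boundary of the cross product of a chain of simplices with `n` vertices and a further
chain, computed by the Leibniz rule. -/
noncomputable def leibniz (n : ℕ) :
    OrderedChain F V →ₗ[F] OrderedChain F W →ₗ[F] OrderedChain F U :=
  (cross m).compl₁₂ boundary LinearMap.id + (-1 : F) ^ (n + 1) • (cross m).compl₂ boundary +
    ((LinearMap.mul F F).compl₁₂ (lapply [] ∘ₗ boundary) (lapply [] ∘ₗ boundary)).compr₂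
      (lsingle [])

lemma leibniz_apply (n : ℕ) (c : OrderedChain F V) (d : OrderedChain F W) :
    leibniz m n c d = cross m (boundary c) d + (-1 : F) ^ (n + 1) • cross m c (boundary d) +
      single [] (boundary c [] * boundary d []) := by
  simp [leibniz]

lemma cross_cons_cons (x : V) (y : W) (a : List V) (b : List W) :
    cross m (single (x :: a) (1 : F)) (single (y :: b) 1) = cone (m x y)
      (leibniz m (a.length + 1) (single (x :: a) 1) (single (y :: b) 1)) := by
  have h_left := map_boundary_single ((cross m).flip (single (y :: b) (1 : F))) (x :: a)
  have h_right := map_boundary_single (cross m (single (x :: a) (1 : F))) (y :: b)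
  rw [LinearMap.flip_apply] at h_left
  rw [leibniz_apply, h_left, h_right, boundary_single_cons_nil,
    boundary_single_cons_nil]
  simp [cross, crossList, coboundary, pow_succ]

lemma boundary_cross_single (a : List V) (b : List W) :
    boundary (cross m (single a (1 : F)) (single b 1)) =
      leibniz m a.length (single a 1) (single b 1) := by
  match a, b with
  | [], b => simp [leibniz_apply]
  | x :: a, [] => simp [leibniz_apply]
  | x :: a, y :: b =>
    have h_left : boundary (cross m (boundary (single (x :: a) (1 : F))) (single (y :: b) 1)) =
        leibniz m a.length (boundary (single (x :: a) 1)) (single (y :: b) 1) := by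
      refine map_eq_of_forall_single (F := F) (f := boundary ∘ₗ (cross m).flip (single (y :: b) 1))
        (g := (leibniz m a.length).flip (single (y :: b) 1)) (fun a' ha' => ?_)
        (boundary_single_mem (x :: a))
      have h_len : a'.length = a.length := by simpa using ha'.1
      simpa [h_len] using boundary_cross_single a' (y :: b)
    have h_right : boundary (cross m (single (x :: a) (1 : F)) (boundary (single (y :: b) 1))) =
        leibniz m (a.length + 1) (single (x :: a) 1) (boundary (single (y :: b) 1)) := by
      refine map_eq_of_forall_single (F := F) (f := boundary ∘ₗ cross m (single (x :: a) 1))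
        (g := leibniz m (a.length + 1) (single (x :: a) 1)) (fun b' hb' => ?_)
        (boundary_single_mem (y :: b))
      have : b'.length = b.length := by simpa using hb'.1
      exact boundary_cross_single (x :: a) b'
    have h_cycle : boundary
        (leibniz m (a.length + 1) (single (x :: a) (1 : F)) (single (y :: b) 1)) = 0 := by
      rw [leibniz_apply, map_add, map_add, map_smul, h_left, h_right, leibniz_apply, leibniz_apply,
        boundary_boundary, boundary_boundary, boundary_single_nil]
      simp only [map_zero, LinearMap.zero_apply, Finsupp.zero_apply, zero_mul, mul_zero,
        single_zero, smul_zero, add_zero, zero_add, pow_succ]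
      module
    rw [cross_cons_cons, boundary_cone, h_cycle, map_zero, sub_zero, List.length_cons]
  termination_by a.length + b.length

lemma boundary_cross {n : ℕ} {c : OrderedChain F V} (hc : c ∈ chainsOn F {l | l.length = n})
    (d : OrderedChain F W) : boundary (cross m c d) = leibniz m n c d := by
  refine map_eq_of_forall_single (F := F) (f := boundary ∘ₗ (cross m).flip d)
    (g := (leibniz m n).flip d) (fun a ha => ?_) hc
  have h : boundary ∘ₗ cross m (single a (1 : F)) = leibniz m n (single a 1) :=
    linearMap_ext_single fun b => by
      rw [← show a.length = n from ha]
      exact boundary_cross_single m a b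
  exact LinearMap.congr_fun h d

/-- The lists that can occur in the cross product of the simplices `a` and `b`. -/
def crossSimplices (a : List V) (b : List W) : Set (List U) :=
  {l | l.length + 1 = a.length + b.length ∧ (∀ z ∈ l, ∃ x ∈ a, ∃ y ∈ b, z = m x y) ∧
    ∀ x a' y b', a = x :: a' → b = y :: b' → ∃ l', l = m x y :: l'}

lemma cons_mem_crossSimplices {x : V} {y : W} {a a' : List V} {b b' : List W}
    (ha : ∀ v ∈ a', v ∈ x :: a) (hb : ∀ w ∈ b', w ∈ y :: b)
    (h_len : a'.length + b'.length = a.length + b.length + 1) {l : List U}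
    (hl : l ∈ crossSimplices m a' b') : m x y :: l ∈ crossSimplices m (x :: a) (y :: b) := by
  refine ⟨by simp [hl.1]; omega, ?_, ?_⟩
  · rintro z (_ | ⟨_, hz⟩)
    · exact ⟨x, by simp, y, by simp, rfl⟩
    · obtain ⟨v, hv, w, hw, rfl⟩ := hl.2.1 z hz
      exact ⟨v, ha v hv, w, hb w hw, rfl⟩
  · rintro x' a' y' b' h h'
    obtain ⟨⟨rfl, -⟩, rfl, -⟩ := And.intro (List.cons.inj h) (List.cons.inj h')
    exact ⟨l, rfl⟩

lemma cross_single_mem_crossSimplices (a : List V) (b : List W) :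
    cross m (single a (1 : F)) (single b 1) ∈ chainsOn F (crossSimplices m a b) := by
  match a, b with
  | [], b => simp
  | x :: a, [] => simp
  | x :: a, y :: b =>
    rw [cross_cons_cons, leibniz_apply, map_add, map_add, map_smul]
    refine add_mem (add_mem ?_ (Submodule.smul_mem _ _ ?_)) ?_
    · refine map_mem_of_forall_single (cone (m x y) ∘ₗ (cross m).flip (single (y :: b) (1 : F)))
        (fun a' ha' => ?_) (boundary_single_mem (x :: a))
      have h_len : a'.length = a.length := by simpa using ha'.1
      exact cone_mem_chainsOn (fun l => cons_mem_crossSimplices m (fun v hv => ha'.2.subset hv)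
        (fun _ => id) (by simp [h_len]; omega)) (cross_single_mem_crossSimplices a' (y :: b))
    · refine map_mem_of_forall_single (cone (m x y) ∘ₗ cross m (single (x :: a) (1 : F)))
        (fun b' hb' => ?_) (boundary_single_mem (y :: b))
      have h_len : b'.length = b.length := by simpa using hb'.1
      exact cone_mem_chainsOn (fun l => cons_mem_crossSimplices m (fun _ => id)
        (fun v hv => hb'.2.subset hv) (by simp [h_len]; omega))
        (cross_single_mem_crossSimplices (x :: a) b')
    · rw [boundary_single_cons_nil, boundary_single_cons_nil]
      by_cases h : a = [] ∧ b = []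
      · obtain ⟨rfl, rfl⟩ := h
        simp only [single_eq_same, mul_one, cone_single]
        refine single_mem_chainsOn ⟨rfl, by simp, fun x' a' y' b' h h' => ?_⟩
        exact ⟨[], by rw [(List.cons.inj h).1, (List.cons.inj h').1]⟩
      · rcases not_and_or.1 h with h | h <;> simp [h]
  termination_by a.length + b.length

lemma cross_single_mem_degenerate {a : List V} {b : List W} (h : Degenerate a ∨ Degenerate b) :
    cross m (single a (1 : F)) (single b 1) ∈ chainsOn F {l | Degenerate l} := by
  match a, b with
  | [], b => simp
  | x :: a, [] => simp
  | x :: a, y :: b =>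
    have h_left : boundary (single (x :: a) (1 : F)) ∈ chainsOn F
        {a' | a'.length = a.length ∧ (Degenerate a' ∨ Degenerate (y :: b))} := fun a' ha' =>
      ⟨by simpa using (boundary_single_mem _ ha').1,
        h.imp (fun h => boundary_single_mem_degenerate h ha') id⟩
    have h_right : boundary (single (y :: b) (1 : F)) ∈ chainsOn F
        {b' | b'.length = b.length ∧ (Degenerate (x :: a) ∨ Degenerate b')} := fun b' hb' =>
      ⟨by simpa using (boundary_single_mem _ hb').1,
        h.imp id (fun h => boundary_single_mem_degenerate h hb')⟩
    have h_aug : (single a (1 : F)) [] * (single b (1 : F)) [] = 0 := by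
      rcases h with h | h
      · have : a ≠ [] := by rintro rfl; exact not_degenerate_singleton x h
        simp [this]
      · have : b ≠ [] := by rintro rfl; exact not_degenerate_singleton y h
        simp [this]
    rw [cross_cons_cons, leibniz_apply, boundary_single_cons_nil, boundary_single_cons_nil, h_aug,
      single_zero, add_zero]
    refine cone_mem_chainsOn (S := {l | Degenerate l}) (fun _ hl => Degenerate.cons hl _)
      (add_mem ?_ (Submodule.smul_mem _ _ ?_))
    · refine map_mem_of_forall_single ((cross m).flip (single (y :: b) (1 : F))) ?_ h_left
      rintro a' ⟨_, ha'⟩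
      exact cross_single_mem_degenerate ha'
    · refine map_mem_of_forall_single (cross m (single (x :: a) (1 : F))) ?_ h_right
      rintro b' ⟨_, hb'⟩
      exact cross_single_mem_degenerate hb'
  termination_by a.length + b.length

section Evaluation

variable {m} {p : U → V} {q : U → W}

lemma crossCochain_eq_zero_of_mem_crossSimplices (hp : ∀ x y, p (m x y) = x) {k : ℕ}
    {v : List V → F} (w : List W → F) {x : V} {a : List V} (hv : ∀ l, l.length = k + 2 →
      Degenerate l → (∀ u ∈ l, u ∈ x :: a) → v l = 0) {a' : List V} (ha' : ∀ u ∈ a', u ∈ a)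
    {b : List W} {l : List U} (hl : l ∈ crossSimplices m (x :: a') b) (h_len : k < l.length) :
    crossCochain p q k (fun l' => v (x :: l')) w l = 0 := by
  have h_letters : ∀ u ∈ (l.take (k + 1)).map p, u ∈ x :: a := by
    intro u hu
    obtain ⟨z, hz, rfl⟩ := List.mem_map.1 hu
    obtain ⟨x', hx', y', -, rfl⟩ := hl.2.1 z (List.mem_of_mem_take hz)
    rw [hp]
    exact List.cons_subset_cons x ha' hx'
  have h_head : Degenerate (x :: (l.take (k + 1)).map p) := by
    cases b with
    | nil =>
      obtain ⟨z, hz⟩ := List.exists_mem_of_length_pos (k.zero_le.trans_lt h_len)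
      obtain ⟨-, -, y', hy', -⟩ := hl.2.1 z hz
      exact absurd hy' List.not_mem_nil
    | cons y b =>
      obtain ⟨l', rfl⟩ := hl.2.2 x a' y b rfl rfl
      simp [degenerate_cons_cons, hp]
  rw [crossCochain, hv _ (by simp; omega) h_head, zero_mul]
  rintro u (_ | ⟨_, hu⟩)
  exacts [by simp, h_letters u hu]

lemma linearCombination_cross_singleton (hq : ∀ x y, q (m x y) = y) {w : List W → F} (x : V)
    (b : List W) (hb : b ≠ []) (hw : ∀ l, l.length = b.length → Degenerate l →
      (∀ u ∈ l, u ∈ b) → w l = 0) :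
    linearCombination F (fun l => w (l.map q)) (cross m (single [x] 1) (single b 1)) = w b := by
  induction b generalizing w with
  | nil => exact absurd rfl hb
  | cons y b ih =>
    rw [cross_cons_cons, linearCombination_cone, leibniz_apply]
    match b with
    | [] => simp [coboundary_cons, hq]
    | y' :: b =>
      have h_zero : linearCombination F (fun l => w (y :: l.map q))
          (cross m (single [x] 1) (cone y (boundary (single (y' :: b) 1)))) = 0 := by
        refine map_eq_zero_of_forall_single
          (linearCombination F (fun l => w (y :: l.map q)) ∘ₗ cross m (single [x] 1) ∘ₗ cone y)
          (fun b' hb' => ?_) (boundary_single_mem (y' :: b))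
        simp only [LinearMap.comp_apply, cone_single]
        refine map_eq_zero_of_forall_single _ (fun l hl => ?_)
          (cross_single_mem_crossSimplices m [x] (y :: b'))
        rw [linearCombination_single, one_smul]
        obtain ⟨l', rfl⟩ := hl.2.2 x [] y b' rfl rfl
        have h_len := hl.1
        have h_len' := hb'.1
        refine hw _ (by simp at *; omega) (by simp [hq, degenerate_cons_cons]) ?_
        rintro u (_ | ⟨_, hu⟩)
        · simp
        obtain ⟨z, hz, rfl⟩ := List.mem_map.1 hu
        obtain ⟨-, -, y'', hy'', rfl⟩ := hl.2.1 z hz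
        rw [hq]
        exact List.cons_subset_cons y hb'.2.subset hy''
      have h_ih := ih (w := fun l => w (y :: l)) (by simp) fun l hl hdeg hmem =>
        hw _ (by simpa using hl) (hdeg.cons y) (List.cons_subset_cons y hmem)
      have h_vertex : boundary (single [x] (1 : F)) = single [] 1 := by simp [coboundary_cons]
      rw [boundary_single_cons_nil, boundary_single_cons_nil, h_vertex, ← cone_single y,
        boundary_cone, map_sub]
      simp only [List.map_cons, hq]
      simp [-boundary_single, h_zero, h_ih]

lemma linearCombination_crossCochain_zero (hp : ∀ x y, p (m x y) = x) (v : List V → F)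
    (w : List W → F) (x : V) (b : List W) :
    linearCombination F (crossCochain p q 0 v w) (cross m (single [x] 1) (single b 1)) =
      v [x] * linearCombination F (fun l => w (l.map q)) (cross m (single [x] 1) (single b 1)) := by
  match b with
  | [] => simp
  | y :: b =>
    refine map_eq_of_forall_single
      (g := v [x] • linearCombination F fun l => w (l.map q)) (fun l hl => ?_)
      (cross_single_mem_crossSimplices m [x] (y :: b))
    obtain ⟨l', rfl⟩ := hl.2.2 x [] y b rfl rfl
    simp [crossCochain, hp]

lemma linearCombination_cross_cons_eq_zero (hp : ∀ x y, p (m x y) = x) {k : ℕ}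
    {v : List V → F} (w : List W → F) {x : V} {a : List V} (hv : ∀ l, l.length = k + 2 →
      Degenerate l → (∀ u ∈ l, u ∈ x :: a) → v l = 0) {a' : List V} (ha' : ∀ u ∈ a', u ∈ a)
    {b : List W} (h_len : k < a'.length + b.length) :
    linearCombination F (crossCochain p q k (fun l => v (x :: l)) w)
      (cross m (single (x :: a') 1) (single b 1)) = 0 := by
  refine map_eq_zero_of_forall_single _ (fun l hl => ?_)
    (cross_single_mem_crossSimplices m (x :: a') b)
  rw [linearCombination_single, one_smul]
  refine crossCochain_eq_zero_of_mem_crossSimplices hp w hv ha' hl ?_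
  have := hl.1
  simp at this
  omega

theorem linearCombination_cross_single (hp : ∀ x y, p (m x y) = x) (hq : ∀ x y, q (m x y) = y)
    {k : ℕ} {v : List V → F} {w : List W → F} {a : List V} {b : List W} (ha : a.length = k + 1)
    (hb : b ≠ [])
    (hv : ∀ l, l.length = a.length → Degenerate l → (∀ u ∈ l, u ∈ a) → v l = 0)
    (hw : ∀ l, l.length = b.length → Degenerate l → (∀ u ∈ l, u ∈ b) → w l = 0) :
    linearCombination F (crossCochain p q k v w) (cross m (single a 1) (single b 1)) =
      v a * w b := by
  induction k generalizing v a with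
  | zero =>
    obtain ⟨x, rfl⟩ := List.length_eq_one_iff.1 ha
    rw [linearCombination_crossCochain_zero hp, linearCombination_cross_singleton hq x b hb hw]
  | succ k ih =>
    match a, b, hb with
    | x :: a, y :: b, hb =>
      have ha' : a.length = k + 1 := by simpa using ha
      have hv' : ∀ l, l.length = k + 2 → Degenerate l → (∀ u ∈ l, u ∈ x :: a) → v l = 0 :=
        fun l hl => hv l (by simp [hl, ha'])
      have h_right : linearCombination F (crossCochain p q k (fun l => v (x :: l)) w)
          (cross m (single (x :: a) 1) (boundary (single (y :: b) 1))) = 0 := by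
        refine map_eq_zero_of_forall_single
          (linearCombination F (crossCochain p q k (fun l => v (x :: l)) w) ∘ₗ
            cross m (single (x :: a) 1)) (fun b' _ => ?_) (boundary_single_mem (y :: b))
        exact linearCombination_cross_cons_eq_zero hp w hv' (fun _ => id) (by omega)
      have h_left : linearCombination F (crossCochain p q k (fun l => v (x :: l)) w)
          (cross m (cone x (boundary (single a 1))) (single (y :: b) 1)) = 0 := by
        refine map_eq_zero_of_forall_single
          (linearCombination F (crossCochain p q k (fun l => v (x :: l)) w) ∘ₗ
            (cross m).flip (single (y :: b) 1) ∘ₗ cone x) (fun a' ha' => ?_)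
          (boundary_single_mem a)
        simpa using linearCombination_cross_cons_eq_zero hp w hv' ha'.2.subset
          (b := y :: b) (by simp [← ha'.1] at *; omega)
      have h_main := ih (v := fun l => v (x :: l)) ha' fun l hl hdeg hmem =>
        hv _ (by simpa using hl) (hdeg.cons x) (List.cons_subset_cons x hmem)
      have h_aug : single a (1 : F) [] = 0 := by
        rw [single_eq_of_ne]
        rintro rfl
        simp at ha'
      have h_cross : (fun l => crossCochain p q (k + 1) v w (m x y :: l)) =
          crossCochain p q k (fun l => v (x :: l)) w := by
        funext l
        rw [crossCochain_succ_cons, hp]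
      rw [cross_cons_cons, linearCombination_cone, h_cross, leibniz_apply,
        boundary_single_cons_nil, h_aug, zero_mul, single_zero, add_zero, map_add, map_smul,
        h_right, smul_zero, add_zero, ← cone_single x, boundary_cone, map_sub,
        LinearMap.sub_apply, map_sub, h_left, h_main, sub_zero]

end Evaluation

end CrossProduct

/-! ### Relative cocycles -/

section RelativeClasses

open Finsupp

variable {F : Type*} [CommRing F] {V W U : Type*}

/-- A set of lists is hereditary if it is closed under replacing the set of entries of a list by
a subset; such sets play the role of simplicial complexes. -/
def IsHereditary (S : Set (List V)) : Prop := ∀ l ∈ S, ∀ l', (∀ x ∈ l', x ∈ l) → l' ∈ S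

/-- The simplices of `S` with `n` vertices that lie in `T` or are degenerate. -/
def relSimplices (S T : Set (List V)) (n : ℕ) : Set (List V) :=
  {l | l ∈ S ∧ l.length = n ∧ (l ∈ T ∨ Degenerate l)}

/-- Normalized relative cocycles of degree `k` of the pair `(S, T)`. Only the values on simplices
of `S` matter. -/
structure IsRelCocycle {G : Type*} [AddCommGroup G] (S T : Set (List V)) (k : ℕ)
    (v : List V → G) : Prop where
  eq_zero : ∀ l ∈ relSimplices S T (k + 1), v l = 0
  coboundary_eq_zero : ∀ l ∈ S, l.length = k + 2 → coboundary v l = 0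

/-- `b` is a normalized relative cochain of degree `k - 1` of the pair `(S, T)` with coboundary
`v`. -/
structure IsRelPrimitive {G : Type*} [AddCommGroup G] (S T : Set (List V)) (k : ℕ)
    (v b : List V → G) : Prop where
  eq_zero : ∀ l ∈ relSimplices S T k, b l = 0
  coboundary_eq : ∀ l ∈ S, l.length = k + 1 → coboundary b l = v l

/-- Normalized relative cycles of degree `k` of the pair `(S, T)`. -/
structure IsRelCycle (S T : Set (List V)) (k : ℕ) (z : OrderedChain F V) : Prop where
  mem : z ∈ chainsOn F {l | l ∈ S ∧ l.length = k + 1}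
  boundary_mem : boundary z ∈ chainsOn F (relSimplices S T k)

lemma IsHereditary.map_mem {S : Set (List W)} (hS : IsHereditary S) (f : U → W) {l l' : List U}
    (hl : l.map f ∈ S) (h : ∀ x ∈ l', x ∈ l) : l'.map f ∈ S := by
  refine hS _ hl _ fun x hx => ?_
  obtain ⟨z, hz, rfl⟩ := List.mem_map.1 hx
  exact List.mem_map_of_mem (h z hz)

lemma IsRelCocycle.eq_zero_of_degenerate {S T : Set (List V)} {k : ℕ} {v : List V → F}
    (hv : IsRelCocycle S T k v) (hS : IsHereditary S) {a : List V} (ha : a ∈ S) {l : List V}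
    (hl : l.length = k + 1) (hdeg : Degenerate l) (hmem : ∀ x ∈ l, x ∈ a) : v l = 0 :=
  hv.eq_zero l ⟨hS a ha l hmem, hl, Or.inr hdeg⟩

theorem IsRelCocycle.crossCochain {S T : Set (List V)} {S' T' : Set (List W)}
    {S'' T'' : Set (List U)} {p : U → V} {q : U → W} (hS : IsHereditary S) (hS' : IsHereditary S')
    (hT : IsHereditary T) (hT' : IsHereditary T') (h_fst : ∀ l ∈ S'', l.map p ∈ S)
    (h_snd : ∀ l ∈ S'', l.map q ∈ S') (h_rel : ∀ l ∈ T'', l.map p ∈ T ∨ l.map q ∈ T') {k j : ℕ}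
    {v : List V → F} {w : List W → F} (hv : IsRelCocycle S T k v) (hw : IsRelCocycle S' T' j w) :
    IsRelCocycle S'' T'' (k + j) (crossCochain p q k v w) where
  eq_zero := by
    rintro l ⟨hl, h_len, hl_rel⟩
    have h_take : (l.take (k + 1)).map p ∈ relSimplices S T (k + 1) ∨
        (l.drop k).map q ∈ relSimplices S' T' (j + 1) := by
      have h_S := hS.map_mem p (h_fst l hl) (l' := l.take (k + 1)) fun _ => List.mem_of_mem_take
      have h_S' := hS'.map_mem q (h_snd l hl) (l' := l.drop k) fun _ => List.mem_of_mem_drop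
      have h_len_take : ((l.take (k + 1)).map p).length = k + 1 := by simp; omega
      have h_len_drop : ((l.drop k).map q).length = j + 1 := by simp; omega
      rcases hl_rel with h | h
      · exact (h_rel l h).imp
          (fun h => ⟨h_S, h_len_take, .inl (hT.map_mem p h fun _ => List.mem_of_mem_take)⟩)
          (fun h => ⟨h_S', h_len_drop, .inl (hT'.map_mem q h fun _ => List.mem_of_mem_drop)⟩)
      · exact (h.take_or_drop k).imp (fun h => ⟨h_S, h_len_take, .inr (h.map p)⟩)
          (fun h => ⟨h_S', h_len_drop, .inr (h.map q)⟩)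
    rcases h_take with h | h
    · rw [MeanDimPaper.crossCochain, hv.eq_zero _ h, zero_mul]
    · rw [MeanDimPaper.crossCochain, hw.eq_zero _ h, mul_zero]
  coboundary_eq_zero l hl h_len := by
    rw [coboundary_crossCochain _ _ _ _ _ _ (by omega),
      hv.coboundary_eq_zero _ (hS.map_mem p (h_fst l hl) fun _ => List.mem_of_mem_take)
        (by simp; omega),
      hw.coboundary_eq_zero _ (hS'.map_mem q (h_snd l hl) fun _ => List.mem_of_mem_drop)
        (by simp; omega)]
    simp

/-- Every list of products of a vertex of a simplex of `S` with a vertex of a simplex of `S'` is a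
simplex of `S''`. -/
def ProductMapsTo (m : V → W → U) (S : Set (List V)) (S' : Set (List W)) (S'' : Set (List U)) :
    Prop :=
  ∀ a ∈ S, ∀ b ∈ S', ∀ l : List U, (∀ z ∈ l, ∃ x ∈ a, ∃ y ∈ b, z = m x y) → l ∈ S''

theorem IsRelCycle.cross {S T : Set (List V)} {S' T' : Set (List W)} {S'' T'' : Set (List U)}
    {m : V → W → U} (h_prod : ProductMapsTo m S S' S'') (h_left : ProductMapsTo m T S' T'')
    (h_right : ProductMapsTo m S T' T'') (h_nil : [] ∈ S'') (h_nil' : [] ∈ T'') {k j : ℕ}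
    {z : OrderedChain F V} {w : OrderedChain F W} (hz : IsRelCycle S T k z)
    (hw : IsRelCycle S' T' j w) : IsRelCycle S'' T'' (k + j) (cross m z w) where
  mem := by
    refine map_mem_of_forall_single₂ (MeanDimPaper.cross m) ?_ hz.mem hw.mem
    rintro a ⟨ha, ha_len⟩ b ⟨hb, hb_len⟩ l hl
    obtain ⟨h_len, h_mem, -⟩ := cross_single_mem_crossSimplices m a b hl
    exact ⟨h_prod a ha b hb l h_mem, by omega⟩
  boundary_mem := by
    rw [boundary_cross m (supported_mono (fun _ h => h.2) hz.mem), leibniz_apply]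
    refine add_mem (add_mem ?_ (Submodule.smul_mem _ _ ?_)) ?_
    · refine map_mem_of_forall_single₂ (MeanDimPaper.cross m) ?_ hz.boundary_mem hw.mem
      rintro a ⟨ha, ha_len, ha_rel⟩ b ⟨hb, hb_len⟩ l hl
      obtain ⟨h_len, h_mem, -⟩ := cross_single_mem_crossSimplices m a b hl
      exact ⟨h_prod a ha b hb l h_mem, by omega, ha_rel.imp (fun h => h_left a h b hb l h_mem)
        fun h => cross_single_mem_degenerate m (.inl h) hl⟩
    · refine map_mem_of_forall_single₂ (MeanDimPaper.cross m) ?_ hz.mem hw.boundary_mem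
      rintro a ⟨ha, ha_len⟩ b ⟨hb, hb_len, hb_rel⟩ l hl
      obtain ⟨h_len, h_mem, -⟩ := cross_single_mem_crossSimplices m a b hl
      exact ⟨h_prod a ha b hb l h_mem, by omega, hb_rel.imp (fun h => h_right a ha b h l h_mem)
        fun h => cross_single_mem_degenerate m (.inr h) hl⟩
    · rcases Nat.eq_zero_or_pos k with rfl | hk
      · rcases Nat.eq_zero_or_pos j with rfl | hj
        · exact single_mem_supported _ _ ⟨h_nil, rfl, .inl h_nil'⟩
        · rw [apply_eq_zero_of_mem_chainsOn hw.boundary_mem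
            fun h => hj.ne (by simpa using h.2.1), mul_zero, single_zero]
          exact zero_mem _
      · rw [apply_eq_zero_of_mem_chainsOn hz.boundary_mem
          fun h => hk.ne (by simpa using h.2.1), zero_mul, single_zero]
        exact zero_mem _

theorem linearCombination_cross {S T S₀ T₀ : Set (List V)} {S' T' S₀' T₀' : Set (List W)}
    {p : U → V} {q : U → W} {m : V → W → U} (hp : ∀ x y, p (m x y) = x) (hq : ∀ x y, q (m x y) = y)
    (hS : IsHereditary S) (hS' : IsHereditary S') (hS₀ : S₀ ⊆ S) (hS₀' : S₀' ⊆ S') {k j : ℕ}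
    {v : List V → F} {w : List W → F} (hv : IsRelCocycle S T k v) (hw : IsRelCocycle S' T' j w)
    {z : OrderedChain F V} {z' : OrderedChain F W} (hz : IsRelCycle S₀ T₀ k z)
    (hz' : IsRelCycle S₀' T₀' j z') :
    linearCombination F (crossCochain p q k v w) (cross m z z') =
      linearCombination F v z * linearCombination F w z' := by
  have h_single : ∀ a ∈ {l | l ∈ S₀ ∧ l.length = k + 1}, ∀ b ∈ {l | l ∈ S₀' ∧ l.length = j + 1},
      linearCombination F (crossCochain p q k v w) (cross m (single a 1) (single b 1)) =
        v a * w b := by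
    rintro a ⟨ha, ha_len⟩ b ⟨hb, hb_len⟩
    refine linearCombination_cross_single hp hq ha_len (List.ne_nil_of_length_eq_add_one hb_len)
      (fun l hl => hv.eq_zero_of_degenerate hS (hS₀ ha) (hl.trans ha_len))
      (fun l hl => hw.eq_zero_of_degenerate hS' (hS₀' hb) (hl.trans hb_len))
  have h_bilin := map_mem_of_forall_single₂
    ((cross m).compr₂ (linearCombination F (crossCochain p q k v w)) -
      (LinearMap.mul F F).compl₁₂ (linearCombination F v) (linearCombination F w)) (P := ⊥)
    (fun a ha b hb => by simp [h_single a ha b hb]) hz.mem hz'.mem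
  simpa [sub_eq_zero] using h_bilin

end RelativeClasses

/-! ### Sorting simplices -/

section Sorting

open Finsupp

variable {F : Type*} [CommRing F] {V W ι : Type*} [LinearOrder ι]

/-- Signed insertion of a letter into a strictly increasing list; it vanishes if the letter already
occurs. -/
noncomputable def sortedInsert (F : Type*) [CommRing F] (x : ι) : List ι → OrderedChain F ι
  | [] => single [x] 1
  | y :: l =>
    if x < y then single (x :: y :: l) 1 else if x = y then 0 else -cone y (sortedInsert F x l)

/-- The signed increasing rearrangement of a list, which is zero if a letter is repeated. -/
noncomputable def sortChain (F : Type*) [CommRing F] : List ι → OrderedChain F ι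
  | [] => single [] 1
  | x :: l => linearCombination F (sortedInsert F x) (sortChain F l)

lemma sortedInsert_of_forall_lt {x : ι} {l : List ι} (h : ∀ y ∈ l, x < y) :
    sortedInsert F x l = single (x :: l) 1 := by
  cases l with
  | nil => rfl
  | cons y l => rw [sortedInsert, if_pos (h y (by simp))]

lemma linearCombination_sortedInsert_cone_self (x : ι) (c : OrderedChain F ι) :
    linearCombination F (sortedInsert F x) (cone x c) = 0 := by
  rw [linearCombination_cone]
  simp [sortedInsert, linearCombination_apply]

lemma linearCombination_sortedInsert_cone_of_lt {x y : ι} (h : y < x) (c : OrderedChain F ι) :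
    linearCombination F (sortedInsert F x) (cone y c) =
      -cone y (linearCombination F (sortedInsert F x) c) := by
  have : linearCombination F (sortedInsert F x) ∘ₗ cone y =
      -(cone y ∘ₗ linearCombination F (sortedInsert F x)) :=
    linearMap_ext_single fun l => by simp [sortedInsert, h.not_gt, h.ne']
  exact LinearMap.congr_fun this c

lemma boundary_single_cons (x : V) (l : List V) :
    boundary (single (x :: l) (1 : F)) = single l 1 - cone x (boundary (single l 1)) := by
  rw [← cone_single, boundary_cone]

lemma boundary_sortedInsert (x : ι) {l : List ι} (hl : l.Pairwise (· < ·)) :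
    boundary (sortedInsert F x l) =
      single l 1 - linearCombination F (sortedInsert F x) (boundary (single l 1)) := by
  induction l with
  | nil => simp [sortedInsert, coboundary_cons]
  | cons y l ih =>
    rw [List.pairwise_cons] at hl
    rcases lt_trichotomy x y with h | rfl | h
    · have h_lt : ∀ z ∈ y :: l, x < z := by
        simpa [h] using fun z hz => h.trans (hl.1 z hz)
      rw [sortedInsert_of_forall_lt h_lt, boundary_single_cons]
      congr 1
      refine map_eq_of_forall_single (F := F) (g := linearCombination F (sortedInsert F x))
        (fun l' hl' => ?_) (boundary_single_mem (y :: l))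
      simp [sortedInsert_of_forall_lt fun z hz => h_lt z (hl'.2.subset hz)]
    · rw [boundary_single_cons, map_sub, linearCombination_sortedInsert_cone_self]
      simp [sortedInsert, sortedInsert_of_forall_lt hl.1]
    · rw [boundary_single_cons, map_sub, linearCombination_sortedInsert_cone_of_lt h, sortedInsert,
        if_neg h.not_gt, if_neg h.ne', map_neg, boundary_cone, ih hl.2, map_sub, cone_single,
        linearCombination_single, one_smul]
      abel

lemma sortedInsert_mem (x : ι) {l : List ι} (hl : l.Pairwise (· < ·)) :
    sortedInsert F x l ∈ chainsOn F
      {l' | l'.Pairwise (· < ·) ∧ l'.length = l.length + 1 ∧ ∀ y ∈ l', y = x ∨ y ∈ l} := by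
  induction l with
  | nil => exact single_mem_chainsOn (by simp)
  | cons y l ih =>
    have hl' := List.pairwise_cons.1 hl
    rw [sortedInsert]
    split_ifs with h h'
    · refine single_mem_chainsOn ⟨List.pairwise_cons.2 ⟨?_, hl⟩, by simp, by simp⟩
      simpa [h] using fun z hz => h.trans (hl'.1 z hz)
    · exact zero_mem _
    · have h_lt : y < x := lt_of_le_of_ne (not_lt.1 h) (Ne.symm h')
      refine neg_mem (cone_mem_chainsOn (fun l' h => ?_) (ih hl'.2))
      obtain ⟨h_sorted, h_len, h_mem⟩ := h
      refine ⟨List.pairwise_cons.2 ⟨fun z hz => ?_, h_sorted⟩, by simp [h_len], ?_⟩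
      · exact (h_mem z hz).elim (fun h => h ▸ h_lt) (hl'.1 z)
      · grind

lemma sortChain_mem (l : List ι) :
    sortChain F l ∈ chainsOn F
      {l' | l'.Pairwise (· < ·) ∧ l'.length = l.length ∧ ∀ y ∈ l', y ∈ l} := by
  induction l with
  | nil => exact single_mem_chainsOn (by simp)
  | cons x l ih =>
    refine map_mem_of_forall_single _ ?_ ih
    rintro l₁ ⟨h_sorted, h_len, h_mem⟩
    rw [linearCombination_single, one_smul]
    refine supported_mono ?_ (sortedInsert_mem x h_sorted)
    rintro l₂ ⟨h_sorted', h_len', h_mem'⟩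
    exact ⟨h_sorted', by simp [h_len', h_len], by grind⟩

lemma sortChain_eq_zero {l : List ι} (h : ¬ l.Nodup) : sortChain F l = 0 := by
  have h_empty : sortChain F l ∈ chainsOn F ∅ := by
    refine supported_mono ?_ (sortChain_mem l)
    rintro l' ⟨h_sorted, h_len, h_mem⟩
    have h_nodup : l'.Nodup := h_sorted.imp fun h => h.ne
    exact h (((h_nodup.subperm h_mem).perm_of_length_le h_len.ge).nodup_iff.1 h_nodup)
  simpa using h_empty

lemma boundary_sortChain (l : List ι) :
    boundary (sortChain F l) = linearCombination F (sortChain F) (boundary (single l 1)) := by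
  induction l with
  | nil => simp [sortChain]
  | cons x l ih =>
    have h_insert : boundary (linearCombination F (sortedInsert F x) (sortChain F l)) =
        sortChain F l - linearCombination F (sortedInsert F x) (boundary (sortChain F l)) :=
      map_eq_of_forall_single (f := boundary ∘ₗ linearCombination F (sortedInsert F x))
        (g := LinearMap.id - linearCombination F (sortedInsert F x) ∘ₗ boundary)
        (fun m hm => by
          simpa only [LinearMap.comp_apply, LinearMap.sub_apply, LinearMap.id_apply,
            linearCombination_single, one_smul] using boundary_sortedInsert x hm.1)
        (sortChain_mem l)
    have h_cone (c : OrderedChain F ι) : linearCombination F (sortChain F) (cone x c) =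
        linearCombination F (sortedInsert F x) (linearCombination F (sortChain F) c) :=
      LinearMap.congr_fun (f := linearCombination F (sortChain F) ∘ₗ cone x)
        (g := linearCombination F (sortedInsert F x) ∘ₗ linearCombination F (sortChain F))
        (linearMap_ext_single fun l => by simp [sortChain]) c
    rw [sortChain, h_insert, ih, boundary_single_cons, map_sub, h_cone, linearCombination_single,
      one_smul]

/-- The chain map induced by a map of vertices. -/
noncomputable def mapChain (f : V → W) : OrderedChain F V →ₗ[F] OrderedChain F W :=
  linearCombination F fun l => single (l.map f) 1

@[simp] lemma mapChain_single (f : V → W) (l : List V) :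
    mapChain f (single l (1 : F)) = single (l.map f) 1 := by
  simp [mapChain]

lemma boundary_mapChain (f : V → W) (c : OrderedChain F V) :
    boundary (mapChain f c) = mapChain f (boundary c) := by
  have : boundary ∘ₗ mapChain f = mapChain f ∘ₗ boundary (F := F) :=
    linearMap_ext_single fun l => by
      rw [LinearMap.comp_apply, LinearMap.comp_apply, mapChain_single, boundary_single,
        coboundary_map, map_boundary_single]
      simp
  exact LinearMap.congr_fun this c

/-- The chain map that sorts a simplex along the vertex map `b` and sends the result back by `P`.
It kills the simplices on which `b` is not injective. -/
noncomputable def sortAlong (F : Type*) [CommRing F] (b : V → ι) (P : ι → V) :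
    OrderedChain F V →ₗ[F] OrderedChain F V :=
  linearCombination F fun l => mapChain P (sortChain F (l.map b))

variable (b : V → ι) (P : ι → V)

lemma sortAlong_single (l : List V) :
    sortAlong F b P (single l 1) = mapChain P (sortChain F (l.map b)) := by
  simp [sortAlong]

lemma sortAlong_single_eq_zero {l : List V} (h : ¬ (l.map b).Nodup) :
    sortAlong F b P (single l 1) = 0 := by
  rw [sortAlong_single, sortChain_eq_zero h, map_zero]

lemma boundary_sortAlong (c : OrderedChain F V) :
    boundary (sortAlong F b P c) = sortAlong F b P (boundary c) := by
  have h_comp : sortAlong F b P =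
      mapChain P ∘ₗ linearCombination F (sortChain F) ∘ₗ mapChain b :=
    linearMap_ext_single fun l => by simp [sortAlong]
  have h_single (l : List V) : boundary (sortAlong F b P (single l 1)) =
      sortAlong F b P (boundary (single l 1)) := by
    rw [sortAlong_single, boundary_mapChain, boundary_sortChain, h_comp]
    simp only [LinearMap.comp_apply]
    rw [← boundary_mapChain b, mapChain_single]
  exact LinearMap.congr_fun (f := boundary ∘ₗ sortAlong F b P) (g := sortAlong F b P ∘ₗ boundary)
    (linearMap_ext_single h_single) c

/-- The values on simplices of a chain homotopy from the identity to `sortAlong`, built by coning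
off from the first vertex. -/
noncomputable def sortHomotopySimplex (F : Type*) [CommRing F] (b : V → ι) (P : ι → V) :
    List V → OrderedChain F V
  | [] => 0
  | x :: l => cone x (sortAlong F b P (single (x :: l) 1) - single (x :: l) 1 -
      ∑ i : Fin (x :: l).length, (-1 : ℤ) ^ (i : ℕ) •
        sortHomotopySimplex F b P ((x :: l).eraseIdx i))
termination_by l => l.length
decreasing_by exact (List.length_eraseIdx_add_one i.2).le

/-- A chain homotopy from the identity to `sortAlong`. -/
noncomputable def sortHomotopy (F : Type*) [CommRing F] (b : V → ι) (P : ι → V) :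
    OrderedChain F V →ₗ[F] OrderedChain F V :=
  linearCombination F (sortHomotopySimplex F b P)

lemma sortHomotopy_nil : sortHomotopy F b P (single [] 1) = 0 := by
  simp [sortHomotopy, sortHomotopySimplex]

lemma sortHomotopy_cons (x : V) (l : List V) :
    sortHomotopy F b P (single (x :: l) 1) = cone x (sortAlong F b P (single (x :: l) 1) -
      single (x :: l) 1 - sortHomotopy F b P (boundary (single (x :: l) 1))) := by
  rw [sortHomotopy, linearCombination_boundary_single, linearCombination_single, one_smul,
    sortHomotopySimplex, coboundary]

lemma boundary_sortHomotopy_single (l : List V) :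
    boundary (sortHomotopy F b P (single l 1)) + sortHomotopy F b P (boundary (single l 1)) =
      sortAlong F b P (single l 1) - single l 1 := by
  induction h_len : l.length generalizing l with
  | zero =>
    rw [List.length_eq_zero_iff.1 h_len]
    simp [sortHomotopy_nil, sortAlong_single, sortChain]
  | succ n ih =>
    obtain ⟨x, l, rfl⟩ := List.exists_cons_of_length_eq_add_one h_len
    set s : OrderedChain F V := single (x :: l) 1
    have h_bdry : boundary (sortHomotopy F b P (boundary s)) =
        sortAlong F b P (boundary s) - boundary s := by
      have := map_eq_of_forall_single
        (f := boundary ∘ₗ sortHomotopy F b P + sortHomotopy F b P ∘ₗ boundary)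
        (g := sortAlong F b P - LinearMap.id)
        (fun l' hl' => ih l' (by simpa [h_len] using hl'.1)) (boundary_single_mem (x :: l))
      simpa [s, boundary_boundary, - boundary_single] using this
    have h_cycle : boundary (sortAlong F b P s - s - sortHomotopy F b P (boundary s)) = 0 := by
      rw [map_sub, map_sub, h_bdry, boundary_sortAlong, sub_self]
    rw [sortHomotopy_cons, boundary_cone, h_cycle, map_zero, sub_zero, sub_add_cancel]

lemma boundary_sortHomotopy (c : OrderedChain F V) :
    boundary (sortHomotopy F b P c) + sortHomotopy F b P (boundary c) = sortAlong F b P c - c :=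
  LinearMap.congr_fun (f := boundary ∘ₗ sortHomotopy F b P + sortHomotopy F b P ∘ₗ boundary)
    (g := sortAlong F b P - LinearMap.id)
    (linearMap_ext_single (boundary_sortHomotopy_single b P)) c

lemma not_nodup_of_degenerate {l : List V} (h : Degenerate l) : ¬ l.Nodup :=
  fun h_nodup => h (List.Pairwise.isChain h_nodup)

lemma sortAlong_single_mem (l : List V) :
    sortAlong F b P (single l 1) ∈ chainsOn F
      {l' | l'.length = l.length ∧ ∀ x ∈ l', ∃ y ∈ l, x = P (b y)} := by
  rw [sortAlong_single]
  refine map_mem_of_forall_single _ ?_ (sortChain_mem _)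
  rintro l' ⟨-, h_len, h_mem⟩
  rw [mapChain_single]
  exact single_mem_chainsOn ⟨by simpa using h_len, by grind⟩

lemma sortHomotopy_single_mem (l : List V) :
    sortHomotopy F b P (single l 1) ∈ chainsOn F {l' | l'.length = l.length + 1 ∧
      (∀ x ∈ l', x ∈ l ∨ ∃ y ∈ l, x = P (b y)) ∧ (Degenerate l → Degenerate l')} := by
  induction h_len : l.length generalizing l with
  | zero =>
    rw [List.length_eq_zero_iff.1 h_len, sortHomotopy_nil]
    exact zero_mem _
  | succ n ih =>
    obtain ⟨x, l, rfl⟩ := List.exists_cons_of_length_eq_add_one h_len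
    rw [sortHomotopy_cons]
    suffices h_base : sortAlong F b P (single (x :: l) 1) - single (x :: l) 1 -
        sortHomotopy F b P (boundary (single (x :: l) 1)) ∈ chainsOn F {l' | l'.length = n + 1 ∧
          (∀ z ∈ l', z ∈ x :: l ∨ ∃ y ∈ x :: l, z = P (b y)) ∧
          (Degenerate (x :: l) → Degenerate l')} by
      refine cone_mem_chainsOn ?_ h_base
      rintro l' ⟨h_len', h_mem, h_deg⟩
      exact ⟨by simp [h_len'], by grind, fun h => (h_deg h).cons x⟩
    refine sub_mem (sub_mem ?_ (single_mem_chainsOn ⟨h_len, fun z => .inl, id⟩)) ?_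
    · by_cases h_deg : Degenerate (x :: l)
      · rw [sortAlong_single_eq_zero b P (not_nodup_of_degenerate (h_deg.map b))]
        exact zero_mem _
      · refine supported_mono ?_ (sortAlong_single_mem b P (x :: l))
        exact fun l' h => ⟨h.1.trans h_len, fun z hz => .inr (h.2 z hz), fun h => absurd h h_deg⟩
    · have h_bdry : boundary (single (x :: l) (1 : F)) ∈ chainsOn F
          {l' | (l'.length + 1 = (x :: l).length ∧ l'.Sublist (x :: l)) ∧
            (Degenerate (x :: l) → Degenerate l')} :=
        fun l' hl' => ⟨boundary_single_mem _ hl',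
          fun h => boundary_single_mem_degenerate h hl'⟩
      refine map_mem_of_forall_single _ ?_ h_bdry
      rintro l₁ ⟨⟨h_len', h_sub⟩, h_deg⟩
      refine supported_mono ?_ (ih l₁ (by omega))
      rintro l₂ ⟨h_len₂, h_mem₂, h_deg₂⟩
      have := h_sub.subset
      exact ⟨h_len₂, by grind, fun h => h_deg₂ (h_deg h)⟩

-- A cycle on which the vertex map `b` is never injective is homologous to `sortAlong z = 0`.
theorem linearCombination_eq_zero_of_not_nodup {S T S' T' : Set (List V)} {k : ℕ} {u : List V → F}
    {z : OrderedChain F V} (hu : IsRelCocycle S T k u) (hz : IsRelCycle S' T' k z)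
    (hS : ∀ l ∈ S', ∀ l', (∀ x ∈ l', x ∈ l ∨ ∃ y ∈ l, x = P (b y)) → l' ∈ S)
    (hT : ∀ l ∈ T', ∀ l', (∀ x ∈ l', x ∈ l ∨ ∃ y ∈ l, x = P (b y)) → l' ∈ T)
    (h_nodup : ∀ l ∈ S', l.length = k + 1 → ¬ (l.map b).Nodup) : linearCombination F u z = 0 := by
  have h_sort : sortAlong F b P z = 0 :=
    map_eq_zero_of_forall_single _
      (fun l hl => sortAlong_single_eq_zero b P (h_nodup l hl.1 hl.2)) hz.mem
  have h_bdry : linearCombination F u (boundary (sortHomotopy F b P z)) = 0 := by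
    have h_mem : sortHomotopy F b P z ∈ chainsOn F {l | l ∈ S ∧ l.length = k + 2} := by
      refine map_mem_of_forall_single _ (fun l hl => ?_) hz.mem
      refine supported_mono ?_ (sortHomotopy_single_mem b P l)
      rintro l' ⟨h_len, h_mem, -⟩
      exact ⟨hS l hl.1 l' h_mem, by rw [h_len, hl.2]⟩
    refine map_eq_zero_of_forall_single (linearCombination F u ∘ₗ boundary) (fun l hl => ?_) h_mem
    rw [LinearMap.comp_apply, linearCombination_boundary_single, hu.coboundary_eq_zero l hl.1 hl.2]
  have h_rel : linearCombination F u (sortHomotopy F b P (boundary z)) = 0 := by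
    refine map_eq_zero_of_forall_single (linearCombination F u ∘ₗ sortHomotopy F b P) ?_
      hz.boundary_mem
    rintro l ⟨hl, h_len, hl_rel⟩
    refine map_eq_zero_of_forall_single (linearCombination F u) ?_ (sortHomotopy_single_mem b P l)
    rintro l' ⟨h_len', h_mem', h_deg'⟩
    rw [linearCombination_single, one_smul]
    exact hu.eq_zero l' ⟨hS l hl l' h_mem', by rw [h_len', h_len],
      hl_rel.imp (fun h => hT l h l' h_mem') h_deg'⟩
  have h_homotopy := congrArg (linearCombination F u) (boundary_sortHomotopy b P z)
  rw [map_add, h_bdry, h_rel, h_sort, zero_sub, map_neg, add_zero] at h_homotopy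
  exact neg_eq_zero.1 h_homotopy.symm

end Sorting

section PersistentCocycles

open Finsupp

variable {F : Type*} [Field F] {V W U : Type*}

/-- A relative cocycle at scale `ε` of a filtered pair `(S, T)` that is detected by relative cycles
at every smaller scale. -/
structure IsPersistentCocycle (S T : ℝ → Set (List V)) (ε : ℝ) (k : ℕ) (v : List V → F) :
    Prop where
  isRelCocycle : IsRelCocycle (S ε) (T ε) k v
  exists_cycle : ∀ δ, 0 < δ → δ ≤ ε →
    ∃ z : OrderedChain F V, IsRelCycle (S δ) (T δ) k z ∧ linearCombination F v z ≠ 0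

lemma IsPersistentCocycle.crossCochain {S T : ℝ → Set (List V)} {S' T' : ℝ → Set (List W)}
    {S'' T'' : ℝ → Set (List U)} {p : U → V} {q : U → W} {m : V → W → U}
    (hp : ∀ x y, p (m x y) = x) (hq : ∀ x y, q (m x y) = y)
    (hS : ∀ ε, IsHereditary (S ε)) (hS' : ∀ ε, IsHereditary (S' ε))
    (hT : ∀ ε, IsHereditary (T ε)) (hT' : ∀ ε, IsHereditary (T' ε))
    (h_mono : Monotone S) (h_mono' : Monotone S')
    (h_fst : ∀ ε, ∀ l ∈ S'' ε, l.map p ∈ S ε) (h_snd : ∀ ε, ∀ l ∈ S'' ε, l.map q ∈ S' ε)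
    (h_rel : ∀ ε, ∀ l ∈ T'' ε, l.map p ∈ T ε ∨ l.map q ∈ T' ε)
    (h_prod : ∀ ε > 0, ProductMapsTo m (S ε) (S' ε) (S'' ε))
    (h_left : ∀ ε, ProductMapsTo m (T ε) (S' ε) (T'' ε))
    (h_right : ∀ ε, ProductMapsTo m (S ε) (T' ε) (T'' ε))
    (h_nil : ∀ ε, [] ∈ S'' ε) (h_nil' : ∀ ε, [] ∈ T'' ε) {ε : ℝ} {k j : ℕ}
    {v : List V → F} {w : List W → F} (hv : IsPersistentCocycle S T ε k v)
    (hw : IsPersistentCocycle S' T' ε j w) :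
    IsPersistentCocycle S'' T'' ε (k + j) (crossCochain p q k v w) where
  isRelCocycle := hv.isRelCocycle.crossCochain (hS ε) (hS' ε) (hT ε) (hT' ε) (h_fst ε) (h_snd ε)
    (h_rel ε) hw.isRelCocycle
  exists_cycle δ hδ hδε := by
    obtain ⟨z, hz, hz_ne⟩ := hv.exists_cycle δ hδ hδε
    obtain ⟨z', hz', hz_ne'⟩ := hw.exists_cycle δ hδ hδε
    refine ⟨cross m z z',
      hz.cross (h_prod δ hδ) (h_left δ) (h_right δ) (h_nil δ) (h_nil' δ) hz', ?_⟩
    rw [linearCombination_cross hp hq (hS ε) (hS' ε) (h_mono hδε) (h_mono' hδε) hv.isRelCocycle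
      hw.isRelCocycle hz hz']
    exact mul_ne_zero hz_ne hz_ne'

lemma exists_comp_eq_of_ker_le_ker {C M : Type*} [AddCommGroup C] [AddCommGroup M] [Module F C]
    [Module F M] (φ : C →ₗ[F] M) (w : C →ₗ[F] F) (h : φ.ker ≤ w.ker) :
    ∃ g : M →ₗ[F] F, g ∘ₗ φ = w :=
  (LinearMap.range_dualMap_eq_dualAnnihilator_ker φ).ge
    ((Submodule.mem_dualAnnihilator w).2 fun _ hc => h hc)

lemma exists_isRelPrimitive_of_forall_isRelCycle {S T : Set (List V)} {k : ℕ} {v : List V → F}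
    (h : ∀ z : OrderedChain F V, IsRelCycle S T k z → linearCombination F v z = 0) :
    ∃ b, IsRelPrimitive S T k v b := by
  let C := chainsOn F {l | l ∈ S ∧ l.length = k + 1}
  let B := chainsOn F (relSimplices S T k)
  let φ : C →ₗ[F] OrderedChain F V ⧸ B := B.mkQ ∘ₗ boundary ∘ₗ C.subtype
  let w : C →ₗ[F] F := linearCombination F v ∘ₗ C.subtype
  have h_ker : φ.ker ≤ w.ker := by
    rintro ⟨z, hz⟩ hφz
    exact h z ⟨hz, by simpa [φ, B] using hφz⟩
  obtain ⟨g, hg⟩ := exists_comp_eq_of_ker_le_ker (C := C) (M := OrderedChain F V ⧸ B) φ w h_ker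
  have h_lc : linearCombination F (fun l => g (B.mkQ (single l 1))) = g ∘ₗ B.mkQ :=
    linearMap_ext_single fun l => by simp
  refine ⟨fun l => g (B.mkQ (single l 1)), fun l hl => ?_, fun l hl h_len => ?_⟩
  · have : B.mkQ (single l 1) = 0 := by simpa using single_mem_chainsOn hl
    simp only [this, map_zero]
  · have h_mem : (single l 1 : OrderedChain F V) ∈ C := single_mem_chainsOn ⟨hl, h_len⟩
    rw [← linearCombination_boundary_single (F := F), h_lc]
    simpa [φ, w, - boundary_single] using LinearMap.congr_fun hg ⟨single l 1, h_mem⟩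

end PersistentCocycles

/-! ### Vietoris–Rips complexes and mean dimension -/

section VietorisRips

variable {Y Z : Type*} [PseudoMetricSpace Y] [PseudoMetricSpace Z]

/-- The simplices of the Vietoris–Rips complex at scale `ε`. -/
def smallLists (ε : ℝ) : Set (List Y) := {l | ∀ x ∈ l, ∀ y ∈ l, dist x y < ε}

/-- The lists of points of the `ε`-neighbourhood of `A`. -/
def nearLists (A : Set Y) (ε : ℝ) : Set (List Y) := {l | ∀ x ∈ l, ∃ a ∈ A, dist x a < ε}

/-- The subcomplex of a power of the pair `(Y, A)`: some coordinate of the list is near `A`. -/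
def powNearLists (N : ℕ) (A : Set Y) (ε : ℝ) : Set (List (Fin N → Y)) :=
  {l | l = [] ∨ ∃ i, l.map (fun x => x i) ∈ nearLists A ε}

lemma nil_mem_smallLists (ε : ℝ) : [] ∈ smallLists (Y := Y) ε := by simp [smallLists]

lemma monotone_smallLists : Monotone (smallLists (Y := Y)) :=
  fun _ _ h _ hl x hx y hy => (hl x hx y hy).trans_le h

lemma isHereditary_smallLists (ε : ℝ) : IsHereditary (smallLists (Y := Y) ε) :=
  fun _ hl _ h x hx y hy => hl x (h x hx) y (h y hy)

lemma isHereditary_nearLists (A : Set Y) (ε : ℝ) : IsHereditary (nearLists A ε) :=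
  fun _ hl _ h x hx => hl x (h x hx)

lemma isHereditary_powNearLists (N : ℕ) (A : Set Y) (ε : ℝ) :
    IsHereditary (powNearLists N A ε) := by
  rintro l (rfl | ⟨i, hl⟩) l' h
  · exact .inl (List.eq_nil_iff_forall_not_mem.2 fun x hx => List.not_mem_nil (h x hx))
  · exact .inr ⟨i, (isHereditary_nearLists A ε).map_mem _ hl h⟩

lemma map_mem_smallLists {f : Y → Z} (hf : ∀ x y, dist (f x) (f y) ≤ dist x y) {ε : ℝ}
    {l : List Y} (hl : l ∈ smallLists ε) : l.map f ∈ smallLists ε := by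
  intro x hx y hy
  obtain ⟨x, hx', rfl⟩ := List.mem_map.1 hx
  obtain ⟨y, hy', rfl⟩ := List.mem_map.1 hy
  exact (hf x y).trans_lt (hl x hx' y hy')

lemma mem_smallLists_of_forall_exists_dist_lt {δ ρ : ℝ} {l l' : List Y} (hl : l ∈ smallLists δ)
    (h : ∀ x ∈ l', ∃ y ∈ l, dist x y < ρ) : l' ∈ smallLists (δ + 2 * ρ) := by
  intro x hx y hy
  obtain ⟨x', hx', hxx'⟩ := h x hx
  obtain ⟨y', hy', hyy'⟩ := h y hy
  rw [dist_comm] at hyy'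
  linarith [hl x' hx' y' hy', dist_triangle4 x x' y' y]

lemma mem_nearLists_of_forall_exists_dist_lt {A : Set Y} {δ ρ : ℝ} {l l' : List Y}
    (hl : l ∈ nearLists A δ) (h : ∀ x ∈ l', ∃ y ∈ l, dist x y < ρ) :
    l' ∈ nearLists A (δ + ρ) := by
  intro x hx
  obtain ⟨y, hy, hxy⟩ := h x hx
  obtain ⟨a, ha, hya⟩ := hl y hy
  exact ⟨a, ha, by linarith [dist_triangle x y a]⟩

lemma mem_powNearLists_of_forall_exists_dist_lt {N : ℕ} {A : Set Y} {δ ρ : ℝ}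
    {l l' : List (Fin N → Y)} (hl : l ∈ powNearLists N A δ)
    (h : ∀ x ∈ l', ∃ y ∈ l, dist x y < ρ) : l' ∈ powNearLists N A (δ + ρ) := by
  rcases hl with rfl | ⟨i, hl⟩
  · exact .inl (List.eq_nil_iff_forall_not_mem.2 fun x hx => by simpa using h x hx)
  · refine .inr ⟨i, mem_nearLists_of_forall_exists_dist_lt hl fun x hx => ?_⟩
    obtain ⟨x, hx', rfl⟩ := List.mem_map.1 hx
    obtain ⟨y, hy, hxy⟩ := h x hx'
    exact ⟨y i, List.mem_map_of_mem hy, (dist_le_pi_dist x y i).trans_lt hxy⟩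

lemma monotone_nearLists (A : Set Y) : Monotone (nearLists A) :=
  fun _ _ h _ hl x hx => (hl x hx).imp fun _ ha => ⟨ha.1, ha.2.trans_le h⟩

lemma monotone_powNearLists (N : ℕ) (A : Set Y) : Monotone (powNearLists N A) :=
  fun _ _ h _ hl => hl.imp_right fun ⟨i, hi⟩ => ⟨i, monotone_nearLists A h hi⟩

lemma productMapsTo_cons_smallLists {N : ℕ} {ε : ℝ} (hε : 0 < ε) :
    ProductMapsTo (fun x y => Fin.cons x y : Y → (Fin N → Y) → Fin (N + 1) → Y)
      (smallLists ε) (smallLists ε) (smallLists ε) := by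
  intro a ha b hb l hl z hz z' hz'
  obtain ⟨x, hx, y, hy, rfl⟩ := hl z hz
  obtain ⟨x', hx', y', hy', rfl⟩ := hl z' hz'
  refine (dist_pi_lt_iff hε).2 (Fin.cases ?_ fun i => ?_)
  · simpa using ha x hx x' hx'
  · simpa using (dist_le_pi_dist y y' i).trans_lt (hb y hy y' hy')

lemma productMapsTo_cons_nearLists_left {N : ℕ} (A : Set Y) (ε : ℝ) (S : Set (List (Fin N → Y))) :
    ProductMapsTo (fun x y => Fin.cons x y : Y → (Fin N → Y) → Fin (N + 1) → Y)
      (nearLists A ε) S (powNearLists (N + 1) A ε) := by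
  refine fun a ha b _ l hl => .inr ⟨0, fun x hx => ?_⟩
  obtain ⟨z, hz, rfl⟩ := List.mem_map.1 hx
  obtain ⟨x, hx', y, -, rfl⟩ := hl z hz
  exact ha x hx'

lemma productMapsTo_cons_powNearLists_right {N : ℕ} (A : Set Y) (ε : ℝ) (S : Set (List Y)) :
    ProductMapsTo (fun x y => Fin.cons x y : Y → (Fin N → Y) → Fin (N + 1) → Y)
      S (powNearLists N A ε) (powNearLists (N + 1) A ε) := by
  rintro a - b (rfl | ⟨i, hb⟩) l hl
  · exact .inl (List.eq_nil_iff_forall_not_mem.2 fun z hz => by simpa using hl z hz)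
  · refine .inr ⟨i.succ, fun x hx => ?_⟩
    obtain ⟨z, hz, rfl⟩ := List.mem_map.1 hx
    obtain ⟨x, -, y, hy, rfl⟩ := hl z hz
    simpa using hb (y i) (List.mem_map_of_mem hy)

lemma map_mem_of_mem_powNearLists_succ {N : ℕ} {A : Set Y} {ε : ℝ} {l : List (Fin (N + 1) → Y)}
    (hl : l ∈ powNearLists (N + 1) A ε) :
    l.map (fun x => x 0) ∈ nearLists A ε ∨ l.map Fin.tail ∈ powNearLists N A ε := by
  rcases hl with rfl | ⟨i, hi⟩
  · exact .inr (.inl rfl)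
  · refine Fin.cases (fun h => .inl h) (fun i h => .inr (.inr ⟨i, ?_⟩)) i hi
    rwa [List.map_map]

variable {F : Type*} [Field F]

lemma isPersistentCocycle_one {A : Set Y} {ε : ℝ} :
    IsPersistentCocycle smallLists (powNearLists 0 A) ε 0 fun _ => (1 : F) where
  isRelCocycle := by
    refine ⟨?_, fun l _ h_len => ?_⟩
    · rintro l ⟨-, h_len, (rfl | ⟨i, -⟩) | h⟩
      · simp at h_len
      · exact i.elim0
      · obtain ⟨x, rfl⟩ := List.length_eq_one_iff.1 h_len
        exact absurd h (not_degenerate_singleton x)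
    · obtain ⟨x, y, rfl⟩ := List.length_eq_two.1 h_len
      simp [coboundary_cons]
  exists_cycle δ hδ _ := by
    refine ⟨Finsupp.single [Fin.elim0] 1,
      ⟨single_mem_chainsOn ⟨fun x _ y _ => ?_, by simp⟩, ?_⟩, by simp⟩
    · rwa [Subsingleton.elim x y, dist_self]
    · have h_nil : [] ∈ relSimplices (smallLists δ) (powNearLists 0 A δ) 0 :=
        ⟨nil_mem_smallLists δ, rfl, .inl (.inl rfl)⟩
      simpa [coboundary_cons] using single_mem_chainsOn h_nil

lemma IsPersistentCocycle.exists_pow {A : Set Y} {ε : ℝ} {k : ℕ} {v : List Y → F}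
    (hv : IsPersistentCocycle smallLists (nearLists A) ε k v) (N : ℕ) :
    ∃ u : List (Fin N → Y) → F,
      IsPersistentCocycle smallLists (powNearLists N A) ε (N * k) u := by
  induction N with
  | zero => exact ⟨fun _ => 1, by simpa using isPersistentCocycle_one⟩
  | succ N ih =>
    obtain ⟨u, hu⟩ := ih
    have h_tail (x y : Fin (N + 1) → Y) : dist (Fin.tail x) (Fin.tail y) ≤ dist x y :=
      (dist_pi_le_iff dist_nonneg).2 fun i => dist_le_pi_dist x y i.succ
    rw [add_one_mul, add_comm (N * k)]
    exact ⟨_, hv.crossCochain (p := fun x => x 0) (q := Fin.tail) (m := fun x y => Fin.cons x y)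
      (fun _ _ => rfl) (fun _ _ => rfl) isHereditary_smallLists isHereditary_smallLists
      (isHereditary_nearLists A) (isHereditary_powNearLists N A) monotone_smallLists
      monotone_smallLists (fun _ _ => map_mem_smallLists fun x y => dist_le_pi_dist x y 0)
      (fun _ _ => map_mem_smallLists h_tail) (fun _ _ => map_mem_of_mem_powNearLists_succ)
      (fun _ => productMapsTo_cons_smallLists)
      (fun ε => productMapsTo_cons_nearLists_left A ε _)
      (fun ε => productMapsTo_cons_powNearLists_right A ε _) nil_mem_smallLists
      (fun _ => .inl rfl) hu⟩

lemma IsPersistentCocycle.exists_injective_nonempty_iInter [CompactSpace Y]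
    {T : ℝ → Set (List Y)} {ε : ℝ} (hε : 0 < ε) {m : ℕ} {u : List Y → F}
    (hu : IsPersistentCocycle smallLists T ε m u)
    (hT : ∀ δ ≤ ε / 4, ∀ l ∈ T δ, ∀ l', (∀ x ∈ l', ∃ y ∈ l, dist x y < ε / 4) → l' ∈ T ε)
    {ι : Type*} {U : ι → Set Y} (hU : ∀ i, IsOpen (U i)) (h_cover : ⋃ i, U i = Set.univ)
    (P : ι → Y) (hP : ∀ i, ∀ x ∈ U i, dist (P i) x < ε / 4) :
    ∃ f : Fin (m + 1) → ι, Function.Injective f ∧ (⋂ k, U (f k)).Nonempty := by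
  let : LinearOrder ι := IsWellOrder.linearOrder WellOrderingRel
  obtain ⟨r, hr, h_ball⟩ := lebesgue_number_lemma_of_metric isCompact_univ hU h_cover.ge
  choose b hb using fun x => h_ball x (Set.mem_univ x)
  have h_close {l l' : List Y} (h : ∀ x ∈ l', x ∈ l ∨ ∃ y ∈ l, x = P (b y)) :
      ∀ x ∈ l', ∃ y ∈ l, dist x y < ε / 4 := by
    intro x hx
    rcases h x hx with hx | ⟨y, hy, rfl⟩
    · exact ⟨x, hx, by rw [dist_self]; positivity⟩
    · exact ⟨y, hy, hP _ y (hb y (Metric.mem_ball_self hr))⟩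
  set δ := min r (ε / 4)
  have hδ : δ ≤ ε / 4 := min_le_right _ _
  obtain ⟨z, hz, hz_ne⟩ := hu.exists_cycle δ (lt_min hr (by positivity)) (by linarith)
  by_contra! h_con
  refine hz_ne (linearCombination_eq_zero_of_not_nodup b P hu.isRelCocycle hz ?_
    (fun l hl l' h => hT δ hδ l hl l' (h_close h)) fun l hl h_len h_nodup => ?_)
  · exact fun l hl l' h => monotone_smallLists (by linarith)
      (mem_smallLists_of_forall_exists_dist_lt hl (h_close h))
  · have h_inj : Function.Injective fun k : Fin (m + 1) => b (l.get (k.cast h_len.symm)) :=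
      fun i j hij => by
        simpa [Fin.ext_iff] using
          h_nodup.getElem_inj_iff (i := i) (j := j) (hi := by simp; omega) (hj := by simp; omega)
            |>.1 (by simpa using hij)
    refine (Set.notMem_empty (l.get ⟨0, by omega⟩)) (h_con _ h_inj ▸ Set.mem_iInter.2 fun k => ?_)
    exact hb _ ((hl _ (List.get_mem _ _) _ (List.get_mem _ _)).trans_le (min_le_left _ _))

end VietorisRips

section MeanDimension

lemma IsCompatMetric.exists_dist_lt [CompactSpace X] {Y : Type*} [PseudoMetricSpace Y]
    {d : X → X → ℝ} (hd : IsCompatMetric d) {f : X → Y} (hf : Continuous f) {ε : ℝ}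
    (hε : 0 < ε) : ∃ η > 0, ∀ x y, d x y < η → dist (f x) (f y) < ε := by
  let : PseudoMetricSpace X :=
    .ofDistTopology d hd.refl hd.symm hd.triangle hd.isOpen_iff
  obtain ⟨η, hη, h⟩ :=
    Metric.uniformContinuous_iff.1 (CompactSpace.uniformContinuous_of_continuous hf) ε hε
  exact ⟨η, hη, fun x y => @h x y⟩

lemma IsCompatMetric.exists_le [CompactSpace X] {d : X → X → ℝ} (hd : IsCompatMetric d) :
    ∃ C, 0 ≤ C ∧ ∀ x y, d x y ≤ C := by
  let : PseudoMetricSpace X :=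
    .ofDistTopology d hd.refl hd.symm hd.triangle hd.isOpen_iff
  exact ⟨Metric.diam (Set.univ : Set X), Metric.diam_nonneg, fun x y =>
    Metric.dist_le_diam_of_mem isCompact_univ.isBounded (Set.mem_univ x) (Set.mem_univ y)⟩

variable {Y : Type*}

lemma natCast_le_ord {α : Set (Set Y)} {n : ℕ} {f : Fin (n + 1) → Set Y}
    (hf : Function.Injective f) (h_mem : ∀ i, f i ∈ α) (h_inter : (⋂ i, f i).Nonempty) :
    (n : ℕ∞) ≤ ord α :=
  le_iSup₂ (f := fun (n : ℕ) (_ : n ∈ {n : ℕ | ∃ f : Fin (n + 1) → Set Y,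
    Function.Injective f ∧ (∀ i, f i ∈ α) ∧ (⋂ i, f i).Nonempty}) => (n : ℕ∞)) n
    ⟨f, hf, h_mem, h_inter⟩

lemma lt_of_mesh_lt {d : Y → Y → ℝ} {C : ℝ} (hC : 0 ≤ C) (hd : ∀ x y, d x y ≤ C)
    {α : Set (Set Y)} {η : ℝ} (h_mesh : mesh d α < η) {U : Set Y} (hU : U ∈ α) {x y : Y}
    (hx : x ∈ U) (hy : y ∈ U) : d x y < η := by
  have h_diam : d x y ≤ diamD d U :=
    le_csSup ⟨C, by rintro _ ⟨x, -, y, -, rfl⟩; exact hd x y⟩ ⟨x, hx, y, hy, rfl⟩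
  have h_diam_le (V : Set Y) : diamD d V ≤ C :=
    Real.sSup_le (by rintro _ ⟨x, -, y, -, rfl⟩; exact hd x y) hC
  have h_diam_mesh : diamD d U ≤ mesh d α :=
    le_csSup ⟨C, by rintro _ ⟨V, -, rfl⟩; exact h_diam_le V⟩ ⟨U, hU, rfl⟩
  linarith

lemma le_dynDist (d : Y → Y → ℝ) (T : Y → Y) {i n : ℕ} (hi : i < n) (x y : Y) :
    d (T^[i] x) (T^[i] y) ≤ dynDist d T n x y := by
  refine le_csSup (Set.Finite.bddAbove ?_) ⟨i, hi, rfl⟩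
  refine ((Set.finite_Iio n).image fun i => d (T^[i] x) (T^[i] y)).subset ?_
  rintro _ ⟨i, hi, rfl⟩
  exact ⟨i, hi, rfl⟩

lemma dynDist_le {d : Y → Y → ℝ} {C : ℝ} (hC : 0 ≤ C) (hd : ∀ x y, d x y ≤ C) (T : Y → Y)
    (n : ℕ) (x y : Y) : dynDist d T n x y ≤ C :=
  Real.sSup_le (by rintro _ ⟨i, -, rfl⟩; exact hd _ _) hC

lemma iterate_shift_apply {K : Type*} (i : ℕ) (x : ℤ → K) (n : ℤ) :
    (shift K)^[i] x n = x (n + i) := by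
  induction i generalizing x with
  | zero => simp
  | succ i ih =>
    rw [Function.iterate_succ_apply, ih]
    simp [shift, add_assoc]

lemma exists_continuous_extend {K : Type*} [TopologicalSpace K] (N : ℕ) [NeZero N] :
    ∃ j : (Fin N → K) → ℤ → K, Continuous j ∧ ∀ y (i : Fin N), j y i = y i := by
  refine ⟨fun y n => y (Fin.ofNat N n.toNat), by fun_prop, fun y i => ?_⟩
  simp

/-- Every relative cocycle of degree `k` becomes a coboundary at a smaller scale: the
Alexander–Spanier cohomology group `H^k(Y, A; G)` vanishes. -/
def AlexanderSpanierVanishes (G : Type*) [AddCommGroup G] {Y : Type*} [PseudoMetricSpace Y]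
    (A : Set Y) (k : ℕ) : Prop :=
  ∀ ε > 0, ∀ v : List Y → G, IsRelCocycle (smallLists ε) (nearLists A ε) k v →
    ∃ δ, 0 < δ ∧ δ ≤ ε ∧ ∃ b, IsRelPrimitive (smallLists δ) (nearLists A δ) k v b

variable {F : Type*} [Field F] {K : Type*} [MetricSpace K] [CompactSpace K] {A : Set K} {ε : ℝ}
  {k : ℕ} {v : List K → F} {d : (ℤ → K) → (ℤ → K) → ℝ}

lemma IsPersistentCocycle.exists_le_widim (hε : 0 < ε)
    (hv : IsPersistentCocycle smallLists (nearLists A) ε k v) (hd : IsCompatMetric d) :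
    ∃ η > 0, ∀ N : ℕ, 0 < N → ((N * k : ℕ) : ℕ∞) ≤ widim η (dynDist d (shift K) N) := by
  obtain ⟨η, hη, hη'⟩ := hd.exists_dist_lt (continuous_apply (0 : ℤ)) (show 0 < ε / 4 by positivity)
  obtain ⟨C, hC, hdC⟩ := hd.exists_le
  refine ⟨η, hη, fun N hN => ?_⟩
  refine le_iInf₂ fun α ⟨_, h_mesh⟩ => le_iInf₂ fun β ⟨⟨hβ, h_cover⟩, h_ref⟩ => ?_
  have : NeZero N := ⟨hN.ne'⟩
  obtain ⟨j, hj, hj_apply⟩ := exists_continuous_extend (K := K) N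
  have h_small (V) (hV : V ∈ β) (x) (hx : j x ∈ V) (y) (hy : j y ∈ V) : dist x y < ε / 4 := by
    obtain ⟨U, hU, hVU⟩ := h_ref V hV
    refine (dist_pi_lt_iff (by positivity)).2 fun i => ?_
    have h_lt := lt_of_mesh_lt hC (dynDist_le hC hdC (shift K) N) h_mesh hU (hVU hx) (hVU hy)
    simpa [iterate_shift_apply, hj_apply] using
      hη' _ _ ((le_dynDist d (shift K) i.2 _ _).trans_lt h_lt)
  obtain ⟨u, hu⟩ := hv.exists_pow N
  obtain ⟨f, hf, x, hx⟩ := hu.exists_injective_nonempty_iInter hε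
    (ι := {V // V ∈ β ∧ (j ⁻¹' V).Nonempty}) (U := fun V => j ⁻¹' V.1)
    (fun δ hδ l hl l' h => monotone_powNearLists N A (by linarith)
      (mem_powNearLists_of_forall_exists_dist_lt hl h))
    (fun V => (hβ V V.2.1).preimage hj)
    (Set.eq_univ_of_forall fun x => by
      obtain ⟨V, hV, hx⟩ := h_cover.ge (Set.mem_univ (j x))
      exact Set.mem_iUnion.2 ⟨⟨V, hV, x, hx⟩, hx⟩)
    (fun V => V.2.2.some) (fun V x hx => h_small V V.2.1 _ V.2.2.some_mem x hx)
  exact natCast_le_ord (Subtype.val_injective.comp hf) (fun i => (f i).2.1)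
    ⟨j x, Set.mem_iInter.2 fun i => Set.mem_iInter.1 hx i⟩

lemma IsPersistentCocycle.le_mdim (hε : 0 < ε)
    (hv : IsPersistentCocycle smallLists (nearLists A) ε k v) (hd : IsCompatMetric d) :
    (k : ℝ≥0∞) ≤ mdim (shift K) d := by
  obtain ⟨η, hη, h⟩ := hv.exists_le_widim hε hd
  refine le_iSup₂_of_le η hη (Filter.le_liminf_of_le (by isBoundedDefault) ?_)
  filter_upwards [Filter.eventually_gt_atTop 0] with N hN
  rw [ENNReal.le_div_iff_mul_le (.inl (by simpa using hN.ne')) (.inl (by simp))]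
  simpa [mul_comm] using ENat.toENNReal_le.2 (h N hN)

variable (A k F) in
theorem alexanderSpanierVanishes_of_mdim_lt (hd : IsCompatMetric d) (hk : mdim (shift K) d < k) :
    AlexanderSpanierVanishes F A k := by
  intro ε hε v hv
  by_contra! h_con
  refine hk.not_ge (IsPersistentCocycle.le_mdim hε (v := v) ⟨hv, fun δ hδ hδε => ?_⟩ hd)
  by_contra! h_eval
  obtain ⟨b, hb⟩ := exists_isRelPrimitive_of_forall_isRelCycle h_eval
  exact h_con δ hδ hδε b hb

end MeanDimension

section DimensionOne

lemma covD_eq_zero [T2Space X] [CompactSpace X] [TotallyDisconnectedSpace X] {α : Set (Set X)}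
    (hα : IsOpenCover α) : covD α = 0 := by
  obtain ⟨n, W, hW, h_cover, h_disj⟩ :=
    TopologicalSpace.IsOpenCover.exists_finite_nonempty_disjoint_clopen_cover
      (.of_sets (fun U : α => hα.1 U U.2) (by rw [← Set.sUnion_eq_iUnion, hα.2]))
  have h_cov : IsOpenCover (Set.range fun i => (W i : Set X)) :=
    ⟨by rintro _ ⟨i, rfl⟩; exact (W i).isOpen,
      by rw [Set.sUnion_range]; exact Set.univ_subset_iff.1 h_cover⟩
  have h_ref : Refines (Set.range fun i => (W i : Set X)) α := by
    rintro _ ⟨i, rfl⟩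
    obtain ⟨V, hV⟩ := (hW i).2
    exact ⟨V, V.2, hV⟩
  refine le_antisymm ((iInf₂_le _ ⟨h_cov, h_ref⟩).trans (iSup₂_le ?_)) zero_le
  rintro m ⟨f, hf, h_mem, x, hx⟩
  choose g hg using h_mem
  have h_eq (i) : g i = g 0 := by
    by_contra h_ne
    have h_sep := Set.disjoint_left.1 (TopologicalSpace.Clopens.coe_disjoint.2 (h_disj h_ne))
    refine @h_sep x ?_ ?_
    · exact (hg i).ge (Set.mem_iInter.1 hx i)
    · exact (hg 0).ge (Set.mem_iInter.1 hx 0)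
  have : Subsingleton (Fin (m + 1)) := ⟨fun i i' => hf (by rw [← hg, ← hg, h_eq i, h_eq i'])⟩
  simpa using Fin.subsingleton_iff_le_one.1 this

/-- The cochain on lists that evaluates a function at the first entry. -/
noncomputable def vertexCochain {V G : Type*} [AddCommGroup G] (χ : V → G) (l : List V) : G :=
  l.head?.elim 0 χ

lemma coboundary_vertexCochain {V G : Type*} [AddCommGroup G] (χ : V → G) (p q : V) :
    coboundary (vertexCochain χ) [p, q] = χ q - χ p := by
  simp [coboundary_cons, vertexCochain]

variable {K : Type*} [MetricSpace K]

lemma isRelCocycle_coboundary_indicator_ball (x y : K) :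
    IsRelCocycle (smallLists (dist x y / 4)) (nearLists {x, y} (dist x y / 4)) 1
      (coboundary (vertexCochain ((Metric.ball y (dist x y / 2)).indicator (1 : K → ℚ)))) where
  eq_zero := by
    rintro l ⟨hl, h_len, h_rel⟩
    obtain ⟨p, q, rfl⟩ := List.length_eq_two.1 h_len
    rw [coboundary_vertexCochain, sub_eq_zero]
    rcases h_rel with h_near | h_deg
    · obtain ⟨a, ha, hpa⟩ := h_near p (by simp)
      obtain ⟨b, hb, hqb⟩ := h_near q (by simp)
      have hpq := hl p (by simp) q (by simp)
      have h_iff : q ∈ Metric.ball y (dist x y / 2) ↔ p ∈ Metric.ball y (dist x y / 2) := by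
        rw [Metric.mem_ball, Metric.mem_ball]
        have h_p := dist_triangle_left x y p
        have h_q := dist_triangle_left x y q
        have h_pq := dist_triangle p q y
        have h_qp := dist_triangle_left q y p
        rcases ha with rfl | rfl <;> rcases hb with rfl | rfl <;> constructor <;> intro h <;>
          linarith
      simp [Set.indicator, h_iff]
    · obtain rfl : p = q := by simpa [degenerate_cons_cons, not_degenerate_singleton] using h_deg
      rfl
  coboundary_eq_zero l _ _ := coboundary_coboundary _ l

lemma isLocallyConstant_sub_of_coboundary_eq {G : Type*} [AddCommGroup G] {χ : K → G}
    {b : List K → G} {δ : ℝ} (hδ : 0 < δ)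
    (h : ∀ l ∈ smallLists δ, l.length = 2 → coboundary b l = coboundary (vertexCochain χ) l) :
    IsLocallyConstant fun p => b [p] - χ p := by
  rw [IsLocallyConstant.iff_eventually_eq]
  intro p
  filter_upwards [Metric.ball_mem_nhds p hδ] with q hq
  have h_pq := h [p, q] (by simpa [smallLists, hδ, dist_comm p q] using hq) rfl
  rw [coboundary_vertexCochain] at h_pq
  simp only [coboundary_cons, coboundary_nil, sub_zero] at h_pq
  rw [sub_eq_sub_iff_sub_eq_sub, h_pq]

lemma totallyDisconnectedSpace_of_mdim_lt_one [CompactSpace K] {d : (ℤ → K) → (ℤ → K) → ℝ}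
    (hd : IsCompatMetric d) (h : mdim (shift K) d < 1) : TotallyDisconnectedSpace K := by
  rw [totallyDisconnectedSpace_iff_connectedComponent_subsingleton]
  intro a x hx y hy
  by_contra hxy
  have h_pos : 0 < dist x y := dist_pos.2 hxy
  obtain ⟨δ, hδ, -, b, hb, hb'⟩ := alexanderSpanierVanishes_of_mdim_lt ℚ {x, y} 1 hd
    (by simpa using h) _ (by positivity) _ (isRelCocycle_coboundary_indicator_ball x y)
  have h_const := (isLocallyConstant_sub_of_coboundary_eq hδ hb').apply_eq_of_isPreconnected
    isPreconnected_connectedComponent hx hy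
  have h_zero (p) (hp : p ∈ ({x, y} : Set K)) : b [p] = 0 :=
    hb [p] ⟨by simpa [smallLists] using hδ, rfl, .inl fun q hq => ⟨p, hp, by
      simpa [List.mem_singleton.1 hq] using hδ⟩⟩
  simp [h_zero, Set.indicator, h_pos] at h_const

theorem one_le_mdim [CompactSpace K] {d : (ℤ → K) → (ℤ → K) → ℝ} (hd : IsCompatMetric d)
    (hK : topDim K ≠ 0) : 1 ≤ mdim (shift K) d := by
  contrapose! hK
  have := totallyDisconnectedSpace_of_mdim_lt_one hd hK
  exact le_antisymm (iSup₂_le fun α hα => (covD_eq_zero hα).le) zero_le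

end DimensionOne

/-! ### Integral coefficients -/

section IntegralCoefficients

variable {G : Type*} [AddCommGroup G] {V W : Type*}

lemma coboundary_eq_zero_of_forall_sublist {v : List V → G} {l : List V}
    (h : ∀ l', l'.length + 1 = l.length → l'.Sublist l → v l' = 0) : coboundary v l = 0 := by
  rw [coboundary_congr (w := fun _ => 0) h]
  simp [coboundary]

lemma coboundary_eq_zero_of_degenerate {v : List V → G} {l : List V} (hl : Degenerate l)
    (h : ∀ l', l'.length + 1 = l.length → l'.Sublist l → Degenerate l' → v l' = 0) :
    coboundary v l = 0 := by
  induction l generalizing v with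
  | nil => exact absurd hl not_degenerate_nil
  | cons x l ih =>
    match l, hl with
    | [], hl => exact absurd hl (not_degenerate_singleton x)
    | y :: l, hl =>
      rcases degenerate_cons_cons.1 hl with rfl | hl
      · have h_rest : coboundary (fun l' => v (x :: x :: l')) l = 0 :=
          coboundary_eq_zero_of_forall_sublist fun l' h_len h_sub =>
            h _ (by simpa using h_len) (by simpa using h_sub)
              (degenerate_cons_cons.2 (.inl rfl))
        simp [coboundary_cons, h_rest]
      · have h_rest : coboundary (fun l' => v (x :: l')) (y :: l) = 0 :=
          ih hl fun l' h_len h_sub h_deg =>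
            h _ (by simpa using h_len) (by simpa using h_sub) (h_deg.cons x)
        rw [coboundary_cons, h _ (by simp) (by simp) hl, h_rest, sub_zero]

lemma coboundary_eq_zero_of_mem_relSimplices {S T : Set (List V)} (hS : IsHereditary S)
    (hT : IsHereditary T) {k : ℕ} {b : List V → G} (hb : ∀ l ∈ relSimplices S T k, b l = 0)
    {l : List V} (hl : l ∈ relSimplices S T (k + 1)) : coboundary b l = 0 := by
  obtain ⟨hlS, h_len, hlT | h_deg⟩ := hl
  · exact coboundary_eq_zero_of_forall_sublist fun l' h_len' h_sub =>
      hb l' ⟨hS l hlS l' fun _ hx => h_sub.subset hx, by omega,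
        .inl (hT l hlT l' fun _ hx => h_sub.subset hx)⟩
  · exact coboundary_eq_zero_of_degenerate h_deg fun l' h_len' h_sub h_deg' =>
      hb l' ⟨hS l hlS l' fun _ hx => h_sub.subset hx, by omega, .inr h_deg'⟩

lemma map_mem_relSimplices {S T : Set (List V)} {S' T' : Set (List W)} {f : V → W}
    (hS : ∀ l ∈ S, l.map f ∈ S') (hT : ∀ l ∈ T, l.map f ∈ T') {k : ℕ} {l : List V}
    (hl : l ∈ relSimplices S T k) : l.map f ∈ relSimplices S' T' k :=
  ⟨hS l hl.1, by simpa using hl.2.1, hl.2.2.imp (hT l) fun h => h.map f⟩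

lemma IsRelPrimitive.map {S T : Set (List V)} {S' T' : Set (List W)} {f : V → W}
    (hS : ∀ l ∈ S, l.map f ∈ S') (hT : ∀ l ∈ T, l.map f ∈ T') {k : ℕ} {v b : List W → G}
    (hb : IsRelPrimitive S' T' k v b) :
    IsRelPrimitive S T k (fun l => v (l.map f)) fun l => b (l.map f) where
  eq_zero l hl := hb.eq_zero _ (map_mem_relSimplices hS hT hl)
  coboundary_eq l hl h_len := by
    rw [← coboundary_map]
    exact hb.coboundary_eq _ (hS l hl) (by simpa using h_len)

lemma IsRelPrimitive.isRelCocycle_intCast {S T : Set (List V)} {k m : ℕ} {v c : List V → ℤ}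
    (hc : IsRelPrimitive S T (k + 1) (fun l => m * v l) c) :
    IsRelCocycle S T k fun l => (c l : ZMod m) where
  eq_zero l hl := by rw [hc.eq_zero l hl, Int.cast_zero]
  coboundary_eq_zero l hl h_len := by
    rw [coboundary_intCast, hc.coboundary_eq l hl h_len]
    simp

lemma IsRelPrimitive.ediv {S T : Set (List V)} (hS : IsHereditary S) (hT : IsHereditary T)
    {k m : ℕ} [NeZero m] {v c : List V → ℤ} (hc : IsRelPrimitive S T (k + 1) (fun l => m * v l) c)
    {b : List V → ZMod m} (hb : IsRelPrimitive S T k (fun l => (c l : ZMod m)) b) :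
    IsRelPrimitive S T (k + 1) v fun l =>
      (c l - coboundary (fun l' => ((b l').val : ℤ)) l) / m := by
  set b' : List V → ℤ := fun l => ((b l).val : ℤ)
  have hm : (m : ℤ) ≠ 0 := by exact_mod_cast NeZero.ne m
  have h_dvd (l : List V) (hl : l ∈ S) (h_len : l.length = k + 1) :
      m * ((c l - coboundary b' l) / m) = c l - coboundary b' l := by
    refine Int.mul_ediv_cancel' ((ZMod.intCast_zmod_eq_zero_iff_dvd _ m).1 ?_)
    rw [Int.cast_sub, ← coboundary_intCast, ← hb.coboundary_eq l hl h_len]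
    simp [b']
  refine ⟨fun l hl => ?_, fun l hl h_len => mul_left_cancel₀ hm ?_⟩
  · rw [hc.eq_zero l hl, coboundary_eq_zero_of_mem_relSimplices hS hT ?_ hl]
    · simp
    · intro l' hl'
      simp [b', hb.eq_zero l' hl']
  · rw [← hc.coboundary_eq l hl h_len, ← coboundary_const_mul]
    rw [coboundary_congr fun l' h_len' h_sub =>
      h_dvd l' (hS l hl l' fun _ hx => h_sub.subset hx) (by omega)]
    rw [coboundary_sub, coboundary_coboundary, sub_zero]

variable {Y : Type*} [PseudoMetricSpace Y] {A : Set Y}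

lemma IsRelPrimitive.mono_scale {δ δ' : ℝ} (h : δ' ≤ δ) {k : ℕ} {v b : List Y → G}
    (hb : IsRelPrimitive (smallLists δ) (nearLists A δ) k v b) :
    IsRelPrimitive (smallLists δ') (nearLists A δ') k v b := by
  simpa using hb.map (f := id) (fun l hl => by simpa using monotone_smallLists h hl)
    (fun l hl => by simpa using monotone_nearLists A h hl)

theorem exists_isRelPrimitive_of_natCast_mul {n : ℕ}
    (h_prime : ∀ p : ℕ, p.Prime → AlexanderSpanierVanishes (ZMod p) A n) {m : ℕ} (hm : m ≠ 0)
    {δ : ℝ} (hδ : 0 < δ) {v c : List Y → ℤ}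
    (hc : IsRelPrimitive (smallLists δ) (nearLists A δ) (n + 1) (fun l => m * v l) c) :
    ∃ δ', 0 < δ' ∧ δ' ≤ δ ∧
      ∃ c', IsRelPrimitive (smallLists δ') (nearLists A δ') (n + 1) v c' := by
  induction m using Nat.recOnMul generalizing δ v c with
  | zero => exact absurd rfl hm
  | one => exact ⟨δ, hδ, le_rfl, c, by simpa using hc⟩
  | prime p hp =>
    have : NeZero p := ⟨hp.ne_zero⟩
    obtain ⟨δ', hδ', h_le, b, hb⟩ := h_prime p hp δ hδ _ hc.isRelCocycle_intCast
    exact ⟨δ', hδ', h_le, _, (hc.mono_scale h_le).ediv (isHereditary_smallLists δ')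
      (isHereditary_nearLists A δ') hb⟩
  | mul m m' ih ih' =>
    obtain ⟨δ', hδ', h_le, c', hc'⟩ := ih (left_ne_zero_of_mul hm) hδ
      (v := fun l => m' * v l) (by simpa [mul_assoc] using hc)
    obtain ⟨δ'', hδ'', h_le', h⟩ := ih' (right_ne_zero_of_mul hm) hδ' hc'
    exact ⟨δ'', hδ'', h_le'.trans h_le, h⟩

lemma exists_natCast_mul_eq_intCast {ι : Type*} [Finite ι] (f : ι → ℚ) :
    ∃ m : ℕ, m ≠ 0 ∧ ∀ i, ∃ z : ℤ, (z : ℚ) = m * f i := by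
  have := Fintype.ofFinite ι
  refine ⟨∏ i, (f i).den, Finset.prod_ne_zero_iff.2 fun i _ => (f i).den_ne_zero, fun i => ?_⟩
  obtain ⟨k, hk⟩ := Finset.dvd_prod_of_mem (fun i => (f i).den) (Finset.mem_univ i)
  refine ⟨k * (f i).num, ?_⟩
  rw [hk]
  push_cast
  rw [mul_right_comm, Rat.den_mul_eq_num, mul_comm]

lemma exists_natCast_mul_map_eq_intCast {ρ : V → W} (hρ : (Set.range ρ).Finite)
    (b : List W → ℚ) (k : ℕ) :
    ∃ m : ℕ, m ≠ 0 ∧ ∃ c : List V → ℤ, ∀ l, l.length = k → (c l : ℚ) = m * b (l.map ρ) := by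
  have := hρ.fintype
  obtain ⟨m, hm, h_int⟩ := exists_natCast_mul_eq_intCast
    fun t : List.Vector (Set.range ρ) k => b (t.toList.map (↑))
  have h_ex (l : List V) : ∃ c : ℤ, l.length = k → (c : ℚ) = m * b (l.map ρ) := by
    by_cases h : l.length = k
    · obtain ⟨z, hz⟩ := h_int ⟨l.map (Set.rangeFactorization ρ), by simpa using h⟩
      exact ⟨z, fun _ => by simpa [Function.comp_def] using hz⟩
    · exact ⟨0, (absurd · h)⟩
  choose c hc using h_ex
  exact ⟨m, hm, c, hc⟩

lemma exists_finite_range_dist_lt (Y : Type*) [PseudoMetricSpace Y] [CompactSpace Y] {δ : ℝ}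
    (hδ : 0 < δ) : ∃ ρ : Y → Y, (∀ p, dist (ρ p) p < δ) ∧ (Set.range ρ).Finite := by
  obtain ⟨t, -, ht, h_cover⟩ := finite_cover_balls_of_compact (isCompact_univ (X := Y)) hδ
  choose ρ hρt hρ using fun p => Set.mem_iUnion₂.1 (h_cover (Set.mem_univ p))
  exact ⟨ρ, fun p => by rw [dist_comm]; exact hρ p, ht.subset (Set.range_subset_iff.2 hρt)⟩

theorem AlexanderSpanierVanishes.exists_isRelPrimitive_map [CompactSpace Y] {n : ℕ}
    (h_prime : ∀ p : ℕ, p.Prime → AlexanderSpanierVanishes (ZMod p) A n)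
    (h_rat : AlexanderSpanierVanishes ℚ A (n + 1)) {ε : ℝ} (hε : 0 < ε) {v : List Y → ℤ}
    (hv : IsRelCocycle (smallLists ε) (nearLists A ε) (n + 1) v) :
    ∃ δ, 0 < δ ∧ δ ≤ ε ∧ ∃ ρ : Y → Y, (∀ p, dist (ρ p) p < ε / 4) ∧ ∃ c,
      IsRelPrimitive (smallLists δ) (nearLists A δ) (n + 1) (fun l => v (l.map ρ)) c := by
  obtain ⟨δ, hδ, hδε, b, hb⟩ := h_rat ε hε (fun l => (v l : ℚ))
    ⟨fun l hl => by simp [hv.eq_zero l hl], fun l hl h_len => by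
      rw [coboundary_intCast, hv.coboundary_eq_zero l hl h_len, Int.cast_zero]⟩
  obtain ⟨ρ, hρ, hρ_fin⟩ := exists_finite_range_dist_lt Y (show 0 < δ / 4 by positivity)
  have h_near (l : List Y) : ∀ x ∈ l.map ρ, ∃ y ∈ l, dist x y < δ / 4 := fun x hx => by
    obtain ⟨y, hy, rfl⟩ := List.mem_map.1 hx
    exact ⟨y, hy, hρ y⟩
  have hbρ : IsRelPrimitive (smallLists (δ / 2)) (nearLists A (δ / 2)) (n + 1)
      (fun l => (v (l.map ρ) : ℚ)) fun l => b (l.map ρ) := hb.map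
    (fun l hl => monotone_smallLists (by linarith)
      (mem_smallLists_of_forall_exists_dist_lt hl (h_near l)))
    (fun l hl => monotone_nearLists A (by linarith)
      (mem_nearLists_of_forall_exists_dist_lt hl (h_near l)))
  obtain ⟨m, hm, c, hc⟩ := exists_natCast_mul_map_eq_intCast hρ_fin b (n + 1)
  have hc' : IsRelPrimitive (smallLists (δ / 2)) (nearLists A (δ / 2)) (n + 1)
      (fun l => m * v (l.map ρ)) c := by
    refine ⟨fun l hl => ?_, fun l hl h_len => ?_⟩
    · have := hc l hl.2.1
      rw [hbρ.eq_zero l hl, mul_zero] at this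
      exact_mod_cast this
    · rw [← Int.cast_inj (α := ℚ), ← coboundary_intCast,
        coboundary_congr fun l' h_len' _ => hc l' (by omega), coboundary_const_mul,
        hbρ.coboundary_eq l hl h_len]
      push_cast
      rfl
  obtain ⟨δ', hδ', h_le, c', hc'⟩ :=
    exists_isRelPrimitive_of_natCast_mul h_prime hm (by positivity) hc'
  exact ⟨δ', hδ', by linarith, ρ, fun p => (hρ p).trans_le (by linarith), c', hc'⟩

end IntegralCoefficients

/-! ### Orientation cochain and loop classes -/

section OrientationCochain

variable {ι : Type*} {D : ℕ}

open Classical in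
/-- The simplicial cochain of degree `D` dual to the oriented simplex `ω`. -/
noncomputable def orientationCochain (ω : Fin (D + 1) → ι) (l : List ι) : ℤ :=
  Matrix.det (Matrix.of fun j i : Fin (D + 1) => if l[(j : ℕ)]? = some (ω i) then 1 else 0)

lemma exists_eq_ofFn_of_length_eq {V : Type*} {n : ℕ} {l : List V} (h : l.length = n) :
    ∃ τ : Fin n → V, l = List.ofFn τ := by
  subst h
  exact ⟨l.get, by simp⟩

open Classical in
lemma orientationCochain_ofFn (ω τ : Fin (D + 1) → ι) :
    orientationCochain ω (List.ofFn τ) =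
      Matrix.det (Matrix.of fun j i => if τ j = ω i then 1 else 0) := by
  unfold orientationCochain
  congr! 5 with j i
  rw [List.getElem?_ofFn, dif_pos j.2, Option.some_inj]

lemma orientationCochain_eq_zero_of_notMem {ω : Fin (D + 1) → ι} {l : List ι} {i : Fin (D + 1)}
    (h : ω i ∉ l) : orientationCochain ω l = 0 :=
  Matrix.det_eq_zero_of_column_eq_zero i fun _ => if_neg fun h' => h (List.mem_of_getElem? h')

lemma orientationCochain_eq_zero_of_not_nodup {ω : Fin (D + 1) → ι} {l : List ι}
    (hl : l.length = D + 1) (h : ¬ l.Nodup) : orientationCochain ω l = 0 := by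
  obtain ⟨τ, rfl⟩ := exists_eq_ofFn_of_length_eq hl
  classical
  rw [orientationCochain_ofFn]
  simp only [List.nodup_ofFn, Function.Injective, not_forall] at h
  obtain ⟨a, b, hab, h_ne⟩ := h
  exact Matrix.det_zero_of_row_eq h_ne
    (congrArg (fun x i => if x = ω i then (1 : ℤ) else 0) hab)

open Classical in
/-- The incidence matrix of the list `τ` and the simplex `ω`, bordered by a column of ones. -/
noncomputable def borderedIncidence (ω : Fin (D + 1) → ι) (τ : Fin (D + 2) → ι) :
    Matrix (Fin (D + 2)) (Fin (D + 2)) ℤ :=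
  Matrix.of fun j => Fin.cons 1 fun i => if τ j = ω i then 1 else 0

lemma coboundary_orientationCochain_ofFn (ω : Fin (D + 1) → ι) (τ : Fin (D + 2) → ι) :
    coboundary (orientationCochain ω) (List.ofFn τ) = (borderedIncidence ω τ).det := by
  rw [coboundary_ofFn, Matrix.det_succ_column_zero]
  refine Finset.sum_congr rfl fun i _ => ?_
  rw [orientationCochain_ofFn]
  simp only [borderedIncidence, Matrix.of_apply, Fin.cons_zero, mul_one, smul_eq_mul]
  congr 1

lemma det_borderedIncidence_eq_zero {ω : Fin (D + 1) → ι} (hω : Function.Injective ω)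
    {τ : Fin (D + 2) → ι} (hτ : ∀ j, τ j ∈ Set.range ω) : (borderedIncidence ω τ).det = 0 := by
  refine Matrix.exists_mulVec_eq_zero_iff.1 ⟨Fin.cons 1 fun _ => -1, fun h => ?_, ?_⟩
  · simpa using congrFun h 0
  · funext j
    obtain ⟨i, hi⟩ := hτ j
    simp [borderedIncidence, Matrix.mulVec, dotProduct, Fin.sum_univ_succ (n := D + 1), ← hi,
      hω.eq_iff]

lemma coboundary_orientationCochain {ω : Fin (D + 1) → ι} (hω : Function.Injective ω) {l : List ι}
    (hl : l.length = D + 2) (h : (∀ i, ω i ∈ l) → ∀ x ∈ l, x ∈ Set.range ω) :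
    coboundary (orientationCochain ω) l = 0 := by
  by_cases h_mem : ∀ i, ω i ∈ l
  · obtain ⟨τ, rfl⟩ := exists_eq_ofFn_of_length_eq hl
    rw [coboundary_orientationCochain_ofFn]
    exact det_borderedIncidence_eq_zero hω fun j =>
      h h_mem _ (List.mem_ofFn.2 ⟨j, rfl⟩)
  · obtain ⟨i, hi⟩ := not_forall.1 h_mem
    exact coboundary_eq_zero_of_forall_sublist fun l' _ h_sub =>
      orientationCochain_eq_zero_of_notMem fun h' => hi (h_sub.subset h')

lemma isRelCocycle_orientationCochain {V : Type*} {ω : Fin (D + 1) → ι}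
    (hω : Function.Injective ω) {g : V → ι} {S T : Set (List V)}
    (hS : ∀ l ∈ S, (∀ i, ω i ∈ l.map g) → ∀ x ∈ l.map g, x ∈ Set.range ω)
    (hT : ∀ l ∈ S, l ∈ T → ∃ i, ω i ∉ l.map g) :
    IsRelCocycle S T D fun l => orientationCochain ω (l.map g) where
  eq_zero l hl := by
    obtain ⟨hlS, h_len, hlT | h_deg⟩ := hl
    · obtain ⟨i, hi⟩ := hT l hlS hlT
      exact orientationCochain_eq_zero_of_notMem hi
    · exact orientationCochain_eq_zero_of_not_nodup (by simpa using h_len)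
        (not_nodup_of_degenerate (h_deg.map g))
  coboundary_eq_zero l hl h_len := by
    rw [← coboundary_map]
    exact coboundary_orientationCochain hω (by simpa using h_len) (hS l hl)

end OrientationCochain

section SuspensionPath

open scoped unitInterval
open Path

lemma mk_trans_mk_eq_of_square {Y : Type*} [TopologicalSpace Y] (Γ : C(I × I, Y)) {a b c d : Y}
    {p : Path a b} {q : Path b d} {r : Path a c} {s : Path c d} (hp : ∀ t, p t = Γ (0, t))
    (hq : ∀ t, q t = Γ (t, 1)) (hr : ∀ t, r t = Γ (t, 0)) (hs : ∀ t, s t = Γ (1, t)) :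
    (Homotopic.Quotient.mk p).trans (Homotopic.Quotient.mk q) =
      (Homotopic.Quotient.mk r).trans (Homotopic.Quotient.mk s) := by
  obtain rfl : a = Γ (0, 0) := by rw [← hp, p.source]
  obtain rfl : b = Γ (0, 1) := by rw [← hp, p.target]
  obtain rfl : c = Γ (1, 0) := by rw [← hs, s.source]
  obtain rfl : d = Γ (1, 1) := by rw [← hs, s.target]
  let left : Path ((0 : I), (0 : I)) (0, 1) := ⟨⟨fun t => (0, t), by fun_prop⟩, rfl, rfl⟩
  let top : Path ((0 : I), (1 : I)) (1, 1) := ⟨⟨fun t => (t, 1), by fun_prop⟩, rfl, rfl⟩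
  let bottom : Path ((0 : I), (0 : I)) (1, 0) := ⟨⟨fun t => (t, 0), by fun_prop⟩, rfl, rfl⟩
  let right : Path ((1 : I), (0 : I)) (1, 1) := ⟨⟨fun t => (1, t), by fun_prop⟩, rfl, rfl⟩
  have : ContractibleSpace I := (convex_Icc (0 : ℝ) 1).contractibleSpace ⟨0, by simp⟩
  have h := (SimplyConnectedSpace.paths_homotopic (left.trans top) (bottom.trans right)).map Γ
  have hp' : left.map Γ.continuous = p := Path.ext (funext fun t => (hp t).symm)
  have hq' : top.map Γ.continuous = q := Path.ext (funext fun t => (hq t).symm)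
  have hr' : bottom.map Γ.continuous = r := Path.ext (funext fun t => (hr t).symm)
  have hs' : right.map Γ.continuous = s := Path.ext (funext fun t => (hs t).symm)
  rw [Path.map_trans, Path.map_trans, hp', hq', hr', hs'] at h
  exact Homotopic.Quotient.eq.2 h

/-- The map to a function space with values in `O` given by a jointly continuous function. -/
def curryInto {P Z E : Type*} [TopologicalSpace P] [TopologicalSpace Z] [TopologicalSpace E]
    {O : Set E} (f : P → Z → E) (hf : Continuous fun p : P × Z => f p.1 p.2)
    (hO : ∀ p z, f p z ∈ O) : C(P, C(Z, O)) :=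
  ContinuousMap.curry ⟨fun p => ⟨f p.1 p.2, hO _ _⟩, hf.subtype_mk _⟩

@[simp] lemma coe_curryInto_apply {P Z E : Type*} [TopologicalSpace P] [TopologicalSpace Z]
    [TopologicalSpace E] {O : Set E} (f : P → Z → E)
    (hf : Continuous fun p : P × Z => f p.1 p.2) (hO : ∀ p z, f p z ∈ O) (p : P) (z : Z) :
    (curryInto f hf hO p z : E) = f p z :=
  rfl

variable {ι : Type*}

/-- A vector with at least two distinct coordinates. -/
def IsNonconstant (y : ι → ℝ) : Prop :=
  ∃ i j, y i ≠ y j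

lemma IsNonconstant.smul {y : ι → ℝ} (hy : IsNonconstant y) {r : ℝ} (hr : r ≠ 0) :
    IsNonconstant (r • y) := by
  obtain ⟨i, j, h⟩ := hy
  exact ⟨i, j, by simpa [hr] using h⟩

lemma IsNonconstant.comp_perm {y : ι → ℝ} (hy : IsNonconstant y) (π : Equiv.Perm ι) :
    IsNonconstant (y ∘ π) := by
  obtain ⟨i, j, h⟩ := hy
  exact ⟨π.symm i, π.symm j, by simpa using h⟩

/-- The complement of the line of constant vectors in `ℝ^ι × ℝ`, which has the homotopy type of
the sphere of dimension `|ι| - 1`. -/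
def lineCompl (ι : Type*) : Set ((ι → ℝ) × ℝ) :=
  {p | p.2 ≠ 0 ∨ IsNonconstant p.1}

lemma isOpen_lineCompl (ι : Type*) : IsOpen (lineCompl ι) := by
  simp only [lineCompl, IsNonconstant, Set.ofPred_or, Set.ofPred_exists]
  exact (isOpen_ne_fun continuous_snd continuous_const).union <|
    isOpen_iUnion fun i => isOpen_iUnion fun j => isOpen_ne_fun (by fun_prop) (by fun_prop)

/-- The point `(0, 1)` of `lineCompl ι`. -/
def northPole (ι : Type*) : lineCompl ι :=
  ⟨(0, 1), .inl one_ne_zero⟩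

/-- The point `(0, -1)` of `lineCompl ι`. -/
def southPole (ι : Type*) : lineCompl ι :=
  ⟨(0, -1), .inl (neg_ne_zero.2 one_ne_zero)⟩

/-- The point at time `t` of the path from the north pole to the south pole that passes through
the direction `y`. -/
def suspensionPoint (y : ι → ℝ) (t : ℝ) : (ι → ℝ) × ℝ :=
  ((t * (1 - t)) • y, 1 - 2 * t)

@[simp] lemma suspensionPoint_zero (y : ι → ℝ) : suspensionPoint y 0 = northPole ι := by
  simp [suspensionPoint, northPole]

@[simp] lemma suspensionPoint_one (y : ι → ℝ) : suspensionPoint y 1 = southPole ι := by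
  simp only [suspensionPoint, southPole, sub_self, mul_zero, zero_smul]
  norm_num

lemma suspensionPoint_mem_lineCompl {y : ι → ℝ} (hy : IsNonconstant y) (t : ℝ) :
    suspensionPoint y t ∈ lineCompl ι := by
  by_cases ht : t = 1 / 2
  · exact .inr (hy.smul (by rw [ht]; norm_num))
  · exact .inl fun h => ht (by simp only [suspensionPoint] at h; linarith)

variable {Z Z' : Type*} [TopologicalSpace Z] [TopologicalSpace Z']

/-- The path of maps `Z → lineCompl ι` from pole to pole given by a map to the nonconstant
vectors, that is, the adjoint of its unreduced suspension. -/
def suspensionPath (h : C(Z, ι → ℝ)) (hh : ∀ z, IsNonconstant (h z)) :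
    Path (ContinuousMap.const Z (northPole ι)) (ContinuousMap.const Z (southPole ι)) where
  toContinuousMap := curryInto (fun (t : I) z => suspensionPoint (h z) t)
    (by unfold suspensionPoint; fun_prop) fun t z => suspensionPoint_mem_lineCompl (hh z) t
  source' := by ext1 z; exact Subtype.ext (suspensionPoint_zero _)
  target' := by ext1 z; exact Subtype.ext (suspensionPoint_one _)

lemma coe_suspensionPath_apply (h : C(Z, ι → ℝ)) (hh : ∀ z, IsNonconstant (h z)) (t : I) (z : Z) :
    (suspensionPath h hh t z : (ι → ℝ) × ℝ) = suspensionPoint (h z) t :=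
  rfl

lemma mk_suspensionPath_eq_of_segment {h₀ h₁ : C(Z, ι → ℝ)} (hh₀ : ∀ z, IsNonconstant (h₀ z))
    (hh₁ : ∀ z, IsNonconstant (h₁ z))
    (H : ∀ z, ∀ θ ∈ I, IsNonconstant ((1 - θ) • h₀ z + θ • h₁ z)) :
    Homotopic.Quotient.mk (suspensionPath h₀ hh₀) =
      Homotopic.Quotient.mk (suspensionPath h₁ hh₁) := by
  have h_square := mk_trans_mk_eq_of_square (curryInto (O := lineCompl ι)
      (fun (p : I × I) z => suspensionPoint ((1 - (p.1 : ℝ)) • h₀ z + (p.1 : ℝ) • h₁ z) p.2)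
      (by unfold suspensionPoint; fun_prop)
      fun p z => suspensionPoint_mem_lineCompl (H z p.1 p.1.2) _)
    (p := suspensionPath h₀ hh₀) (q := Path.refl _) (r := Path.refl _)
    (s := suspensionPath h₁ hh₁)
    (fun t => by ext1 z; exact Subtype.ext (by simp [coe_suspensionPath_apply]))
    (fun t => by ext1 z; exact Subtype.ext (by simp))
    (fun t => by ext1 z; exact Subtype.ext (by simp))
    (fun t => by ext1 z; exact Subtype.ext (by simp [coe_suspensionPath_apply]))
  simpa using h_square

section Rotation

variable [DecidableEq ι]

/-- A homotopy, through automorphisms of `lineCompl ι`, from the identity to the product of the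
transposition of the coordinates `i` and `j` with the reflection `s ↦ -s`. It is a rescaled rotation
in the plane of the directions `e i - e j` and `s`. -/
noncomputable def swapRotation (i j : ι) (θ : ℝ) (p : (ι → ℝ) × ℝ) : (ι → ℝ) × ℝ :=
  (p.1 + ((1 - 2 * θ) * ((p.1 i - p.1 j) / 2) - θ * (1 - θ) * p.2 - (p.1 i - p.1 j) / 2) •
      (Pi.single i 1 - Pi.single j 1),
    θ * (1 - θ) * ((p.1 i - p.1 j) / 2) + (1 - 2 * θ) * p.2)

@[simp] lemma swapRotation_zero (i j : ι) (p : (ι → ℝ) × ℝ) : swapRotation i j 0 p = p := by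
  simp [swapRotation]

lemma swapRotation_one {i j : ι} (hij : i ≠ j) (p : (ι → ℝ) × ℝ) :
    swapRotation i j 1 p = (p.1 ∘ Equiv.swap i j, -p.2) := by
  refine Prod.ext (funext fun k => ?_) (by simp only [swapRotation]; ring)
  rcases eq_or_ne k i with rfl | hki
  · simp [swapRotation, hij]
    ring
  rcases eq_or_ne k j with rfl | hkj
  · simp [swapRotation, hij.symm]
    ring
  · simp [swapRotation, hki, hkj, Equiv.swap_apply_of_ne_of_ne hki hkj]

lemma swapRotation_northPole (i j : ι) (θ : ℝ) :
    swapRotation i j θ (northPole ι) = suspensionPoint (Pi.single j 1 - Pi.single i 1) θ := by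
  simp [swapRotation, northPole, suspensionPoint, ← smul_neg]

lemma swapRotation_southPole (i j : ι) (θ : ℝ) :
    swapRotation i j θ (southPole ι) =
      suspensionPoint (Pi.single i 1 - Pi.single j 1) (1 - θ) := by
  simp only [swapRotation, southPole, suspensionPoint, Pi.zero_apply]
  congr 1
  · rw [zero_add]
    congr 1
    ring
  · ring

lemma swapRotation_mem_lineCompl {i j : ι} (hij : i ≠ j) (θ : ℝ) {p : (ι → ℝ) × ℝ}
    (hp : p ∈ lineCompl ι) : swapRotation i j θ p ∈ lineCompl ι := by
  by_contra h_mem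
  obtain ⟨y, s⟩ := p
  simp only [lineCompl, IsNonconstant, swapRotation, Set.mem_ofPred, not_or, not_not,
    not_exists] at h_mem
  obtain ⟨h_fst, h_const⟩ := h_mem
  have h_snd := h_const i j
  simp only [Pi.add_apply, Pi.smul_apply, Pi.sub_apply, Pi.single_eq_same, smul_eq_mul,
    Pi.single_eq_of_ne hij, Pi.single_eq_of_ne hij.symm] at h_snd
  set a := (y i - y j) / 2 with ha
  replace h_snd : (1 - 2 * θ) * a - θ * (1 - θ) * s = 0 := by linarith
  have h_det : (1 - 2 * θ) ^ 2 + (θ * (1 - θ)) ^ 2 ≠ 0 := by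
    rcases eq_or_ne θ (1 / 2) with rfl | hθ
    · norm_num
    · have : 1 - 2 * θ ≠ 0 := fun h => hθ (by linarith)
      positivity
  have ha0 : a = 0 := by
    refine (mul_eq_zero_iff_left h_det).1 ?_
    linear_combination (1 - 2 * θ) * h_snd + θ * (1 - θ) * h_fst
  have hs0 : s = 0 := by
    refine (mul_eq_zero_iff_left h_det).1 ?_
    linear_combination (1 - 2 * θ) * h_fst - θ * (1 - θ) * h_snd
  rcases hp with hs | ⟨k, l, hkl⟩
  · exact hs hs0
  · exact hkl (by simpa [ha0, hs0] using h_const k l)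

lemma isNonconstant_single_sub_single {i j : ι} (hij : i ≠ j) :
    IsNonconstant (Pi.single i 1 - Pi.single j 1 : ι → ℝ) :=
  ⟨i, j, by simp [hij, hij.symm]; norm_num⟩

lemma mk_suspensionPath_trans_eq_of_swap {h : C(Z, ι → ℝ)} (hh : ∀ z, IsNonconstant (h z))
    {i j : ι} (hij : i ≠ j) {h' : C(Z, ι → ℝ)} (hh' : ∀ z, IsNonconstant (h' z))
    (h_swap : ∀ z, h' z = h z ∘ Equiv.swap i j) :
    (Homotopic.Quotient.mk (suspensionPath h hh)).trans (Homotopic.Quotient.mk (suspensionPath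
        (.const Z (Pi.single i 1 - Pi.single j 1))
        fun _ => isNonconstant_single_sub_single hij).symm) =
      (Homotopic.Quotient.mk (suspensionPath (.const Z (Pi.single j 1 - Pi.single i 1))
        fun _ => isNonconstant_single_sub_single hij.symm)).trans
        (Homotopic.Quotient.mk (suspensionPath h' hh').symm) := by
  refine mk_trans_mk_eq_of_square (curryInto (O := lineCompl ι)
      (fun (p : I × I) z => swapRotation i j p.1 (suspensionPoint (h z) p.2))
      (by simp only [swapRotation, suspensionPoint, Pi.smul_apply]; fun_prop) fun p z =>
        swapRotation_mem_lineCompl hij _ (suspensionPoint_mem_lineCompl (hh z) _))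
    (fun t => ?_) (fun t => ?_) (fun t => ?_) (fun t => ?_)
  all_goals
    ext1 z
    refine Subtype.ext ?_
  · simp [coe_suspensionPath_apply]
  · rw [coe_curryInto_apply, Set.Icc.coe_one, suspensionPoint_one, swapRotation_southPole]
    rfl
  · rw [coe_curryInto_apply, Set.Icc.coe_zero, suspensionPoint_zero, swapRotation_northPole]
    rfl
  · simp only [Path.symm_apply, Function.comp_apply, coe_suspensionPath_apply, coe_curryInto_apply,
      Set.Icc.coe_one, swapRotation_one hij, h_swap, suspensionPoint, unitInterval.coe_symm_eq]
    refine Prod.ext (funext fun k => ?_) ?_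
    · simp only [Pi.smul_apply, Function.comp_apply, smul_eq_mul]
      ring
    · ring

end Rotation
end SuspensionPath

section LoopClass

open scoped unitInterval
open Path

variable {Z Z' : Type*} [TopologicalSpace Z] [TopologicalSpace Z'] {n : ℕ}

lemma isNonconstant_single (i : Fin (n + 2)) : IsNonconstant (Pi.single i 1 : Fin (n + 2) → ℝ) := by
  obtain ⟨j, hj⟩ := exists_ne i
  exact ⟨i, j, by simp [hj]⟩

/-- The homotopy class of the suspension path in the constant direction `e i`. -/
noncomputable def baseClass (Z : Type*) [TopologicalSpace Z] (i : Fin (n + 2)) :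
    Homotopic.Quotient (ContinuousMap.const Z (northPole (Fin (n + 2))))
      (ContinuousMap.const Z (southPole (Fin (n + 2)))) :=
  .mk (suspensionPath (.const Z (Pi.single i 1)) fun _ => isNonconstant_single i)

open Classical in
/-- The loop at the north pole that follows the suspension of `h` and returns in the constant
direction `e 0`. The product of these loops plays the role of the addition of maps to a sphere.
The junk value is `1` when `h` takes a constant vector as value. -/
noncomputable def loopClass (h : C(Z, Fin (n + 2) → ℝ)) :
    FundamentalGroup C(Z, lineCompl (Fin (n + 2))) (.const Z (northPole (Fin (n + 2)))) :=
  if hh : ∀ z, IsNonconstant (h z) then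
    .fromPath ((Homotopic.Quotient.mk (suspensionPath h hh)).trans (baseClass Z 0).symm)
  else 1

lemma loopClass_eq {h : C(Z, Fin (n + 2) → ℝ)} (hh : ∀ z, IsNonconstant (h z)) :
    loopClass h =
      .fromPath ((Homotopic.Quotient.mk (suspensionPath h hh)).trans (baseClass Z 0).symm) :=
  dif_pos hh

/- The segment towards `e k` avoids the constant vectors: along it, the coordinate `k` exceeds some
other coordinate, which stays zero. -/
lemma mk_suspensionPath_eq_baseClass {h : C(Z, Fin (n + 2) → ℝ)} (hh : ∀ z, IsNonconstant (h z))
    (k : Fin (n + 2)) (h_nonneg : ∀ z, 0 ≤ h z k) (h_zero : ∀ z, ∃ j, j ≠ k ∧ h z j = 0) :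
    Homotopic.Quotient.mk (suspensionPath h hh) = baseClass Z k := by
  refine mk_suspensionPath_eq_of_segment hh _ fun z θ hθ => ?_
  rcases hθ.1.eq_or_lt with rfl | hθ_pos
  · simpa using hh z
  obtain ⟨j, hj, hzj⟩ := h_zero z
  refine ⟨k, j, ne_of_gt ?_⟩
  have := mul_nonneg (sub_nonneg.2 hθ.2) (h_nonneg z)
  simp [hj, hzj]
  linarith

section NeZero

variable [NeZero n]

lemma exists_ne_and_ne (i j : Fin (n + 2)) : ∃ k, k ≠ i ∧ k ≠ j := by
  have : 2 < Fintype.card (Fin (n + 2)) := by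
    have := NeZero.pos n
    simp
    omega
  obtain ⟨k, hk⟩ := Finset.exists_mem_notMem_of_card_lt_card
    ((Finset.card_le_two (a := i) (b := j)).trans_lt this)
  exact ⟨k, by simpa using hk⟩

lemma baseClass_eq_baseClass (i k : Fin (n + 2)) : baseClass Z i = baseClass Z k := by
  obtain ⟨j, hji, hjk⟩ := exists_ne_and_ne i k
  refine mk_suspensionPath_eq_baseClass _ k (fun z => ?_) fun z => ⟨j, hjk, by simp [hji]⟩
  simp only [ContinuousMap.const_apply, Pi.single_apply]
  split_ifs <;> norm_num

lemma mk_suspensionPath_single_sub_single {i j : Fin (n + 2)} (hij : i ≠ j) :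
    Homotopic.Quotient.mk (suspensionPath (.const Z (Pi.single i 1 - Pi.single j 1))
      fun _ => isNonconstant_single_sub_single hij) = baseClass Z 0 := by
  obtain ⟨k, hki, hkj⟩ := exists_ne_and_ne i j
  exact (mk_suspensionPath_eq_baseClass _ i (fun z => by simp [hij])
    fun z => ⟨k, hki, by simp [hki, hkj]⟩).trans (baseClass_eq_baseClass i 0)

lemma loopClass_eq_one {h : C(Z, Fin (n + 2) → ℝ)} (hh : ∀ z, IsNonconstant (h z))
    (k : Fin (n + 2)) (h_nonneg : ∀ z, 0 ≤ h z k) (h_zero : ∀ z, ∃ j, j ≠ k ∧ h z j = 0) :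
    loopClass h = 1 := by
  rw [loopClass_eq hh, mk_suspensionPath_eq_baseClass hh k h_nonneg h_zero,
    baseClass_eq_baseClass k 0, Homotopic.Quotient.trans_symm]
  rfl

/-- The map `h` with its coordinates permuted. -/
def permCoords {ι : Type*} (h : C(Z, ι → ℝ)) (π : Equiv.Perm ι) : C(Z, ι → ℝ) where
  toFun z := h z ∘ π

lemma loopClass_permCoords_swap {h : C(Z, Fin (n + 2) → ℝ)} (hh : ∀ z, IsNonconstant (h z))
    {i j : Fin (n + 2)} (hij : i ≠ j) :
    loopClass (permCoords h (Equiv.swap i j)) = (loopClass h)⁻¹ := by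
  have hh' (z : Z) : IsNonconstant (permCoords h (Equiv.swap i j) z) := (hh z).comp_perm _
  have h_swap := mk_suspensionPath_trans_eq_of_swap hh hij hh' fun _ => rfl
  rw [Homotopic.Quotient.mk_symm, Homotopic.Quotient.mk_symm] at h_swap
  have h_base := mk_suspensionPath_single_sub_single (Z := Z) hij
  have h_base' := mk_suspensionPath_single_sub_single (Z := Z) hij.symm
  rw [h_base, h_base'] at h_swap
  rw [eq_inv_iff_mul_eq_one, loopClass_eq hh, loopClass_eq hh']
  refine FundamentalGroup.mul_def.trans ?_
  rw [h_swap, Homotopic.Quotient.trans_assoc, ← Homotopic.Quotient.trans_assoc _ _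
    (baseClass Z 0).symm, Homotopic.Quotient.symm_trans, Homotopic.Quotient.refl_trans,
    Homotopic.Quotient.trans_symm]
  rfl

lemma loopClass_permCoords {h : C(Z, Fin (n + 2) → ℝ)} (hh : ∀ z, IsNonconstant (h z))
    (π : Equiv.Perm (Fin (n + 2))) :
    loopClass (permCoords h π) = loopClass h ^ ((Equiv.Perm.sign π : ℤˣ) : ℤ) := by
  induction π using Equiv.Perm.swap_induction_on' with
  | one => simp [show permCoords h 1 = h from rfl]
  | mul_swap π i j hij ih =>
    have h_comp : permCoords h (π * Equiv.swap i j) =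
        permCoords (permCoords h π) (Equiv.swap i j) := rfl
    rw [h_comp, loopClass_permCoords_swap (fun z => (hh z).comp_perm π) hij, ih,
      Equiv.Perm.sign_mul, Equiv.Perm.sign_swap hij]
    simp

end NeZero

/-- The homomorphism between fundamental groups of mapping spaces induced by restriction. -/
noncomputable def restrictLoops {Y : Type*} [TopologicalSpace Y] (i : C(Z', Z)) (y : Y) :
    FundamentalGroup C(Z, Y) (.const Z y) →* FundamentalGroup C(Z', Y) (.const Z' y) :=
  FundamentalGroup.map (i.compRightContinuousMap Y) (.const Z y)

lemma restrictLoops_mk {Y : Type*} [TopologicalSpace Y] (i : C(Z', Z)) (y : Y)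
    (p : Path (ContinuousMap.const Z y) (ContinuousMap.const Z y)) :
    restrictLoops i y (.fromPath (.mk p)) =
      .fromPath (.mk (p.map (i.compRightContinuousMap Y).continuous)) :=
  rfl

lemma restrictLoops_loopClass (i : C(Z', Z)) {h : C(Z, Fin (n + 2) → ℝ)}
    (hh : ∀ z, IsNonconstant (h z)) :
    restrictLoops i _ (loopClass h) = loopClass (h.comp i) := by
  rw [loopClass_eq hh, loopClass_eq (h := h.comp i) fun z => hh (i z), baseClass, baseClass,
    ← Homotopic.Quotient.mk_symm, ← Homotopic.Quotient.mk_trans, restrictLoops_mk, Path.map_trans]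
  rfl

end LoopClass

/-! ### Homotopy extension -/

section HomotopyExtension

open scoped unitInterval

/- Borsuk's argument: run the homotopy `G x` up to the time `u x`, where the Urysohn function `u` is
`1` on `C` and `0` wherever the whole homotopy does not stay in `O`. -/
lemma exists_continuous_eq_one_and_mem [NormalSpace X] {T E : Type*} [TopologicalSpace T]
    [CompactSpace T] [TopologicalSpace E] {O : Set E} (hO : IsOpen O) (G : X → I → T → E)
    (hG : Continuous fun p : X × I × T => G p.1 p.2.1 p.2.2) {C : Set X} (hC : IsClosed C)
    (h_mem : ∀ x ∈ C, ∀ θ t, G x θ t ∈ O) (h_zero : ∀ x t, G x 0 t ∈ O) :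
    ∃ u : C(X, I), (∀ x ∈ C, u x = 1) ∧ ∀ x t, G x (u x) t ∈ O := by
  let U : Set X := {x | ∀ q : I × T, G x q.1 q.2 ∈ O}
  have hU : IsOpen U := by
    refine isOpen_iff_mem_nhds.2 fun x hx => ?_
    obtain ⟨u, v, hu, -, hxu, hv, huv⟩ := generalized_tube_lemma (s := {x}) isCompact_singleton
      (isCompact_univ (X := I × T)) (hO.preimage hG) (by rintro ⟨y, q⟩ ⟨rfl, -⟩; exact hx q)
    exact Filter.mem_of_superset (hu.mem_nhds (hxu rfl)) fun y hy q => @huv (y, q) ⟨hy, hv trivial⟩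
  obtain ⟨f, hf_zero, hf_one, hf⟩ := exists_continuous_zero_one_of_isClosed hU.isClosed_compl hC
    (Set.disjoint_left.2 fun x hx hxC => hx fun q => h_mem x hxC _ _)
  refine ⟨⟨fun x => ⟨f x, hf x⟩, by fun_prop⟩, fun x hx => Subtype.ext (hf_one hx), fun x t => ?_⟩
  by_cases hx : x ∈ U
  · exact hx (_, t)
  · rw [show (⟨fun x => ⟨f x, hf x⟩, by fun_prop⟩ : C(X, I)) x = 0 from Subtype.ext (hf_zero hx)]
    exact h_zero x t

universe u v

variable {B : Type u} [TopologicalSpace B] [CompactSpace B] [T2Space B]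
  {E : Type v} [AddCommGroup E] [TopologicalSpace E] [IsTopologicalAddGroup E]
  [TietzeExtension.{u} E] {O : Set E}

lemma exists_extend_mem_of_homotopy (hO : IsOpen O) {C : Set B} (hC : IsClosed C) (ψ : C(B, E))
    (hψ : ∀ x, ψ x ∈ O) (H : C(C × I, E)) (hH : ∀ p, H p ∈ O) (hH_zero : ∀ c : C, H (c, 0) = ψ c) :
    ∃ ψ' : C(B, E), (∀ x, ψ' x ∈ O) ∧ ∀ c : C, ψ' c = H (c, 1) := by
  obtain ⟨L, hL⟩ := ContinuousMap.exists_extension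
    (hC.isClosedEmbedding_subtypeVal.prodMap (Topology.IsClosedEmbedding.id (X := I))) H
  have hL_apply (c : C) (θ : I) : L (c, θ) = H (c, θ) := DFunLike.congr_fun hL (c, θ)
  have h_sub (c : C) (θ : I) : ψ c + L (c, θ) - L (c, 0) = H (c, θ) := by
    rw [hL_apply, hL_apply, hH_zero, add_sub_cancel_left]
  obtain ⟨u, hu_one, hu⟩ := exists_continuous_eq_one_and_mem (T := Unit) hO
    (fun x θ _ => ψ x + L (x, θ) - L (x, 0)) (by fun_prop) hC
    (fun x hx θ _ => by rw [h_sub ⟨x, hx⟩]; exact hH _) (fun x _ => by simpa using hψ x)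
  refine ⟨⟨fun x => ψ x + L (x, u x) - L (x, 0), by fun_prop⟩, fun x => hu x (), fun c => ?_⟩
  rw [ContinuousMap.coe_mk, h_sub, hu_one c c.2]

variable [Module ℝ E] [ContinuousSMul ℝ E]

lemma exists_extend_mem_of_segment (hO : IsOpen O) {C : Set B} (hC : IsClosed C) (ψ : C(B, E))
    (hψ : ∀ x, ψ x ∈ O) (φ : C(C, E))
    (h_seg : ∀ c : C, ∀ θ ∈ I, (1 - θ) • ψ c + θ • φ c ∈ O) :
    ∃ ψ' : C(B, E), (∀ x, ψ' x ∈ O) ∧ ∀ c : C, ψ' c = φ c := by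
  obtain ⟨ψ', hψ', h_eq⟩ := exists_extend_mem_of_homotopy hO hC ψ hψ
    ⟨fun p => (1 - (p.2 : ℝ)) • ψ p.1 + (p.2 : ℝ) • φ p.1, by fun_prop⟩
    (fun p => h_seg p.1 p.2 p.2.2) (by simp)
  exact ⟨ψ', hψ', fun c => by simp [h_eq]⟩

variable {Z : Type*} [TopologicalSpace Z] {i : C(Z, B)}

lemma exists_extend_vanishing (hi : Topology.IsClosedEmbedding i) (L : C(Z × I × I, E))
    (h_zero : ∀ z t, L (z, 0, t) = 0) (h_source : ∀ z θ, L (z, θ, 0) = 0)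
    (h_target : ∀ z θ, L (z, θ, 1) = 0) :
    ∃ L' : C(B × I × I, E), (∀ z q, L' (i z, q) = L (z, q)) ∧ (∀ x t, L' (x, 0, t) = 0) ∧
      (∀ x θ, L' (x, θ, 0) = 0) ∧ ∀ x θ, L' (x, θ, 1) = 0 := by
  obtain ⟨M, hM⟩ := ContinuousMap.exists_extension
    (hi.prodMap (Topology.IsClosedEmbedding.id (X := I × I))) L
  have hM_apply (z : Z) (q : I × I) : M (i z, q) = L (z, q) := DFunLike.congr_fun hM (z, q)
  let N : C(B × I × I, E) := ⟨fun p => M p - M (p.1, 0, p.2.2), by fun_prop⟩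
  refine ⟨⟨fun p => N p - (1 - (p.2.2 : ℝ)) • N (p.1, p.2.1, 0) - (p.2.2 : ℝ) • N (p.1, p.2.1, 1),
    by fun_prop⟩, fun z q => ?_, fun x t => ?_, fun x θ => ?_, fun x θ => ?_⟩
  · simp [N, hM_apply, h_zero, h_source, h_target]
  all_goals simp [N]

lemma exists_path_extend {p q : O} (hO : IsOpen O) (hi : Topology.IsClosedEmbedding i)
    (F₀ : Path (ContinuousMap.const B p) (ContinuousMap.const B q))
    (Φ : Path (ContinuousMap.const Z p) (ContinuousMap.const Z q))
    (h_hom : Path.Homotopic (x₀ := ContinuousMap.const Z p) (x₁ := ContinuousMap.const Z q)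
      (F₀.map (i.compRightContinuousMap O).continuous) Φ) :
    ∃ F : Path (ContinuousMap.const B p) (ContinuousMap.const B q),
      ∀ t z, F t (i z) = Φ t z := by
  obtain ⟨H⟩ := h_hom
  have := hi.locallyCompactSpace
  have hF₀_cont : Continuous fun p : B × I => (F₀ p.2 p.1 : E) :=
    continuous_subtype_val.comp (by fun_prop)
  obtain ⟨L, hL, hL_zero, hL_source, hL_target⟩ := exists_extend_vanishing hi
    ⟨fun p => (H p.2 p.1 : E) - F₀ p.2.2 (i p.1),
      (continuous_subtype_val.comp (by fun_prop)).sub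
        (hF₀_cont.comp (f := fun p : Z × I × I => (i p.1, p.2.2)) (by fun_prop))⟩
    (fun z t => by rw [ContinuousMap.coe_mk, H.apply_zero]; exact sub_self _)
    (fun z θ => by rw [ContinuousMap.coe_mk, H.source, F₀.source]; exact sub_self _)
    (fun z θ => by rw [ContinuousMap.coe_mk, H.target, F₀.target]; exact sub_self _)
  have h_add (z : Z) (θ t : I) : (F₀ t (i z) : E) + L (i z, θ, t) = H (θ, t) z := by simp [hL]
  obtain ⟨u, hu_one, hu⟩ := exists_continuous_eq_one_and_mem hO
    (fun x θ t => (F₀ t x : E) + L (x, θ, t))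
    ((hF₀_cont.comp (f := fun p : B × I × I => (p.1, p.2.2)) (by fun_prop)).add (by fun_prop))
    hi.isClosed_range (by rintro _ ⟨z, rfl⟩ θ t; rw [h_add]; exact Subtype.prop _)
    (fun x t => by rw [hL_zero, add_zero]; exact Subtype.prop _)
  refine ⟨⟨curryInto (fun t x => (F₀ t x : E) + L (x, u x, t))
    ((hF₀_cont.comp (f := fun p : I × B => (p.2, p.1)) (by fun_prop)).add (by fun_prop))
    fun t x => hu x t, ?_, ?_⟩, fun t z => Subtype.ext ?_⟩
  · ext1 x
    exact Subtype.ext (by simp [hL_source])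
  · ext1 x
    exact Subtype.ext (by simp [hL_target])
  · refine (h_add z _ t).trans ?_
    rw [hu_one _ ⟨z, rfl⟩, H.apply_one]
    rfl

end HomotopyExtension

/-! ### Smooth approximation and general position -/

section GeneralPosition

open scoped unitInterval Topology

/-- The set of indices whose functions in the finite family `t` do not vanish at `x`: if `t` is a
partition of unity, the vertices of the smallest face containing the point with barycentric
coordinates `t · x`. -/
noncomputable def carrier {V : Type*} [Fintype V] (t : V → C(X, ℝ)) (x : X) : Finset V :=
  Finset.univ.filter (t · x ≠ 0)

@[simp]
lemma mem_carrier {V : Type*} [Fintype V] {t : V → C(X, ℝ)} {x : X} {v : V} :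
    v ∈ carrier t x ↔ t v x ≠ 0 := by
  simp [carrier]

/-- A finite partition of unity, that is, a continuous map to the simplex with vertices `V` in
barycentric coordinates. -/
structure IsPartitionOfUnity {V : Type*} [Fintype V] (t : V → C(X, ℝ)) : Prop where
  nonneg : ∀ v x, 0 ≤ t v x
  sum_eq_one : ∀ x, ∑ v, t v x = 1

/-- The metric space `B` has arbitrarily fine finite partitions of unity with nerve of dimension at
most `n`; `p v` is a centre of the small ball containing the support of `t v`. -/
def HasFinePartitions (B : Type*) [MetricSpace B] (n : ℕ) : Prop :=
  ∀ δ : ℝ, 0 < δ → ∃ (M : ℕ) (t : Fin M → C(B, ℝ)) (p : Fin M → B), IsPartitionOfUnity t ∧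
    (∀ v x, t v x ≠ 0 → dist (p v) x < δ) ∧ ∀ x, (carrier t x).card ≤ n + 1

lemma exists_fin_sum_ite_eq {V : Type*} [Fintype V] [DecidableEq V] {n : ℕ} {a : V → ℝ}
    (h_ne : ∃ v, a v ≠ 0) (h_card : (Finset.univ.filter (a · ≠ 0)).card ≤ n) :
    ∃ (ν : Fin n → V) (b : Fin n → ℝ), ∀ v, ∑ j, (if ν j = v then b j else 0) = a v := by
  have : Nonempty {v // a v ≠ 0} := nonempty_subtype.2 h_ne
  obtain ⟨f⟩ : Nonempty ({v // a v ≠ 0} ↪ Fin n) :=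
    Function.Embedding.nonempty_of_card_le (by simpa [Fintype.card_subtype] using h_card)
  have h_inv := Function.leftInverse_invFun f.injective
  classical
  refine ⟨fun j => (Function.invFun f j).1, fun j => if j ∈ range f then a (Function.invFun f j).1
    else 0, fun v => ?_⟩
  by_cases hv : a v = 0
  · rw [hv]
    refine Finset.sum_eq_zero fun j _ => if_neg ?_
    rintro rfl
    exact (Function.invFun f j).2 hv
  · rw [Finset.sum_eq_single (f ⟨v, hv⟩)]
    · simp [h_inv _]
    · intro j _ hj
      by_cases h_range : j ∈ range f
      · obtain ⟨v', rfl⟩ := h_range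
        refine if_neg fun h => hj ?_
        exact congrArg f (Subtype.ext ((congrArg Subtype.val (h_inv v')).symm.trans h))
      · simp [h_range]
    · simp

lemma exists_fin_sum_smul_eq {V : Type*} [Fintype V] {n : ℕ} {a : V → ℝ} (ha : ∑ v, a v = 1)
    (h_card : (Finset.univ.filter (a · ≠ 0)).card ≤ n + 1) {E : Type*} [AddCommGroup E]
    [Module ℝ E] :
    ∃ (ν : Fin (n + 1) → V) (u : Fin n → ℝ), ∀ g : V → E,
      ∑ v, a v • g v = (1 - ∑ j, u j) • g (ν 0) + ∑ j, u j • g (ν j.succ) := by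
  classical
  have h_ne : ∃ v, a v ≠ 0 := by
    by_contra! h
    simp [h] at ha
  obtain ⟨ν, b, hb⟩ := exists_fin_sum_ite_eq h_ne h_card
  have h_sum : ∑ j, b j = 1 := by
    rw [← ha, Finset.sum_congr rfl fun v _ => (hb v).symm, Finset.sum_comm]
    simp
  refine ⟨ν, fun j => b j.succ, fun g => ?_⟩
  rw [Fin.sum_univ_succ] at h_sum
  rw [← h_sum, add_sub_cancel_right, ← Fin.sum_univ_succ fun j => b j • g (ν j)]
  simp_rw [← hb, Finset.sum_smul]
  rw [Finset.sum_comm]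
  simp

lemma dimH_image_le_of_contDiffAt {E F : Type*} [NormedAddCommGroup E] [NormedSpace ℝ E]
    [FiniteDimensional ℝ E] [NormedAddCommGroup F] [NormedSpace ℝ F] {f : E → F} {s : Set E}
    (hf : ∀ x ∈ s, ContDiffAt ℝ 1 f x) : dimH (f '' s) ≤ Module.finrank ℝ E := by
  rw [← Real.dimH_univ_eq_finrank E]
  refine (dimH_image_le_of_locally_lipschitzOn fun x hx => ?_).trans (dimH_mono (subset_univ s))
  obtain ⟨C, t, ht, h_lip⟩ := (hf x hx).exists_lipschitzOnWith
  exact ⟨C, t, mem_nhdsWithin_of_mem_nhds ht, h_lip⟩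

variable {E : Type*} [NormedAddCommGroup E] [NormedSpace ℝ E]

/- The pairs of directions to be avoided are the images of finitely many `C¹` maps of `n + 2` real
variables: the barycentric coordinates in an `n`-simplex and the two times. -/
lemma exists_directions_avoid [FiniteDimensional ℝ E] {V : Type*} [Finite V] {n : ℕ}
    (hn : n + 2 < 2 * Module.finrank ℝ E) (Q : V → ℝ → E × ℝ) (hQ : ∀ v, ContDiff ℝ 1 (Q v)) :
    ∃ w w' : E, ‖w‖ ≤ 1 ∧ ‖w'‖ ≤ 1 ∧ ∀ (ν : Fin (n + 1) → V) (u : Fin n → ℝ) (s s' r r' : ℝ),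
      0 < r → 0 < r' →
      (1 - ∑ j, u j) • Q (ν 0) s + ∑ j, u j • Q (ν j.succ) s = r • (w, 1) →
      (1 - ∑ j, u j) • Q (ν 0) s' + ∑ j, u j • Q (ν j.succ) s' ≠ r' • (w', -1) := by
  let P (ν : Fin (n + 1) → V) (p : (Fin n → ℝ) × ℝ) : E × ℝ :=
    (1 - ∑ j, p.1 j) • Q (ν 0) p.2 + ∑ j, p.1 j • Q (ν j.succ) p.2
  have hP (ν) : ContDiff ℝ 1 (P ν) := by
    have hQ_comp (v) : ContDiff ℝ 1 fun p : (Fin n → ℝ) × ℝ => Q v p.2 := (hQ v).comp contDiff_snd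
    have h_coord (j : Fin n) : ContDiff ℝ 1 fun p : (Fin n → ℝ) × ℝ => p.1 j := by fun_prop
    exact ((contDiff_const.sub (ContDiff.sum fun j _ => h_coord j)).smul (hQ_comp _)).add
      (ContDiff.sum fun j _ => (h_coord j).smul (hQ_comp _))
  let f (ν : Fin (n + 1) → V) (p : ((Fin n → ℝ) × ℝ) × ℝ) : E × E :=
    ((P ν p.1).2⁻¹ • (P ν p.1).1, (-(P ν (p.1.1, p.2)).2)⁻¹ • (P ν (p.1.1, p.2)).1)
  let s (ν : Fin (n + 1) → V) : Set (((Fin n → ℝ) × ℝ) × ℝ) :=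
    {p | (P ν p.1).2 ≠ 0 ∧ -(P ν (p.1.1, p.2)).2 ≠ 0}
  have hf (ν) (p) (hp : p ∈ s ν) : ContDiffAt ℝ 1 (f ν) p := by
    have h_fst : ContDiffAt ℝ 1 (fun p : ((Fin n → ℝ) × ℝ) × ℝ => P ν p.1) p :=
      ((hP ν).comp contDiff_fst).contDiffAt
    have h_snd : ContDiffAt ℝ 1 (fun p : ((Fin n → ℝ) × ℝ) × ℝ => P ν (p.1.1, p.2)) p :=
      ((hP ν).comp (by fun_prop)).contDiffAt
    exact ((h_fst.snd.inv hp.1).smul h_fst.fst).prodMk ((h_snd.snd.neg.inv hp.2).smul h_snd.fst)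
  have h_dim : dimH (⋃ ν, f ν '' s ν) < Module.finrank ℝ (E × E) := by
    rw [dimH_iUnion]
    refine (iSup_le fun ν => dimH_image_le_of_contDiffAt (hf ν)).trans_lt ?_
    rw [Module.finrank_prod, Module.finrank_prod, Module.finrank_prod, Module.finrank_fin_fun,
      Module.finrank_self]
    exact_mod_cast by lia
  obtain ⟨⟨w, w'⟩, h_avoid, h_ball⟩ := (dense_compl_of_dimH_lt_finrank h_dim).exists_mem_open
    (Metric.isOpen_ball (x := 0) (ε := 1)) ⟨0, by simp⟩
  have h_norm : ‖w‖ < 1 ∧ ‖w'‖ < 1 := by simpa [Prod.norm_def] using h_ball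
  refine ⟨w, w', h_norm.1.le, h_norm.2.le, fun ν u t t' r r' hr hr' h h' => h_avoid ?_⟩
  replace h : P ν (u, t) = r • (w, 1) := h
  replace h' : P ν (u, t') = r' • (w', -1) := h'
  refine mem_iUnion.2 ⟨ν, ((u, t), t'), ⟨by simp [h, hr.ne'], by simp [h', hr'.ne']⟩, ?_⟩
  simp [f, h, h', smul_smul, hr.ne', hr'.ne']

lemma exists_contDiff_near (f : C(I, E)) {η : ℝ} (hη : 0 < η) :
    ∃ Q : ℝ → E, ContDiff ℝ 1 Q ∧ Q 0 = f 0 ∧ Q 1 = f 1 ∧ ∀ s : I, ‖Q s - f s‖ ≤ η := by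
  obtain ⟨n, h_near, hn⟩ := ((Metric.tendsto_nhds.1 (bernsteinApproximation_uniform f) η hη).and
    (eventually_ge_atTop 1)).exists
  let Q (s : ℝ) : E := ∑ k : Fin (n + 1),
    ((n.choose k : ℝ) * s ^ (k : ℕ) * (1 - s) ^ (n - k)) • f (bernstein.z k)
  have hQ (s : I) : Q s = bernsteinApproximation n f s := by
    simp only [Q, bernsteinApproximation.apply, bernstein_apply]
  refine ⟨Q, ContDiff.sum fun k _ => ContDiff.smul (by fun_prop) contDiff_const, ?_, ?_,
    fun s => ?_⟩
  · exact (hQ 0).trans (bernsteinApproximation.apply_zero n f)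
  · exact (hQ 1).trans (bernsteinApproximation.apply_one (by lia) f)
  · rw [hQ, ← dist_eq_norm]
    exact (ContinuousMap.dist_apply_le_dist s).trans h_near.le

lemma IsPartitionOfUnity.norm_sum_smul_sub_le {V : Type*} [Fintype V] {t : V → C(X, ℝ)}
    (ht : IsPartitionOfUnity t) {x : X} {g : V → E} {e : E} {η : ℝ}
    (h : ∀ v, t v x ≠ 0 → ‖g v - e‖ ≤ η) : ‖∑ v, t v x • g v - e‖ ≤ η := by
  have h_sub : ∑ v, t v x • g v - e = ∑ v, t v x • (g v - e) := by
    simp only [smul_sub, Finset.sum_sub_distrib]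
    rw [← Finset.sum_smul, ht.sum_eq_one, one_smul]
  rw [h_sub]
  calc ‖∑ v, t v x • (g v - e)‖ ≤ ∑ v, ‖t v x • (g v - e)‖ := norm_sum_le _ _
    _ ≤ ∑ v, t v x * η := Finset.sum_le_sum fun v _ => by
        rw [norm_smul, Real.norm_of_nonneg (ht.nonneg v x)]
        by_cases hv : t v x = 0
        · simp [hv]
        · exact mul_le_mul_of_nonneg_left (h v hv) (ht.nonneg v x)
    _ = η := by rw [← Finset.sum_mul, ht.sum_eq_one, one_mul]

lemma HasFinePartitions.exists_sum_smul_near {B : Type*} [MetricSpace B] [CompactSpace B] {n : ℕ}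
    (hB : HasFinePartitions B n) (F : C(B × I, E)) {e₀ e₁ : E} (h_zero : ∀ x, F (x, 0) = e₀)
    (h_one : ∀ x, F (x, 1) = e₁) {η : ℝ} (hη : 0 < η) :
    ∃ (M : ℕ) (t : Fin M → C(B, ℝ)) (Q : Fin M → ℝ → E), IsPartitionOfUnity t ∧
      (∀ x, (carrier t x).card ≤ n + 1) ∧ (∀ v, ContDiff ℝ 1 (Q v) ∧ Q v 0 = e₀ ∧ Q v 1 = e₁) ∧
      ∀ x (s : I), ‖∑ v, t v x • Q v s - F (x, s)‖ ≤ η := by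
  obtain ⟨δ, hδ, h_unif⟩ := Metric.uniformContinuous_iff.1
    (CompactSpace.uniformContinuous_of_continuous F.continuous) (η / 2) (by positivity)
  obtain ⟨M, t, p, ht, hp, h_card⟩ := hB δ hδ
  choose Q hQ hQ_zero hQ_one hQF using fun v =>
    exists_contDiff_near (F.comp ⟨fun s => (p v, s), by fun_prop⟩) (half_pos hη)
  replace hQF (v) (s : I) : ‖Q v s - F (p v, s)‖ ≤ η / 2 := hQF v s
  refine ⟨M, t, Q, ht, h_card,
    fun v => ⟨hQ v, (hQ_zero v).trans (h_zero _), (hQ_one v).trans (h_one _)⟩,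
    fun x s => ht.norm_sum_smul_sub_le fun v hv => ?_⟩
  have h_dist : ‖F (p v, s) - F (x, s)‖ < η / 2 := by
    rw [← dist_eq_norm]
    exact h_unif (by simpa [Prod.dist_eq] using hp v x hv)
  linarith [norm_sub_le_norm_sub_add_norm_sub (Q v s) (F (p v, s)) (F (x, s)), hQF v s]

end GeneralPosition

/-! ### Desuspension -/

section Desuspension

open scoped unitInterval Topology

variable {E : Type*} [NormedAddCommGroup E] [NormedSpace ℝ E]

/-- `p` lies on the open ray of `E × ℝ` through `(w, e)`. -/
def OnRay (w : E) (e : ℝ) (p : E × ℝ) : Prop :=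
  ∃ r : ℝ, 0 < r ∧ p = r • (w, e)

/-- The projection of `E × ℝ` to `E` along `(w, 1)` in the upper half space and along `(w', -1)` in
the lower one; it is nonzero away from these two closed rays. -/
def rayProjection (w w' : E) (p : E × ℝ) : E :=
  p.1 - max p.2 0 • w - max (-p.2) 0 • w'

@[fun_prop]
lemma continuous_rayProjection (w w' : E) : Continuous (rayProjection w w') := by
  unfold rayProjection
  fun_prop

lemma rayProjection_ne_zero {w w' : E} {p : E × ℝ} (hp : p ≠ 0) (hw : ¬ OnRay w 1 p)
    (hw' : ¬ OnRay w' (-1) p) : rayProjection w w' p ≠ 0 := by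
  obtain ⟨y, s⟩ := p
  intro h
  simp only [rayProjection] at h
  rcases lt_trichotomy s 0 with hs | rfl | hs
  · rw [max_eq_right hs.le, max_eq_left (by linarith), zero_smul, sub_zero, sub_eq_zero] at h
    exact hw' ⟨-s, by linarith, by simp [h]⟩
  · exact hp (by simpa using h)
  · rw [max_eq_left hs.le, max_eq_right (by linarith), zero_smul, sub_zero, sub_eq_zero] at h
    exact hw ⟨s, hs, by simp [h]⟩

lemma norm_rayProjection_sub_fst_le {w w' : E} (hw : ‖w‖ ≤ 1) (hw' : ‖w'‖ ≤ 1) (p : E × ℝ) :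
    ‖rayProjection w w' p - p.1‖ ≤ ‖p.2‖ := by
  rw [rayProjection, sub_sub p.1, sub_sub_cancel_left, norm_neg]
  rcases le_total 0 p.2 with hs | hs
  · rw [max_eq_left hs, max_eq_right (by linarith), zero_smul, add_zero, norm_smul]
    exact mul_le_of_le_one_right (abs_nonneg _) hw
  · rw [max_eq_right hs, max_eq_left (by linarith), zero_smul, zero_add, norm_smul, norm_neg]
    exact mul_le_of_le_one_right (abs_nonneg _) hw'

lemma norm_rayProjection_sub_le {w w' : E} (hw : ‖w‖ ≤ 1) (hw' : ‖w'‖ ≤ 1) {p : E × ℝ} {y : E}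
    {η : ℝ} (h_near : ‖p - (y, 0)‖ ≤ η) : ‖rayProjection w w' p - y‖ ≤ 2 * η := by
  have h_fst : ‖p.1 - y‖ ≤ η := (norm_fst_le _).trans h_near
  have h_snd : ‖p.2 - 0‖ ≤ η := (norm_snd_le _).trans h_near
  rw [sub_zero] at h_snd
  linarith [norm_rayProjection_sub_fst_le hw hw' p,
    norm_sub_le_norm_sub_add_norm_sub (rayProjection w w' p) p.1 y]

lemma isOpen_ne_zero_and_not_onRay (w : E) {e : ℝ} (he : e ≠ 0) :
    IsOpen {p : E × ℝ | p ≠ 0 ∧ ¬ OnRay w e p} := by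
  have h_closed : IsClosed ({p : E × ℝ | p.1 = (p.2 / e) • w} ∩ {p | 0 ≤ p.2 / e}) :=
    (isClosed_eq (by fun_prop) (by fun_prop)).inter (isClosed_le (by fun_prop) (by fun_prop))
  convert h_closed.isOpen_compl using 1
  ext p
  rw [Set.mem_ofPred, ← not_or, mem_compl_iff, not_iff_not]
  constructor
  · rintro (rfl | ⟨r, hr, rfl⟩)
    · simp
    · simp [he, hr.le]
  · rintro ⟨h_fst, h_nonneg⟩
    have h_snd : p.2 = p.2 / e * e := (div_mul_cancel₀ _ he).symm
    rcases eq_or_lt_of_le (show 0 ≤ p.2 / e from h_nonneg) with h_eq | h_pos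
    · rw [← h_eq, zero_mul] at h_snd
      refine Or.inl (Prod.ext (h_fst.trans ?_) h_snd)
      rw [← h_eq, zero_smul, Prod.fst_zero]
    · exact Or.inr ⟨_, h_pos, Prod.ext h_fst h_snd⟩

lemma not_onRay_of_norm_sub_le {u : E} {e η : ℝ} (hu : ‖u‖ ≤ 1) (he : |e| = 1) {p q : E × ℝ}
    (h_near : ‖p - q‖ ≤ η) (hp : η < ‖p‖) (hq : q.2 * e ≤ 0) : ¬ OnRay u e p := by
  rintro ⟨r, hr, rfl⟩
  have h_snd : |r * e - q.2| ≤ η := (norm_snd_le _).trans h_near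
  have h_mul : r - q.2 * e ≤ |r * e - q.2| := by
    have he_sq : e * e = 1 := by rw [← abs_mul_abs_self, he, one_mul]
    calc r - q.2 * e = (r * e - q.2) * e := by linear_combination (-r) * he_sq
      _ ≤ |(r * e - q.2) * e| := le_abs_self _
      _ = |r * e - q.2| := by rw [abs_mul, he, mul_one]
  have h_norm : ‖r • (u, e)‖ ≤ r := by
    rw [norm_smul, Real.norm_of_nonneg hr.le]
    exact mul_le_of_le_one_right hr.le (by simp [Prod.norm_def, hu, he])
  linarith

lemma segment_ne_zero_of_norm_sub_lt {a b : E} {k : ℝ} (hk : 0 < k)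
    (h : ‖a - k • b‖ < ‖k • b‖) {θ : ℝ} (hθ : θ ∈ I) : (1 - θ) • a + θ • b ≠ 0 := by
  intro h_zero
  have h_eq : (1 - θ) • (a - k • b) = -((1 - θ + θ / k) • (k • b)) := by
    rw [smul_sub, eq_neg_of_add_eq_zero_left h_zero, smul_smul (1 - θ + θ / k), add_mul,
      div_mul_cancel₀ _ hk.ne']
    module
  have hθ' : 0 ≤ 1 - θ := by linarith [hθ.2]
  have h_div : 0 ≤ θ / k := div_nonneg hθ.1 hk.le
  replace h_eq := congrArg norm h_eq
  rw [norm_neg, norm_smul, norm_smul (1 - θ + θ / k), Real.norm_of_nonneg hθ',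
    Real.norm_of_nonneg (by linarith)] at h_eq
  rcases hθ'.eq_or_lt with h_one | h_lt
  · have hθ_one : θ = 1 := by linarith
    have : 0 < θ / k := by rw [hθ_one]; positivity
    nlinarith [norm_nonneg (a - k • b)]
  · nlinarith [norm_nonneg (k • b)]

/-- The times in `I` after which `G (x, ·)` avoids the ray through `(w, 1)` and before which it
avoids the ray through `(w', -1)`. -/
def separatingTimes {B : Type*} (w w' : E) (G : B × I → E × ℝ) (x : B) : Set ℝ :=
  {l | l ∈ I ∧ ∀ s : I, (l ≤ s → ¬ OnRay w 1 (G (x, s))) ∧ (s ≤ l → ¬ OnRay w' (-1) (G (x, s)))}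

lemma convex_separatingTimes {B : Type*} (w w' : E) (G : B × I → E × ℝ) (x : B) :
    Convex ℝ (separatingTimes w w' G x) :=
  Set.OrdConnected.convex ⟨fun _ ha _ hb _ hc => ⟨⟨ha.1.1.trans hc.1, hc.2.trans hb.1.2⟩,
    fun s => ⟨fun hs => (ha.2 s).1 (hc.1.trans hs), fun hs => (hb.2 s).2 (hs.trans hc.2)⟩⟩⟩

section Avoid

variable {G : C(X × I, E × ℝ)} {w w' : E}

lemma rayProjection_ne_zero_of_mem_separatingTimes (hG : ∀ p, G p ≠ 0) {x : X} {s : I}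
    (hs : (s : ℝ) ∈ separatingTimes w w' G x) : rayProjection w w' (G (x, s)) ≠ 0 :=
  rayProjection_ne_zero (hG _) ((hs.2 s).1 le_rfl) ((hs.2 s).2 le_rfl)

lemma eventually_forall_not_onRay (hG : ∀ p, G p ≠ 0) {e : ℝ} (he : e ≠ 0) {x : X}
    (h : ∀ s, ¬ OnRay w e (G (x, s))) : ∀ᶠ y in 𝓝 x, ∀ s, ¬ OnRay w e (G (y, s)) := by
  have h_nhds := isCompact_univ.eventually_forall_of_forall_eventually (x₀ := x)
    (P := fun y s => ¬ OnRay w e (G (y, s))) fun s _ =>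
      (G.continuous.tendsto _).eventually (((isOpen_ne_zero_and_not_onRay w he).eventually_mem
        ⟨hG (x, s), h s⟩).mono fun _ hz => hz.2)
  exact h_nhds.mono fun y hy s => hy s (mem_univ s)

lemma exists_eventually_mem_separatingTimes (hG : ∀ p, G p ≠ 0) (h_zero : ∀ x, G (x, 0) = (0, 1))
    (h_one : ∀ x, G (x, 1) = (0, -1)) {x : X}
    (h_avoid : ∀ s s', OnRay w 1 (G (x, s)) → ¬ OnRay w' (-1) (G (x, s'))) :
    ∃ l, ∀ᶠ y in 𝓝 x, l ∈ separatingTimes w w' G y := by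
  by_cases hx : ∀ s, ¬ OnRay w 1 (G (x, s))
  · refine ⟨0, ?_⟩
    filter_upwards [eventually_forall_not_onRay hG one_ne_zero hx] with y hy
    refine ⟨by simp, fun s => ⟨fun _ => hy s, ?_⟩⟩
    rintro hs ⟨r, hr, h_eq⟩
    rw [show s = 0 from Subtype.ext (le_antisymm hs s.2.1), h_zero, Prod.ext_iff] at h_eq
    have : (1 : ℝ) = r * -1 := h_eq.2
    linarith
  · push Not at hx
    obtain ⟨s, hs⟩ := hx
    refine ⟨1, ?_⟩
    filter_upwards [eventually_forall_not_onRay hG (by norm_num) fun s' => h_avoid s s' hs]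
      with y hy
    refine ⟨by simp, fun s => ⟨?_, fun _ => hy s⟩⟩
    rintro hs ⟨r, hr, h_eq⟩
    rw [show s = 1 from Subtype.ext (le_antisymm s.2.2 hs), h_one, Prod.ext_iff] at h_eq
    have : (-1 : ℝ) = r * 1 := h_eq.2
    linarith

lemma half_mem_separatingTimes (hw : ‖w‖ ≤ 1) (hw' : ‖w'‖ ≤ 1) {F : X × I → E × ℝ} {η : ℝ} {x : X}
    (h_near : ∀ s, ‖G (x, s) - F (x, s)‖ ≤ η) (h_lt : ∀ s, η < ‖G (x, s)‖)
    (hF : ∀ s, (F (x, s)).2 = 1 - 2 * (s : ℝ)) : (1 / 2 : ℝ) ∈ separatingTimes w w' G x := by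
  refine ⟨⟨by norm_num, by norm_num⟩, fun s => ⟨fun hs => ?_, fun hs => ?_⟩⟩
  · exact not_onRay_of_norm_sub_le hw (by simp) (h_near s) (h_lt s) (by rw [hF]; linarith)
  · exact not_onRay_of_norm_sub_le hw' (by simp) (h_near s) (h_lt s) (by rw [hF]; linarith)

end Avoid

/-- The midpoint of the unit interval. -/
noncomputable def midpointI : I := ⟨1 / 2, by norm_num, by norm_num⟩

lemma exists_extend_rayProjection_midpoint [FiniteDimensional ℝ E] {B : Type*}
    [TopologicalSpace B] [CompactSpace B] [T2Space B] {G : C(B × I, E × ℝ)} {w w' : E}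
    (hG : ∀ p, G p ≠ 0)
    (h_local : ∀ x, ∃ l, ∀ᶠ y in 𝓝 x, l ∈ separatingTimes w w' G y) {C : Set B} (hC : IsClosed C)
    (h_mid : ∀ x ∈ C, (1 / 2 : ℝ) ∈ separatingTimes w w' G x) :
    ∃ ψ : C(B, E), (∀ x, ψ x ≠ 0) ∧ ∀ c : C, ψ c = rayProjection w w' (G (c, midpointI)) := by
  have : TietzeExtension E := .of_tvs ℝ
  obtain ⟨l, hl⟩ := exists_continuous_forall_mem_convex_of_local_const
    (convex_separatingTimes w w' G) h_local
  let lI : C(B, I) := ⟨fun x => ⟨l x, (hl x).1⟩, by fun_prop⟩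
  have h_segment (p : C × I) :
      (1 - (p.2 : ℝ)) * l p.1 + p.2 * (1 / 2) ∈ separatingTimes w w' G p.1 :=
    convex_separatingTimes w w' G p.1 (hl p.1) (h_mid p.1 p.1.2) (by linarith [p.2.2.2]) p.2.2.1
      (by ring)
  let γ : C(C × I, I) := ⟨fun p => ⟨(1 - (p.2 : ℝ)) * l p.1 + p.2 * (1 / 2), (h_segment p).1⟩,
    by fun_prop⟩
  obtain ⟨ψ, hψ, h_eq⟩ := exists_extend_mem_of_homotopy (isOpen_compl_singleton (x := (0 : E))) hC
    ⟨fun x => rayProjection w w' (G (x, lI x)), by fun_prop⟩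
    (fun x => rayProjection_ne_zero_of_mem_separatingTimes hG (hl x))
    ⟨fun p : C × I => rayProjection w w' (G (p.1, γ p)), by fun_prop⟩
    (fun p => rayProjection_ne_zero_of_mem_separatingTimes hG (h_segment p))
    (fun c => by
      have : γ (c, 0) = lI c := Subtype.ext (by simp [γ, lI])
      simp [this])
  refine ⟨ψ, hψ, fun c => (h_eq c).trans ?_⟩
  have : γ (c, 1) = midpointI := Subtype.ext (by simp [γ, midpointI])
  simp [this]

/- A smooth approximation `G` of `F` on an `n`-dimensional complex avoids, at every point of `B`,
one of two rays in general position. On `C` these rays are met only before, respectively after, time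
`1 / 2`, so that `h` is homotopic to the restriction of a map on `B`. -/
lemma HasFinePartitions.exists_extend_ne_zero [FiniteDimensional ℝ E] {B : Type*} [MetricSpace B]
    [CompactSpace B] {n : ℕ} (hn : n + 2 < 2 * Module.finrank ℝ E) (hB : HasFinePartitions B n)
    (F : C(B × I, E × ℝ)) (hF : ∀ p, F p ≠ 0) (h_zero : ∀ x, F (x, 0) = (0, 1))
    (h_one : ∀ x, F (x, 1) = (0, -1)) {C : Set B} (hC : IsClosed C) (h : C(C, E))
    (hFC : ∀ (c : C) (s : I), F (c, s) = (((s : ℝ) * (1 - s)) • h c, 1 - 2 * (s : ℝ))) :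
    ∃ ψ : C(B, E), (∀ x, ψ x ≠ 0) ∧ ∀ c : C, ψ c = h c := by
  have : TietzeExtension E := .of_tvs ℝ
  obtain ⟨η, hη, hηF⟩ : ∃ η : ℝ, 0 < η ∧ ∀ p, 3 * η ≤ ‖F p‖ := by
    obtain ⟨b, hb, h_le⟩ := isCompact_univ.exists_forall_le' (f := fun p => ‖F p‖)
      (by fun_prop) (a := 0) (fun p _ => norm_pos_iff.2 (hF p))
    exact ⟨b / 3, by positivity, fun p => by linarith [h_le p trivial]⟩
  obtain ⟨M, t, Q, ht, h_card, hQ, hQF⟩ := hB.exists_sum_smul_near F h_zero h_one hη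
  obtain ⟨w, w', hw, hw', h_general⟩ := exists_directions_avoid hn Q fun v => (hQ v).1
  have hQ_cont (v) : Continuous (Q v) := (hQ v).1.continuous
  let G : C(B × I, E × ℝ) := ⟨fun p => ∑ v, t v p.1 • Q v p.2, by fun_prop⟩
  have hG_norm (p) : 2 * η ≤ ‖G p‖ := by
    have h_near : ‖G p - F p‖ ≤ η := hQF p.1 p.2
    linarith [norm_sub_norm_le (F p) (G p), norm_sub_rev (F p) (G p), hηF p]
  have hG (p) : G p ≠ 0 := norm_pos_iff.1 (by linarith [hG_norm p])
  have h_avoid (x s s') : OnRay w 1 (G (x, s)) → ¬ OnRay w' (-1) (G (x, s')) := by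
    rintro ⟨r, hr, h_eq⟩ ⟨r', hr', h_eq'⟩
    obtain ⟨ν, u, hu⟩ := exists_fin_sum_smul_eq (E := E × ℝ) (ht.sum_eq_one x) (h_card x)
    exact h_general ν u s s' r r' hr hr' ((hu fun v => Q v s).symm.trans h_eq)
      ((hu fun v => Q v s').symm.trans h_eq')
  obtain ⟨ψ, hψ, h_eq⟩ := exists_extend_rayProjection_midpoint hG
    (fun x => exists_eventually_mem_separatingTimes hG
      (fun x => by simp [G, hQ, ← Finset.sum_smul, ht.sum_eq_one, -Prod.smul_mk])
      (fun x => by simp [G, hQ, ← Finset.sum_smul, ht.sum_eq_one, -Prod.smul_mk]) (h_avoid x)) hC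
    (fun x hx => half_mem_separatingTimes hw hw' (hQF x) (fun s => by linarith [hG_norm (x, s)])
      fun s => by rw [hFC ⟨x, hx⟩])
  refine exists_extend_mem_of_segment isOpen_compl_singleton hC ψ hψ h fun c θ hθ =>
    segment_ne_zero_of_norm_sub_lt (k := 1 / 4) (by norm_num) ?_ hθ
  have hF_mid : F (c, midpointI) = ((1 / 4 : ℝ) • h c, 0) := by
    rw [hFC]
    norm_num [midpointI]
  have h_norm : 3 * η ≤ ‖(1 / 4 : ℝ) • h c‖ := by
    simpa [hF_mid, Prod.norm_def] using hηF (c, midpointI)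
  have h_near : ‖G (c, midpointI) - ((1 / 4 : ℝ) • h c, 0)‖ ≤ η := hF_mid ▸ hQF c midpointI
  rw [h_eq]
  linarith [norm_rayProjection_sub_le hw hw' h_near]

end Desuspension

section Gluing

open scoped unitInterval
open Path

variable {B : Type*} [TopologicalSpace B] [CompactSpace B] [T2Space B]

lemma exists_path_extend_of_restrictLoops_eq_one {Z C ι : Type*} [TopologicalSpace Z]
    [TopologicalSpace C] {i : C(Z, B)} (hi : Topology.IsClosedEmbedding i) (j : C(Z, C))
    (Φ : Path (ContinuousMap.const C (northPole ι)) (ContinuousMap.const C (northPole ι)))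
    (hΦ : restrictLoops j _ (.fromPath (.mk Φ)) = 1) :
    ∃ F : Path (ContinuousMap.const B (northPole ι)) (ContinuousMap.const B (northPole ι)),
      ∀ t z, F t (i z) = Φ t (j z) := by
  rw [restrictLoops_mk] at hΦ
  exact exists_path_extend (isOpen_lineCompl ι) hi (.refl _) _
    (Homotopic.Quotient.eq.1 (show Homotopic.Quotient.mk (Path.map _ _) = _ from hΦ)).symm

lemma exists_path_of_closed_cover {κ Y : Type*} [Finite κ] [TopologicalSpace Y] {A : κ → Set B}
    (hA : ∀ τ, IsClosed (A τ)) (h_cover : ∀ x, ∃ τ, x ∈ A τ) {p q : Y}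
    (F : ∀ τ, Path (ContinuousMap.const (A τ) p) (ContinuousMap.const (A τ) q))
    (hF : ∀ τ τ' x (h : x ∈ A τ) (h' : x ∈ A τ') t, F τ t ⟨x, h⟩ = F τ' t ⟨x, h'⟩) :
    ∃ Ψ : Path (ContinuousMap.const B p) (ContinuousMap.const B q),
      ∀ τ t (x : A τ), Ψ t x = F τ t x := by
  choose τ hτ using h_cover
  let f (x : B) (t : I) : Y := F (τ x) t ⟨x, hτ x⟩
  have h_cont : Continuous fun a : B × I => f a.1 a.2 := by
    refine (locallyFinite_of_finite fun τ₀ => Prod.fst ⁻¹' A τ₀).continuous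
      (eq_univ_of_forall fun a => mem_iUnion.2 ⟨τ a.1, hτ a.1⟩)
      (fun τ₀ => (hA τ₀).preimage continuous_fst) fun τ₀ => ?_
    have : CompactSpace (A τ₀) := isCompact_iff_compactSpace.1 (hA τ₀).isCompact
    have h_eval : Continuous fun a : A τ₀ × I => F τ₀ a.2 a.1 := by fun_prop
    rw [continuousOn_iff_continuous_domRestrict]
    refine (h_eval.comp (f := fun a : (Prod.fst ⁻¹' A τ₀ : Set (B × I)) =>
      ((⟨a.1.1, a.2⟩ : A τ₀), a.1.2)) (by fun_prop)).congr fun a => ?_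
    exact hF _ _ _ _ _ _
  refine ⟨⟨ContinuousMap.curry ⟨fun a : I × B => f a.2 a.1, h_cont.comp continuous_swap⟩, ?_, ?_⟩,
    fun τ₀ t x => hF _ _ _ _ _ _⟩
  · ext1 x
    exact DFunLike.congr_fun (F (τ x)).source ⟨x, hτ x⟩
  · ext1 x
    exact DFunLike.congr_fun (F (τ x)).target ⟨x, hτ x⟩

lemma exists_loop_extend_of_closed_cover {κ ι : Type*} [Finite κ] {C : Set B} (hC : IsClosed C)
    {A : κ → Set B} (hA : ∀ τ, IsClosed (A τ)) (h_cover : ∀ x, x ∈ C ∨ ∃ τ, x ∈ A τ)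
    (h_inter : ∀ τ τ' x, τ ≠ τ' → x ∈ A τ → x ∈ A τ' → x ∈ C)
    (Φ : Path (ContinuousMap.const C (northPole ι)) (ContinuousMap.const C (northPole ι)))
    (hΦ : ∀ τ, restrictLoops (.inclusion (inter_subset_right : A τ ∩ C ⊆ C)) _
      (.fromPath (.mk Φ)) = 1) :
    ∃ Ψ : Path (ContinuousMap.const B (northPole ι)) (ContinuousMap.const B (northPole ι)),
      ∀ t (x : C), Ψ t x = Φ t x := by
  have h_extend (τ : κ) : ∃ F : Path (ContinuousMap.const (A τ) (northPole ι))
      (ContinuousMap.const (A τ) (northPole ι)),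
      ∀ t x (h : x ∈ A τ) (h' : x ∈ C), F t ⟨x, h⟩ = Φ t ⟨x, h'⟩ := by
    have : CompactSpace (A τ) := isCompact_iff_compactSpace.1 (hA τ).isCompact
    obtain ⟨F, hF⟩ := exists_path_extend_of_restrictLoops_eq_one
      (i := .inclusion (inter_subset_left : A τ ∩ C ⊆ A τ)) (.inclusion inter_subset_left
        (((hA τ).inter hC).preimage continuous_subtype_val)) _ Φ (hΦ τ)
    exact ⟨F, fun t x h h' => hF t ⟨x, h, h'⟩⟩
  choose F hF using h_extend
  refine (exists_path_of_closed_cover (A := fun o : Option κ => o.elim C A)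
    (Option.forall.2 ⟨hC, hA⟩)
    (fun x => (h_cover x).elim (fun h => ⟨none, h⟩) fun ⟨τ, h⟩ => ⟨some τ, h⟩)
    (fun o => match o with
      | none => Φ
      | some τ => F τ) ?_).imp fun Ψ hΨ => hΨ none
  rintro (_ | τ) (_ | τ') x h h' t
  · rfl
  · exact (hF τ' t x h' h).symm
  · exact hF τ t x h h'
  · rcases eq_or_ne τ τ' with rfl | hne
    · rfl
    · exact (hF τ t x h (h_inter τ τ' x hne h h')).trans (hF τ' t x h' _).symm

lemma exists_path_extend_suspensionPath {n : ℕ} {A : Set B} (hA : IsClosed A)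
    {g : C(A, Fin (n + 2) → ℝ)} (hg : ∀ x, IsNonconstant (g x))
    (Ψ : Path (ContinuousMap.const B (northPole (Fin (n + 2))))
      (ContinuousMap.const B (northPole (Fin (n + 2)))))
    (hΨ : restrictLoops ⟨Subtype.val, continuous_subtype_val⟩ _ (.fromPath (.mk Ψ)) =
      loopClass g) :
    ∃ F : Path (ContinuousMap.const B (northPole (Fin (n + 2))))
        (ContinuousMap.const B (southPole (Fin (n + 2)))),
      ∀ t (x : A), (F t x : (Fin (n + 2) → ℝ) × ℝ) = suspensionPoint (g x) t := by
  let base := suspensionPath (.const B (Pi.single (0 : Fin (n + 2)) 1))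
    fun _ => isNonconstant_single 0
  refine (exists_path_extend (isOpen_lineCompl _) (i := ⟨Subtype.val, continuous_subtype_val⟩)
    hA.isClosedEmbedding_subtypeVal (Ψ.trans base) (suspensionPath g hg) ?_).imp
    fun F hF t x => congrArg Subtype.val (hF t x)
  rw [restrictLoops_mk, loopClass_eq hg] at hΨ
  refine Homotopic.Quotient.eq.1 ?_
  refine (congrArg Homotopic.Quotient.mk (Path.map_trans _ _ _)).trans ?_
  refine (congrArg (·.trans (baseClass A 0)) hΨ).trans ?_
  refine (Homotopic.Quotient.trans_assoc _ _ _).trans ?_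
  rw [Homotopic.Quotient.symm_trans, Homotopic.Quotient.trans_refl]

end Gluing

/-! ### Maps to a simplex defined by a partition of unity -/

section Simplex

variable {Z V L ι : Type*} [TopologicalSpace Z] {n : ℕ}

lemma isNonconstant_of_sum_eq_one [Fintype ι] {y : ι → ℝ} (h_sum : ∑ i, y i = 1) {i : ι}
    (hi : y i = 0) : IsNonconstant y := by
  by_contra h
  simp only [IsNonconstant, not_exists, not_not] at h
  simp [Finset.sum_eq_zero fun j _ => (h j i).trans hi] at h_sum

/-- The barycentric coordinates with respect to the vertices `τ j`. -/
def faceCoords (t : V → C(Z, ℝ)) (τ : ι → V) : C(Z, ι → ℝ) where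
  toFun z j := t (τ j) z

/-- The map to the simplex with `n + 1` vertices whose coordinates after the first are the
barycentric coordinates with respect to the `n` vertices of `sg`; all other vertices go to the
vertex `0`. -/
def facetMap (t : V → C(Z, ℝ)) (sg : Fin n → V) : C(Z, Fin (n + 1) → ℝ) where
  toFun z := Fin.cons (1 - ∑ j, t (sg j) z) fun j => t (sg j) z

@[simp]
lemma facetMap_zero (t : V → C(Z, ℝ)) (sg : Fin n → V) (z : Z) :
    facetMap t sg z 0 = 1 - ∑ j, t (sg j) z :=
  rfl

@[simp]
lemma facetMap_succ (t : V → C(Z, ℝ)) (sg : Fin n → V) (z : Z) (j : Fin n) :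
    facetMap t sg z j.succ = t (sg j) z :=
  rfl

lemma sum_facetMap (t : V → C(Z, ℝ)) (sg : Fin n → V) (z : Z) : ∑ i, facetMap t sg z i = 1 := by
  simp [Fin.sum_univ_succ]

lemma list_prod_map_eq_zpow_sum {G α : Type*} [Group G] {y : G} {k : α → ℤ} {f : α → G}
    {l : List α} (h : ∀ a ∈ l, f a = y ^ k a) : (l.map f).prod = y ^ (l.map k).sum := by
  induction l with
  | nil => simp
  | cons a l ih =>
    rw [List.map_cons, List.prod_cons, List.map_cons, List.sum_cons, zpow_add, h a (by simp),
      ih fun b hb => h b (by simp [hb])]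

lemma det_ite_eq_perm (π : Equiv.Perm (Fin n)) :
    Matrix.det (Matrix.of fun j i : Fin n => if j = π i then (1 : ℤ) else 0) =
      Equiv.Perm.sign π := by
  rw [← Matrix.det_transpose, ← Int.cast_id (n := (Equiv.Perm.sign π : ℤ)),
    ← Matrix.det_permutation (R := ℤ) π]
  congr 1
  ext i j
  simp [Matrix.transpose_apply, PEquiv.toMatrix_apply, eq_comm]

lemma exists_eq_comp_succAbove [LinearOrder V] {τ : Fin (n + 1) → V} {sg : Fin n → V}
    (hτ : StrictMono τ) (hsg : StrictMono sg) (h : ∀ j, sg j ∈ range τ) :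
    ∃ i : Fin (n + 1), sg = fun j => τ (i.succAbove j) := by
  obtain ⟨i, hi⟩ : ∃ i, ∀ j, sg j ≠ τ i := by
    by_contra! h_all
    choose r hr using h_all
    have hr_inj : Function.Injective r := fun a b hab =>
      hτ.injective (by rw [← hr, ← hr, hab])
    simpa using Fintype.card_le_of_injective r hr_inj
  have h_card : ((Finset.univ.image τ).erase (τ i)).card = n := by
    simp [Finset.card_image_of_injective _ hτ.injective]
  refine ⟨i, (Finset.orderEmbOfFin_unique h_card (fun j => ?_) hsg).trans
    (Finset.orderEmbOfFin_unique h_card (fun j => ?_)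
      (hτ.comp (Fin.strictMono_succAbove i))).symm⟩
  · simpa [hi j] using h j
  · simp [hτ.injective.eq_iff, Fin.succAbove_ne]

variable [Fintype V]

lemma apply_eq_zero_of_carrier_subset {t : V → C(Z, ℝ)} {z : Z} {S : Set V}
    (h : (carrier t z : Set V) ⊆ S) {v : V} (hv : v ∉ S) : t v z = 0 := by
  by_contra hne
  exact hv (h (by simpa using hne))

lemma card_le_card_carrier {t : V → C(Z, ℝ)} {z : Z} {k : ℕ} {τ : Fin k → V}
    (hτ : Function.Injective τ) (h : ∀ j, t (τ j) z ≠ 0) : k ≤ (carrier t z).card := by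
  classical
  simpa [Finset.card_image_of_injective _ hτ] using Finset.card_le_card
    (Finset.image_subset_iff.2 fun j _ => mem_carrier.2 (h j) : Finset.univ.image τ ⊆ carrier t z)

lemma carrier_subset_range_of_card_le {t : V → C(Z, ℝ)} {z : Z} {k : ℕ} {τ : Fin k → V}
    (hτ : Function.Injective τ) (h : ∀ j, t (τ j) z ≠ 0) (h_card : (carrier t z).card ≤ k) :
    (carrier t z : Set V) ⊆ range τ := by
  classical
  have h_sub : Finset.univ.image τ ⊆ carrier t z :=
    Finset.image_subset_iff.2 fun j _ => mem_carrier.2 (h j)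
  rw [← Finset.eq_of_subset_of_card_le h_sub
    (by simpa [Finset.card_image_of_injective _ hτ] using h_card)]
  simp

lemma IsPartitionOfUnity.comp {Z' : Type*} [TopologicalSpace Z'] {t : V → C(Z, ℝ)}
    (ht : IsPartitionOfUnity t) (i : C(Z', Z)) : IsPartitionOfUnity fun v => (t v).comp i :=
  ⟨fun v z => ht.nonneg v (i z), fun z => ht.sum_eq_one (i z)⟩

lemma IsPartitionOfUnity.sum_comp_eq_one {t : V → C(Z, ℝ)} (ht : IsPartitionOfUnity t) [Fintype ι]
    {τ : ι → V} (hτ : Function.Injective τ) {z : Z} (h : (carrier t z : Set V) ⊆ range τ) :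
    ∑ j, t (τ j) z = 1 :=
  (Fintype.sum_of_injective τ hτ _ _ (fun _ hv => apply_eq_zero_of_carrier_subset h hv)
    fun _ => rfl).trans (ht.sum_eq_one z)

open Classical in
/-- The simplicial map to the simplex with vertices `ω i` given by a labelling `G` of the vertices
of the nerve of `t`. Vertices with a label outside `range ω` are ignored. -/
noncomputable def labelMap (t : V → C(Z, ℝ)) (G : V → L) (ω : ι → L) : C(Z, ι → ℝ) where
  toFun z i := ∑ v, if G v = ω i then t v z else 0
  continuous_toFun := continuous_pi fun i => continuous_finsetSum _ fun v _ => by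
    split_ifs <;> fun_prop

open Classical in
lemma labelMap_apply (t : V → C(Z, ℝ)) (G : V → L) (ω : ι → L) (z : Z) (i : ι) :
    labelMap t G ω z i = ∑ v, if G v = ω i then t v z else 0 :=
  rfl

lemma labelMap_eq_zero {t : V → C(Z, ℝ)} {G : V → L} {ω : ι → L} {z : Z} {i : ι}
    (h : ∀ v, G v = ω i → t v z = 0) : labelMap t G ω z i = 0 := by
  classical
  rw [labelMap_apply]
  exact Finset.sum_eq_zero fun v _ => ite_eq_right_iff.2 (h v)

lemma exists_of_labelMap_ne_zero {t : V → C(Z, ℝ)} {G : V → L} {ω : ι → L} {z : Z} {i : ι}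
    (h : labelMap t G ω z i ≠ 0) : ∃ v, G v = ω i ∧ t v z ≠ 0 := by
  by_contra! h_all
  exact h (labelMap_eq_zero h_all)

lemma IsPartitionOfUnity.labelMap_nonneg {t : V → C(Z, ℝ)} (ht : IsPartitionOfUnity t) (G : V → L)
    (ω : ι → L) (z : Z) (i : ι) : 0 ≤ labelMap t G ω z i := by
  classical
  rw [labelMap_apply]
  refine Finset.sum_nonneg fun v _ => ?_
  split_ifs
  exacts [ht.nonneg v z, le_rfl]

lemma IsPartitionOfUnity.sum_labelMap {t : V → C(Z, ℝ)} (ht : IsPartitionOfUnity t) [Fintype ι]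
    {G : V → L} {ω : ι → L} (hω : Function.Injective ω) {z : Z}
    (hG : ∀ v, t v z ≠ 0 → G v ∈ range ω) : ∑ i, labelMap t G ω z i = 1 := by
  classical
  rw [← ht.sum_eq_one z]
  simp only [labelMap_apply]
  rw [Finset.sum_comm]
  refine Finset.sum_congr rfl fun v _ => ?_
  by_cases hv : t v z = 0
  · simp [hv]
  · obtain ⟨i, hi⟩ := hG v hv
    simp [← hi, hω.eq_iff]

lemma IsPartitionOfUnity.facetMap_zero_nonneg {t : V → C(Z, ℝ)} (ht : IsPartitionOfUnity t)
    {sg : Fin n → V} (hsg : Function.Injective sg) (z : Z) : 0 ≤ facetMap t sg z 0 := by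
  classical
  rw [facetMap_zero, ← ht.sum_eq_one z, sub_nonneg,
    ← Finset.sum_image (f := fun v => t v z) (hsg.injOn (s := (Finset.univ : Finset (Fin n))))]
  exact Finset.sum_le_sum_of_subset_of_nonneg (Finset.subset_univ _) fun v _ _ => ht.nonneg v z

lemma IsPartitionOfUnity.isNonconstant_facetMap {t : V → C(Z, ℝ)} (ht : IsPartitionOfUnity t)
    {sg : Fin n → V} (hsg : Function.Injective sg) {z : Z} (hz : (carrier t z).card ≤ n) :
    IsNonconstant (facetMap t sg z) := by
  by_cases h : ∃ j, t (sg j) z = 0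
  · obtain ⟨j, hj⟩ := h
    exact isNonconstant_of_sum_eq_one (sum_facetMap t sg z) (i := j.succ) hj
  · refine isNonconstant_of_sum_eq_one (sum_facetMap t sg z) (i := 0) ?_
    rw [facetMap_zero, ht.sum_comp_eq_one hsg
      (carrier_subset_range_of_card_le hsg (not_exists.1 h) hz), sub_self]

lemma IsPartitionOfUnity.isNonconstant_labelMap {t : V → C(Z, ℝ)} (ht : IsPartitionOfUnity t)
    {G : V → L} {ω : Fin (n + 1) → L} (hω : Function.Injective ω) {z : Z}
    (hG : ∀ v, t v z ≠ 0 → G v ∈ range ω) (hz : (carrier t z).card ≤ n) :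
    IsNonconstant (labelMap t G ω z) := by
  by_cases h : ∃ i, labelMap t G ω z i = 0
  · obtain ⟨i, hi⟩ := h
    exact isNonconstant_of_sum_eq_one (ht.sum_labelMap hω hG) hi
  · choose r hr hr_ne using fun i => exists_of_labelMap_ne_zero (not_exists.1 h i)
    have hr_inj : Function.Injective r := fun a b hab => hω (by rw [← hr, ← hr, hab])
    have := card_le_card_carrier hr_inj hr_ne
    omega

lemma IsPartitionOfUnity.isNonconstant_faceCoords {t : V → C(Z, ℝ)} (ht : IsPartitionOfUnity t)
    {τ : Fin n → V} (hτ : Function.Injective τ) {z : Z}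
    (h_supp : (carrier t z : Set V) ⊆ range τ) (h_zero : ∃ j, t (τ j) z = 0) :
    IsNonconstant (faceCoords t τ z) :=
  let ⟨_, hj⟩ := h_zero
  isNonconstant_of_sum_eq_one (ht.sum_comp_eq_one hτ h_supp) hj

lemma IsPartitionOfUnity.facetMap_comp_succAbove {t : V → C(Z, ℝ)} (ht : IsPartitionOfUnity t)
    {τ : Fin (n + 1) → V} (hτ : Function.Injective τ)
    (h_supp : ∀ z, (carrier t z : Set V) ⊆ range τ) (i : Fin (n + 1)) :
    facetMap t (fun j => τ (i.succAbove j)) = permCoords (faceCoords t τ) i.cycleRange.symm := by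
  ext z j
  cases j using Fin.cases with
  | zero =>
    have h_sum := ht.sum_comp_eq_one hτ (h_supp z)
    rw [Fin.sum_univ_succAbove _ i] at h_sum
    simp [permCoords, faceCoords, ← h_sum]
  | succ j => simp [permCoords, faceCoords]

section Loops

variable [NeZero n] {t : V → C(Z, ℝ)}

lemma IsPartitionOfUnity.loopClass_labelMap (ht : IsPartitionOfUnity t) {G : V → L}
    {ω : Fin (n + 2) → L} (hω : Function.Injective ω)
    (h_label : ∀ z, IsNonconstant (labelMap t G ω z))
    {τ : Fin (n + 2) → V} (hτ : Function.Injective τ)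
    (h_supp : ∀ z, (carrier t z : Set V) ⊆ range τ)
    (h_face : ∀ z, IsNonconstant (faceCoords t τ z)) :
    loopClass (labelMap t G ω) =
      loopClass (faceCoords t τ) ^ orientationCochain ω (List.ofFn fun j => G (τ j)) := by
  classical
  have h_apply (z : Z) (i : Fin (n + 2)) :
      labelMap t G ω z i = ∑ j, if G (τ j) = ω i then t (τ j) z else 0 :=
    (Fintype.sum_of_injective τ hτ _ _
      (fun v hv => by simp [apply_eq_zero_of_carrier_subset (h_supp z) hv]) fun _ => rfl).symm
  by_cases hs : ∀ i, ∃ j, G (τ j) = ω i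
  · choose r hr using hs
    have hr_inj : Function.Injective r := fun a b hab => hω (by rw [← hr, ← hr, hab])
    let π := Equiv.ofBijective r (Finite.injective_iff_bijective.1 hr_inj)
    have h_iff (j i) : G (τ j) = ω i ↔ j = π i := by
      obtain ⟨i', rfl⟩ := π.surjective j
      rw [show G (τ (π i')) = ω i' from hr i', hω.eq_iff, π.injective.eq_iff]
    have h_perm : labelMap t G ω = permCoords (faceCoords t τ) π := by
      ext z i
      rw [h_apply]
      simp [h_iff, permCoords, faceCoords]
    rw [h_perm, loopClass_permCoords h_face, orientationCochain_ofFn]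
    simp only [h_iff, det_ite_eq_perm]
  · obtain ⟨i, hi⟩ := not_forall.1 hs
    have h_mem : ω i ∉ List.ofFn fun j => G (τ j) := fun h => hi ((List.mem_ofFn' _ _).1 h)
    rw [orientationCochain_eq_zero_of_notMem h_mem, zpow_zero]
    obtain ⟨k, hk, -⟩ := exists_ne_and_ne i i
    refine loopClass_eq_one h_label k (fun z => ht.labelMap_nonneg G ω z k)
      fun z => ⟨i, hk.symm, ?_⟩
    rw [h_apply]
    exact Finset.sum_eq_zero fun j _ => if_neg (not_exists.1 hi j)

lemma IsPartitionOfUnity.loopClass_facetMap_eq_one (ht : IsPartitionOfUnity t)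
    {sg : Fin (n + 1) → V} (hsg : Function.Injective sg)
    (h_facet : ∀ z, IsNonconstant (facetMap t sg z))
    {j : Fin (n + 1)} (hj : ∀ z, t (sg j) z = 0) : loopClass (facetMap t sg) = 1 :=
  loopClass_eq_one h_facet 0 (ht.facetMap_zero_nonneg hsg)
    fun z => ⟨j.succ, Fin.succ_ne_zero j, hj z⟩

lemma IsPartitionOfUnity.loopClass_facetMap [LinearOrder V] (ht : IsPartitionOfUnity t)
    {τ : Fin (n + 2) → V} (hτ : StrictMono τ) (h_supp : ∀ z, (carrier t z : Set V) ⊆ range τ)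
    (h_face : ∀ z, IsNonconstant (faceCoords t τ z)) {sg : Fin (n + 1) → V} (hsg : StrictMono sg)
    (h_facet : ∀ z, IsNonconstant (facetMap t sg z)) :
    loopClass (facetMap t sg) = loopClass (faceCoords t τ) ^
      ∑ i : Fin (n + 2), if sg = (fun j => τ (i.succAbove j)) then (-1 : ℤ) ^ (i : ℕ) else 0 := by
  by_cases h : ∀ j, sg j ∈ range τ
  · obtain ⟨i, rfl⟩ := exists_eq_comp_succAbove hτ hsg h
    have h_iff (i' : Fin (n + 2)) :
        ((fun j => τ (i.succAbove j)) = fun j => τ (i'.succAbove j)) ↔ i = i' := by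
      refine ⟨fun h_eq => Fin.succAbove_left_injective ?_, by rintro rfl; rfl⟩
      exact funext fun j => hτ.injective (congrFun h_eq j)
    rw [ht.facetMap_comp_succAbove hτ.injective h_supp, loopClass_permCoords h_face]
    simp [h_iff, Fin.sign_cycleRange]
  · obtain ⟨j, hj⟩ := not_forall.1 h
    rw [ht.loopClass_facetMap_eq_one hsg.injective h_facet
      fun z => apply_eq_zero_of_carrier_subset (h_supp z) hj, Finset.sum_eq_zero, zpow_zero]
    refine fun i _ => if_neg ?_
    rintro rfl
    exact hj ⟨_, rfl⟩

end Loops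

end Simplex

/-! ### The obstruction class of a labelled partition of unity -/

section Obstruction

variable {Z V L : Type*} [TopologicalSpace Z] [Fintype V] {n : ℕ} {t : V → C(Z, ℝ)} {G : V → L}
  {ω : Fin (n + 2) → L} {c : List V → ℤ}

/-- The obstruction class of the label map, corrected by the classes of the facets `sg` with
multiplicities `-c sg`. The loop group is not known to be commutative, so the product is taken over
an arbitrary enumeration of the facets. -/
noncomputable def obstructionClass (t : V → C(Z, ℝ)) (G : V → L) (ω : Fin (n + 2) → L)
    (c : List V → ℤ) :
    FundamentalGroup C(Z, lineCompl (Fin (n + 2))) (.const Z (northPole (Fin (n + 2)))) :=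
  loopClass (labelMap t G ω) * ((Finset.univ : Finset (Fin (n + 1) → V)).toList.map
    fun sg => loopClass (facetMap t sg) ^ (-c (List.ofFn sg))).prod

lemma restrictLoops_obstructionClass {Z' : Type*} [TopologicalSpace Z'] (i : C(Z', Z))
    (h_label : ∀ z, IsNonconstant (labelMap t G ω z))
    (h_facet : ∀ sg : Fin (n + 1) → V, c (List.ofFn sg) ≠ 0 →
      ∀ z, IsNonconstant (facetMap t sg z)) :
    restrictLoops i _ (obstructionClass t G ω c) =
      obstructionClass (fun v => (t v).comp i) G ω c := by
  rw [obstructionClass, map_mul, restrictLoops_loopClass i h_label, map_list_prod, List.map_map]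
  refine congrArg₂ _ rfl (congrArg _ (List.map_congr_left fun sg _ => ?_))
  rw [Function.comp_apply, map_zpow]
  by_cases h : c (List.ofFn sg) = 0
  · rw [h, neg_zero, zpow_zero, zpow_zero]
  · rw [restrictLoops_loopClass i (h_facet sg h)]
    rfl

variable [NeZero n]

lemma IsPartitionOfUnity.obstructionClass_eq_loopClass (ht : IsPartitionOfUnity t)
    (h_inj : ∀ sg : Fin (n + 1) → V, c (List.ofFn sg) ≠ 0 → Function.Injective sg)
    (h_zero : ∀ sg : Fin (n + 1) → V, c (List.ofFn sg) ≠ 0 → ∃ j, ∀ z, t (sg j) z = 0) :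
    obstructionClass t G ω c = loopClass (labelMap t G ω) := by
  rw [obstructionClass, list_prod_map_eq_zpow_sum (y := 1) (k := 0), one_zpow, mul_one]
  intro sg _
  by_cases h : c (List.ofFn sg) = 0
  · rw [h, neg_zero, zpow_zero, one_zpow]
  · obtain ⟨j, hj⟩ := h_zero sg h
    rw [ht.loopClass_facetMap_eq_one (h_inj sg h) (fun z => isNonconstant_of_sum_eq_one
      (sum_facetMap t sg z) (i := j.succ) (hj z)) hj, one_zpow, one_zpow]

lemma IsPartitionOfUnity.obstructionClass_eq_one [LinearOrder V] (ht : IsPartitionOfUnity t)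
    (hω : Function.Injective ω) (h_label : ∀ z, IsNonconstant (labelMap t G ω z))
    (h_mono : ∀ sg : Fin (n + 1) → V, c (List.ofFn sg) ≠ 0 → StrictMono sg)
    (h_facet : ∀ sg : Fin (n + 1) → V, c (List.ofFn sg) ≠ 0 →
      ∀ z, IsNonconstant (facetMap t sg z))
    {τ : Fin (n + 2) → V} (hτ : StrictMono τ) (h_supp : ∀ z, (carrier t z : Set V) ⊆ range τ)
    (h_face : ∀ z, IsNonconstant (faceCoords t τ z))
    (h_cob : coboundary c (List.ofFn τ) = orientationCochain ω (List.ofFn fun j => G (τ j))) :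
    obstructionClass t G ω c = 1 := by
  let k (sg : Fin (n + 1) → V) : ℤ :=
    ∑ i : Fin (n + 2), if sg = (fun j => τ (i.succAbove j)) then (-1) ^ (i : ℕ) else 0
  have h_pow (sg : Fin (n + 1) → V) : loopClass (facetMap t sg) ^ (-c (List.ofFn sg)) =
      loopClass (faceCoords t τ) ^ (k sg * -c (List.ofFn sg)) := by
    by_cases h : c (List.ofFn sg) = 0
    · rw [h, neg_zero, mul_zero, zpow_zero, zpow_zero]
    · rw [ht.loopClass_facetMap hτ h_supp h_face (h_mono sg h) (h_facet sg h), zpow_mul]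
  have h_sum : ∑ sg, k sg * -c (List.ofFn sg) = -coboundary c (List.ofFn τ) := by
    simp only [k, Finset.sum_mul, coboundary_ofFn]
    rw [Finset.sum_comm, ← Finset.sum_neg_distrib]
    simp
  rw [obstructionClass, ht.loopClass_labelMap hω h_label hτ.injective h_supp h_face,
    list_prod_map_eq_zpow_sum fun sg _ => h_pow sg, Finset.sum_map_toList, h_sum, h_cob,
    zpow_neg, mul_inv_cancel]

end Obstruction

/-! ### Extension of the label map over the nerve -/

/-- The simplices of the nerve of `t` with `k` vertices, listed in increasing order. -/
def NerveSimplex {V : Type*} [LinearOrder V] (t : V → C(X, ℝ)) (k : ℕ) : Type _ :=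
  {τ : Fin k → V // StrictMono τ ∧ ∃ x, ∀ j, t (τ j) x ≠ 0}

instance {V : Type*} [Finite V] [LinearOrder V] (t : V → C(X, ℝ)) (k : ℕ) :
    Finite (NerveSimplex t k) :=
  Subtype.finite

section Extension

variable {V L : Type*} [Fintype V] {n : ℕ} {t : V → C(X, ℝ)} {A : Set X} {G : V → L}
  {ω : Fin (n + 1) → L} {c : List V → ℤ}

lemma isClosed_setOf_card_carrier_le (t : V → C(X, ℝ)) (k : ℕ) :
    IsClosed {x | (carrier t x).card ≤ k} := by
  rw [← isOpen_compl_iff, isOpen_iff_mem_nhds]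
  intro x hx
  have h_near : ∀ v ∈ carrier t x, ∀ᶠ y in nhds x, t v y ≠ 0 := fun v hv =>
    (t v).continuous.continuousAt.eventually_ne (mem_carrier.1 hv)
  filter_upwards [(carrier t x).eventually_all.2 h_near] with y hy h_card
  exact hx ((Finset.card_le_card fun v hv => mem_carrier.2 (hy v hv)).trans h_card)

/-- The union of `A` and the preimage under `t` of the skeleton of the nerve formed by the simplices
with at most `k` vertices. -/
def relSkeleton (t : V → C(X, ℝ)) (A : Set X) (k : ℕ) : Set X :=
  {x | (carrier t x).card ≤ k} ∪ A

lemma isClosed_relSkeleton (t : V → C(X, ℝ)) (hA : IsClosed A) (k : ℕ) :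
    IsClosed (relSkeleton t A k) :=
  (isClosed_setOf_card_carrier_le t k).union hA

/-- The preimage under `t` of the simplex with vertices `τ j`. -/
def closedCell {k : ℕ} (t : V → C(X, ℝ)) (τ : Fin k → V) : Set X :=
  {x | (carrier t x : Set V) ⊆ range τ}

lemma isClosed_closedCell {k : ℕ} (t : V → C(X, ℝ)) (τ : Fin k → V) :
    IsClosed (closedCell t τ) := by
  have h_eq : closedCell t τ = ⋂ v ∈ (range τ)ᶜ, {x | t v x = 0} := by
    ext x
    simp only [closedCell, Set.subset_def, Finset.mem_coe, mem_carrier, mem_iInter, mem_compl_iff]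
    exact forall_congr' fun v => not_imp_comm
  rw [h_eq]
  exact isClosed_biInter fun v _ => isClosed_eq (t v).continuous continuous_const

lemma mem_relSkeleton_or_exists_mem_closedCell [LinearOrder V] {k : ℕ} {x : X} (A : Set X)
    (hx : (carrier t x).card ≤ k + 1) :
    x ∈ relSkeleton t A k ∨ ∃ τ : NerveSimplex t (k + 1), x ∈ closedCell t τ.1 := by
  obtain h | h := Nat.le_succ_iff.1 hx
  · exact .inl (.inl h)
  · refine .inr ⟨⟨(carrier t x).orderEmbOfFin h, ((carrier t x).orderEmbOfFin h).strictMono, x,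
      fun j => mem_carrier.1 (Finset.orderEmbOfFin_mem _ h j)⟩, ?_⟩
    simp [closedCell]

lemma mem_relSkeleton_of_mem_closedCell [LinearOrder V] {k : ℕ} {x : X} (A : Set X)
    {τ τ' : NerveSimplex t (k + 1)} (h_ne : τ ≠ τ') (hx : x ∈ closedCell t τ.1)
    (hx' : x ∈ closedCell t τ'.1) : x ∈ relSkeleton t A k := by
  classical
  refine .inl (show _ ≤ k from ?_)
  by_contra! h_card
  refine h_ne (Subtype.ext ?_)
  have h_range (τ : NerveSimplex t (k + 1)) (hx : x ∈ closedCell t τ.1) :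
      range τ.1 = carrier t x := by
    have h_sub : carrier t x ⊆ Finset.univ.image τ.1 := by
      rw [← Finset.coe_subset]
      simpa [closedCell] using hx
    rw [Finset.eq_of_subset_of_card_le h_sub (by
      simpa [Finset.card_image_of_injective _ τ.2.1.injective] using h_card)]
    simp
  exact (τ.2.1.range_inj τ'.2.1).1 ((h_range τ hx).trans (h_range τ' hx').symm)

/-- `G` defines a simplicial map from the nerve of the partition of unity `t` to the simplex with
vertices `ω i`, and this map carries `A` to the boundary of the simplex. -/
structure IsSimplexLabelling (t : V → C(X, ℝ)) (A : Set X) (G : V → L) (ω : Fin (n + 1) → L) :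
    Prop where
  isPartitionOfUnity : IsPartitionOfUnity t
  injective : Function.Injective ω
  mem_range : ∀ v x, t v x ≠ 0 → G v ∈ range ω
  exists_eq_zero : ∀ x ∈ A, ∃ i, ∀ v, G v = ω i → t v x = 0

lemma IsSimplexLabelling.isNonconstant_labelMap (hG : IsSimplexLabelling t A G ω) {x : X}
    (hx : x ∈ relSkeleton t A n) : IsNonconstant (labelMap t G ω x) := by
  obtain hx | hx := hx
  · exact hG.isPartitionOfUnity.isNonconstant_labelMap hG.injective (hG.mem_range · x) hx
  · obtain ⟨i, hi⟩ := hG.exists_eq_zero x hx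
    exact isNonconstant_of_sum_eq_one
      (hG.isPartitionOfUnity.sum_labelMap hG.injective (hG.mem_range · x)) (labelMap_eq_zero hi)

/-- `c` is a cochain on the nerve of `t`, relative to `A`, whose coboundary is the obstruction
cochain of the label map. It is supported on increasing tuples. -/
structure IsObstructionPrimitive [LinearOrder V] (t : V → C(X, ℝ)) (A : Set X) (G : V → L)
    (ω : Fin (n + 1) → L) (c : List V → ℤ) : Prop where
  strictMono : ∀ sg : Fin n → V, c (List.ofFn sg) ≠ 0 → StrictMono sg
  exists_eq_zero : ∀ sg : Fin n → V, c (List.ofFn sg) ≠ 0 → ∃ j, ∀ x ∈ A, t (sg j) x = 0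
  coboundary_eq : ∀ τ : Fin (n + 1) → V, StrictMono τ → (∃ x, ∀ j, t (τ j) x ≠ 0) →
    coboundary c (List.ofFn τ) = orientationCochain ω (List.ofFn fun j => G (τ j))

lemma IsObstructionPrimitive.isNonconstant_facetMap [LinearOrder V]
    (hc : IsObstructionPrimitive t A G ω c) (ht : IsPartitionOfUnity t) {x : X}
    (hx : x ∈ relSkeleton t A n) {sg : Fin n → V} (h_ne : c (List.ofFn sg) ≠ 0) :
    IsNonconstant (facetMap t sg x) := by
  obtain hx | hx := hx
  · exact ht.isNonconstant_facetMap (hc.strictMono sg h_ne).injective hx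
  · obtain ⟨j, hj⟩ := hc.exists_eq_zero sg h_ne
    exact isNonconstant_of_sum_eq_one (sum_facetMap t sg x) (i := j.succ) (hj x hx)

end Extension

section ExtensionToSuspension

variable {V L : Type*} [Fintype V] [LinearOrder V] {n : ℕ} [NeZero n] {t : V → C(X, ℝ)} {A : Set X}
  {G : V → L} {ω : Fin (n + 2) → L} {c : List V → ℤ} {Z : Type*} [TopologicalSpace Z]
  {i : C(Z, X)}

lemma IsObstructionPrimitive.obstructionClass_comp_of_mem (hc : IsObstructionPrimitive t A G ω c)
    (hG : IsSimplexLabelling t A G ω) (hi : ∀ z, i z ∈ A) :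
    obstructionClass (fun v => (t v).comp i) G ω c =
      loopClass (labelMap (fun v => (t v).comp i) G ω) :=
  (hG.isPartitionOfUnity.comp i).obstructionClass_eq_loopClass
    (fun sg h => (hc.strictMono sg h).injective) fun sg h =>
      let ⟨j, hj⟩ := hc.exists_eq_zero sg h
      ⟨j, fun z => hj (i z) (hi z)⟩

/- The label missing from `A` at `x` is missing on the whole cell, and so is a vertex of each facet
in the support of `c`. -/
lemma IsObstructionPrimitive.obstructionClass_comp_eq_one_of_mem
    (hc : IsObstructionPrimitive t A G ω c) (hG : IsSimplexLabelling t A G ω)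
    (hi_skel : ∀ z, i z ∈ relSkeleton t A (n + 1)) {k : ℕ} {τ : Fin k → V}
    (hi : ∀ z, i z ∈ closedCell t τ) {x : X} (hxA : x ∈ A) (hx : ∀ j, t (τ j) x ≠ 0) :
    obstructionClass (fun v => (t v).comp i) G ω c = 1 := by
  have h_zero {v : V} (hv : t v x = 0) (z : Z) : t v (i z) = 0 :=
    apply_eq_zero_of_carrier_subset (hi z) fun ⟨j, hj⟩ => hx j (hj ▸ hv)
  have ht := hG.isPartitionOfUnity.comp i
  obtain ⟨l, hl⟩ := hG.exists_eq_zero x hxA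
  obtain ⟨k, hk, -⟩ := exists_ne_and_ne l l
  rw [ht.obstructionClass_eq_loopClass (fun sg h => (hc.strictMono sg h).injective) fun sg h =>
    let ⟨j, hj⟩ := hc.exists_eq_zero sg h
    ⟨j, h_zero (hj x hxA)⟩]
  exact loopClass_eq_one (fun z => hG.isNonconstant_labelMap (hi_skel z)) k
    (fun z => ht.labelMap_nonneg G ω z k)
    fun z => ⟨l, hk.symm, labelMap_eq_zero fun v hv => h_zero (hl v hv) z⟩

lemma IsObstructionPrimitive.obstructionClass_comp_eq_one (hc : IsObstructionPrimitive t A G ω c)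
    (hG : IsSimplexLabelling t A G ω) (hi_skel : ∀ z, i z ∈ relSkeleton t A (n + 1))
    (τ : NerveSimplex t (n + 2)) (hi : ∀ z, i z ∈ closedCell t τ.1) :
    obstructionClass (fun v => (t v).comp i) G ω c = 1 := by
  obtain ⟨τ, hτ, hτ_supp⟩ := τ
  by_cases hA : ∃ x ∈ A, ∀ j, t (τ j) x ≠ 0
  · obtain ⟨x, hxA, hx⟩ := hA
    exact hc.obstructionClass_comp_eq_one_of_mem hG hi_skel hi hxA hx
  · have ht := hG.isPartitionOfUnity
    have h_face (z : Z) : ∃ j, t (τ j) (i z) = 0 := by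
      by_contra! h
      obtain hz | hz := hi_skel z
      · exact absurd ((card_le_card_carrier hτ.injective h).trans hz) (by omega)
      · exact hA ⟨i z, hz, h⟩
    exact (ht.comp i).obstructionClass_eq_one hG.injective
      (fun z => hG.isNonconstant_labelMap (hi_skel z)) hc.strictMono
      (fun sg h z => hc.isNonconstant_facetMap ht (hi_skel z) h) hτ hi
      (fun z => (ht.comp i).isNonconstant_faceCoords hτ.injective (hi z) (h_face z))
      (hc.coboundary_eq τ hτ hτ_supp)

/- The corrected obstruction class is represented by a loop over the skeleton. It is trivial on each
cell, so that the loop extends to all of `X`, and over `A` it is the class of the label map. -/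
theorem IsObstructionPrimitive.exists_path_suspensionPoint_labelMap [CompactSpace X] [T2Space X]
    (hc : IsObstructionPrimitive t A G ω c) (hG : IsSimplexLabelling t A G ω) (hA : IsClosed A)
    (h_card : ∀ x, (carrier t x).card ≤ n + 2) :
    ∃ F : Path (ContinuousMap.const X (northPole (Fin (n + 2))))
        (ContinuousMap.const X (southPole (Fin (n + 2)))),
      ∀ s, ∀ x ∈ A, (F s x : (Fin (n + 2) → ℝ) × ℝ) = suspensionPoint (labelMap t G ω x) s := by
  let C := relSkeleton t A (n + 1)
  let iC : C(C, X) := ⟨Subtype.val, continuous_subtype_val⟩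
  let iA : C(A, X) := ⟨Subtype.val, continuous_subtype_val⟩
  have hAC : A ⊆ C := subset_union_right
  have h_restrict {Z : Type _} [TopologicalSpace Z] (j : C(Z, C)) :
      restrictLoops j _ (obstructionClass (fun v => (t v).comp iC) G ω c) =
        obstructionClass (fun v => (t v).comp (iC.comp j)) G ω c :=
    restrictLoops_obstructionClass j (fun z => hG.isNonconstant_labelMap z.2)
      fun sg h z => hc.isNonconstant_facetMap hG.isPartitionOfUnity z.2 h
  obtain ⟨Φ, hΦ⟩ := Path.Homotopic.Quotient.mk_surjective
    (obstructionClass (fun v => (t v).comp iC) G ω c)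
  obtain ⟨Ψ, hΨ⟩ := exists_loop_extend_of_closed_cover (isClosed_relSkeleton t hA (n + 1))
    (A := fun τ : NerveSimplex t (n + 2) => closedCell t τ.1) (fun τ => isClosed_closedCell t τ.1)
    (fun x => mem_relSkeleton_or_exists_mem_closedCell A (h_card x))
    (fun τ τ' x => mem_relSkeleton_of_mem_closedCell A) Φ fun τ => by
      refine (congrArg _ hΦ).trans ((h_restrict _).trans ?_)
      exact hc.obstructionClass_comp_eq_one hG (fun z => z.2.2) τ fun z => z.2.1
  have h_class : restrictLoops iA _ (.fromPath (.mk Ψ)) =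
      loopClass (labelMap (fun v => (t v).comp iA) G ω) := by
    have h_eq : restrictLoops iA _ (.fromPath (.mk Ψ)) =
        restrictLoops (.inclusion hAC) _ (.fromPath (.mk Φ)) := by
      rw [restrictLoops_mk, restrictLoops_mk]
      congr 2
      ext s : 2
      exact ContinuousMap.ext fun z => hΨ s ⟨z.1, hAC z.2⟩
    refine h_eq.trans ((congrArg _ hΦ).trans ((h_restrict _).trans ?_))
    exact hc.obstructionClass_comp_of_mem hG fun z => z.2
  obtain ⟨F, hF⟩ := exists_path_extend_suspensionPath hA
    (fun x => hG.isNonconstant_labelMap (hAC x.2)) Ψ h_class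
  exact ⟨F, fun s x hx => hF s ⟨x, hx⟩⟩

end ExtensionToSuspension

/-! ### Covering dimension and partitions of unity -/

lemma IsOpenCover.exists_fin_subcover [CompactSpace X] {α : Set (Set X)} (hα : IsOpenCover α) :
    ∃ (M : ℕ) (U : Fin M → Set X), Function.Injective U ∧ (∀ i, U i ∈ α) ∧ ∀ x, ∃ i, x ∈ U i := by
  obtain ⟨s, hs, hs_fin, h_cover⟩ := isCompact_univ.elim_finite_subcover_image (b := α) (c := id)
    hα.1 (by rw [← hα.2, Set.sUnion_eq_biUnion]; rfl)
  have := hs_fin.fintype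
  let e := Fintype.equivFin s
  refine ⟨_, fun i => e.symm i, Subtype.val_injective.comp e.symm.injective,
    fun i => hs (e.symm i).2, fun x => ?_⟩
  obtain ⟨U, hU, hx⟩ := mem_iUnion₂.1 (h_cover (mem_univ x))
  exact ⟨e ⟨U, hU⟩, by simpa using hx⟩

lemma card_le_of_ord_le {V Y : Type*} {β : Set (Set Y)} {n : ℕ} (hβ : ord β ≤ n) {U : V → Set Y}
    (hU : Function.Injective U) (h_mem : ∀ v, U v ∈ β) {s : Finset V} {x : Y}
    (hx : ∀ v ∈ s, x ∈ U v) : s.card ≤ n + 1 := by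
  by_contra! h_card
  obtain ⟨g⟩ : Nonempty (Fin (n + 1 + 1) ↪ s) :=
    Function.Embedding.nonempty_of_card_le (by simpa using h_card)
  have h_ord : ((n + 1 : ℕ) : ℕ∞) ≤ ord β := natCast_le_ord
    (hU.comp (Subtype.val_injective.comp g.injective)) (fun i => h_mem (g i))
    ⟨x, mem_iInter.2 fun i => hx _ (g i).2⟩
  have := h_ord.trans hβ
  norm_cast at this
  omega

lemma exists_isPartitionOfUnity_of_topDim_le [CompactSpace X] [T2Space X] {n : ℕ}
    (hX : topDim X ≤ n) {α : Set (Set X)} (hα : IsOpenCover α) :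
    ∃ (M : ℕ) (t : Fin M → C(X, ℝ)), IsPartitionOfUnity t ∧ (∀ x, (carrier t x).card ≤ n + 1) ∧
      ∀ v, ∃ U ∈ α, Function.support (t v) ⊆ U := by
  have h_covD : covD α < (n : ℕ∞) + 1 := by
    refine ((le_iSup₂ (f := fun α (_ : α ∈ {α : Set (Set X) | IsOpenCover α}) => covD α)
      α hα).trans hX).trans_lt ?_
    exact_mod_cast n.lt_succ_self
  simp only [covD, iInf_lt_iff] at h_covD
  obtain ⟨β, ⟨hβ, hβα⟩, h_ord⟩ := h_covD
  obtain ⟨M, U, hU_inj, hU, hU_cover⟩ := hβ.exists_fin_subcover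
  obtain ⟨f, hf⟩ := PartitionOfUnity.exists_isSubordinate isClosed_univ U
    (fun i => hβ.1 _ (hU i)) fun x _ => mem_iUnion.2 (hU_cover x)
  have h_supp (v : Fin M) : Function.support (f v) ⊆ U v := (subset_tsupport _).trans (hf v)
  refine ⟨M, fun v => f v, ⟨f.nonneg, fun x => ?_⟩, fun x => ?_, fun v => ?_⟩
  · rw [← finsum_eq_sum_of_fintype]
    exact f.sum_eq_one (mem_univ x)
  · exact card_le_of_ord_le (Order.le_of_lt_add_one h_ord) hU_inj hU
      fun v hv => h_supp v (mem_carrier.1 hv)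
  · obtain ⟨W, hW, hUW⟩ := hβα _ (hU v)
    exact ⟨W, hW, (h_supp v).trans hUW⟩

lemma covD_le_of_support_subset {V : Type*} [Fintype V] {n : ℕ} {α : Set (Set X)}
    {φ : V → C(X, ℝ)} (h_ne : ∀ x, ∃ v, φ v x ≠ 0) (h_card : ∀ x, (carrier φ x).card ≤ n + 1)
    (hα : ∀ v, ∃ U ∈ α, Function.support (φ v) ⊆ U) : covD α ≤ n := by
  have h_cover : IsOpenCover (range fun v => Function.support (φ v)) := by
    refine ⟨?_, eq_univ_of_forall fun x => ?_⟩
    · rintro _ ⟨v, rfl⟩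
      exact (φ v).continuous.isOpen_support
    · obtain ⟨v, hv⟩ := h_ne x
      exact ⟨_, ⟨v, rfl⟩, hv⟩
  refine (iInf₂_le (f := fun β (_ : β ∈ {β : Set (Set X) | IsOpenCover β ∧ Refines β α}) => ord β)
    _ ⟨h_cover, by rintro _ ⟨v, rfl⟩; exact hα v⟩).trans (iSup₂_le ?_)
  rintro k ⟨f, hf, h_mem, x, hx⟩
  choose r hr using h_mem
  have hr_inj : Function.Injective r := fun a b h => hf (by rw [← hr, ← hr, h])
  have h_le := (card_le_card_carrier hr_inj fun j =>
    show x ∈ Function.support (φ (r j)) from (hr j).ge (mem_iInter.1 hx j)).trans (h_card x)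
  exact_mod_cast Nat.succ_le_succ_iff.1 h_le

lemma hasFinePartitions_of_topDim_le {K : Type*} [MetricSpace K] [CompactSpace K] {n : ℕ}
    (hK : topDim K ≤ n) : HasFinePartitions K n := by
  intro δ hδ
  obtain ⟨M, t, ht, h_card, h_ball⟩ := exists_isPartitionOfUnity_of_topDim_le hK
    (α := range fun p : K => Metric.ball p δ)
    ⟨by rintro _ ⟨p, rfl⟩; exact Metric.isOpen_ball,
      eq_univ_of_forall fun x => ⟨_, ⟨x, rfl⟩, Metric.mem_ball_self hδ⟩⟩
  have h_center (v : Fin M) : ∃ p : K, ∀ x, t v x ≠ 0 → dist p x < δ := by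
    obtain ⟨_, ⟨p, rfl⟩, hp⟩ := h_ball v
    exact ⟨p, fun x hx => Metric.mem_ball'.1 (hp hx)⟩
  choose p hp using h_center
  exact ⟨M, t, p, ht, hp, h_card⟩

lemma HasFinePartitions.subtype {K : Type*} [MetricSpace K] {n : ℕ} (hK : HasFinePartitions K n)
    (B : Set K) : HasFinePartitions B n := by
  intro δ hδ
  obtain hB | ⟨⟨b⟩⟩ := isEmpty_or_nonempty B
  · exact ⟨0, Fin.elim0, Fin.elim0, ⟨(·.elim0), isEmptyElim⟩, (·.elim0), isEmptyElim⟩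
  obtain ⟨M, t, p, ht, hp, h_card⟩ := hK (δ / 2) (half_pos hδ)
  have h_center (v : Fin M) : ∃ q : B, ∀ x : B, t v x ≠ 0 → dist q x < δ := by
    by_cases h : ∃ q : B, t v q ≠ 0
    · obtain ⟨q, hq⟩ := h
      exact ⟨q, fun x hx => (dist_triangle_left (q : K) x (p v)).trans_lt
        (by linarith [hp v q hq, hp v x hx])⟩
    · exact ⟨b, fun x hx => absurd ⟨x, hx⟩ h⟩
  choose q hq using h_center
  exact ⟨M, fun v => (t v).comp ⟨Subtype.val, continuous_subtype_val⟩, q, ht.comp _, hq,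
    fun x => h_card x⟩

/-! ### From Alexander–Spanier cochains to the nerve -/

section NerveCochain

variable {K V L : Type*} [MetricSpace K] {k : ℕ} {A : Set K}

open Classical in
/-- The cochain on a nerve with vertices `V`, supported on increasing tuples, that is pulled back
from an Alexander–Spanier cochain at scale `δ` by the choice of a point `p v` for each vertex. -/
noncomputable def nerveCochain [LinearOrder V] (p : V → K) (δ : ℝ) (c : List K → ℤ) (l : List V) :
    ℤ :=
  if l.Pairwise (· < ·) ∧ l.map p ∈ smallLists δ then c (l.map p) else 0

lemma pairwise_lt_ofFn [LinearOrder V] {sg : Fin k → V} :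
    (List.ofFn sg).Pairwise (· < ·) ↔ StrictMono sg :=
  List.pairwise_ofFn

lemma nerveCochain_ofFn [LinearOrder V] {p : V → K} {δ : ℝ} (c : List K → ℤ) {sg : Fin k → V}
    (hsg : StrictMono sg) (h_small : (List.ofFn sg).map p ∈ smallLists δ) :
    nerveCochain p δ c (List.ofFn sg) = c ((List.ofFn sg).map p) :=
  if_pos ⟨pairwise_lt_ofFn.2 hsg, h_small⟩

lemma map_ofFn_mem_smallLists {t : V → C(K, ℝ)} {p : V → K} {δ : ℝ}
    (hp : ∀ v x, t v x ≠ 0 → dist (p v) x < δ / 2) {τ : Fin k → V} {x : K}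
    (hx : ∀ j, t (τ j) x ≠ 0) : (List.ofFn τ).map p ∈ smallLists δ := by
  simp only [smallLists, List.map_ofFn, Set.mem_ofPred, List.forall_mem_ofFn_iff, Function.comp]
  exact fun i j => (dist_triangle_right _ _ x).trans_lt
    (by linarith [hp _ _ (hx i), hp _ _ (hx j)])

lemma isObstructionPrimitive_nerveCochain [LinearOrder V] {t : V → C(K, ℝ)}
    {p : V → K} {δ : ℝ} (hδ : 0 < δ) (hp : ∀ v x, t v x ≠ 0 → dist (p v) x < δ / 2) {f : K → L}
    {ω : Fin (k + 1) → L} {c : List K → ℤ}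
    (hc : IsRelPrimitive (smallLists δ) (nearLists A δ) k
      (fun l => orientationCochain ω (l.map f)) c) :
    IsObstructionPrimitive t A (fun v => f (p v)) ω (nerveCochain p δ c) where
  strictMono sg h_ne := by
    by_contra h_mono
    exact h_ne (if_neg fun h => h_mono (pairwise_lt_ofFn.1 h.1))
  exists_eq_zero sg h_ne := by
    by_contra! h_near
    choose a ha h_supp using h_near
    classical
    obtain ⟨⟨-, h_small⟩, h_ne⟩ := ite_ne_right_iff.1 h_ne
    refine h_ne (hc.eq_zero _ ⟨h_small, by simp, .inl ?_⟩)
    simp only [nearLists, List.map_ofFn, Set.mem_ofPred, List.forall_mem_ofFn_iff]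
    exact fun j => ⟨a j, ha j, (hp _ _ (h_supp j)).trans (half_lt_self hδ)⟩
  coboundary_eq τ hτ := by
    rintro ⟨x, hx⟩
    have h_cob := hc.coboundary_eq _ (map_ofFn_mem_smallLists hp hx) (by simp)
    rw [List.map_ofFn, List.map_ofFn, coboundary_ofFn] at h_cob
    refine Eq.trans ?_ h_cob
    rw [coboundary_ofFn]
    refine Finset.sum_congr rfl fun i _ => ?_
    rw [nerveCochain_ofFn c (fun _ _ h => hτ (Fin.strictMono_succAbove i h))
      (map_ofFn_mem_smallLists hp fun j => hx _), List.map_ofFn]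
    rfl

lemma IsObstructionPrimitive.comp {Z : Type*} [TopologicalSpace Z] [LinearOrder V]
    {t : V → C(X, ℝ)} {B : Set X} {G : V → L} {ω : Fin (k + 1) → L} {c : List V → ℤ}
    (hc : IsObstructionPrimitive t B G ω c) (i : C(Z, X)) :
    IsObstructionPrimitive (fun v => (t v).comp i) (i ⁻¹' B) G ω c where
  strictMono := hc.strictMono
  exists_eq_zero sg h_ne :=
    let ⟨j, hj⟩ := hc.exists_eq_zero sg h_ne
    ⟨j, fun z => hj (i z)⟩
  coboundary_eq τ hτ := fun ⟨z, hz⟩ => hc.coboundary_eq τ hτ ⟨i z, hz⟩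

end NerveCochain

/-! ### The suspension over a cell -/

section Cell

/-- The points at which one of the functions `φ (ω i)` vanishes: the complement of the preimage of
the open star of the simplex with vertices `ω i`. -/
def openStarCompl {V ι : Type*} (φ : V → C(X, ℝ)) (ω : ι → V) : Set X :=
  {x | ∃ i, φ (ω i) x = 0}

lemma isClosed_openStarCompl {V ι : Type*} [Finite ι] (φ : V → C(X, ℝ)) (ω : ι → V) :
    IsClosed (openStarCompl φ ω) := by
  rw [openStarCompl, Set.ofPred_exists]
  exact isClosed_iUnion_of_finite fun i => isClosed_eq (φ (ω i)).continuous continuous_const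

variable {K V : Type*} [MetricSpace K] {n : ℕ} {φ : V → C(K, ℝ)}

lemma exists_forall_dist_lt_apply_ne_zero [CompactSpace K] (hφ : ∀ x, ∃ v, φ v x ≠ 0) :
    ∃ ε > 0, ∃ g : K → V, ∀ p x, dist p x < ε → φ (g p) x ≠ 0 := by
  obtain ⟨ε, hε, h_ball⟩ := lebesgue_number_lemma_of_metric (isCompact_univ (X := K))
    (c := fun v => {x | φ v x ≠ 0}) (fun v => isOpen_ne_fun (φ v).continuous continuous_const)
    fun x _ => mem_iUnion.2 (hφ x)
  choose g hg using fun p => h_ball p trivial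
  exact ⟨ε, hε, g, fun p x hx => hg p (Metric.mem_ball'.2 hx)⟩

variable [Fintype V]

lemma isRelCocycle_orientationCochain_openStarCompl {ω : Fin (n + 1) → V}
    (hω : Function.Injective ω) (h_card : ∀ x, (carrier φ x).card ≤ n + 1) {ε : ℝ} (hε : 0 < ε)
    {g : K → V} (hg : ∀ p x, dist p x < 2 * ε → φ (g p) x ≠ 0) :
    IsRelCocycle (smallLists ε) (nearLists (openStarCompl φ ω) ε) n
      fun l => orientationCochain ω (l.map g) := by
  refine isRelCocycle_orientationCochain hω (fun l hl h_all v hv => ?_) fun l hl hl_near => ?_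
  · obtain ⟨x, hx, rfl⟩ := List.mem_map.1 hv
    refine carrier_subset_range_of_card_le hω (z := x) (fun i => ?_) (h_card x)
      (mem_carrier.2 (hg x x (by simpa using hε)))
    obtain ⟨y, hy, hyi⟩ := List.mem_map.1 (h_all i)
    rw [← hyi]
    exact hg y x (by linarith [hl y hy x hx])
  · by_contra! h_all
    obtain ⟨y₀, hy₀, -⟩ := List.mem_map.1 (h_all 0)
    obtain ⟨a, ⟨i, hi⟩, ha⟩ := hl_near y₀ hy₀
    obtain ⟨y, hy, hyi⟩ := List.mem_map.1 (h_all i)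
    refine hg y a ?_ (hyi ▸ hi)
    linarith [dist_triangle y y₀ a, hl y hy y₀ hy₀]

lemma isSimplexLabelling_closedCell {W : Type*} [Fintype W] {t : W → C(K, ℝ)}
    (ht : IsPartitionOfUnity t) {ω : Fin (n + 1) → V} (hω : Function.Injective ω) {G : W → V}
    (hG : ∀ v x, t v x ≠ 0 → φ (G v) x ≠ 0) {i : C(closedCell φ ω, K)} (hi : ∀ x, i x = x) :
    IsSimplexLabelling (fun v => (t v).comp i) (i ⁻¹' openStarCompl φ ω) G ω where
  isPartitionOfUnity := ht.comp i
  injective := hω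
  mem_range v x hv := by
    by_contra h_range
    exact hG v (i x) hv (apply_eq_zero_of_carrier_subset (hi x ▸ x.2) h_range)
  exists_eq_zero x := fun ⟨j, hj⟩ => ⟨j, fun v hv => by
    by_contra h
    exact hG v (i x) h (hv ▸ hj)⟩

theorem exists_path_suspensionPoint_closedCell [CompactSpace K] [NeZero n]
    (hK : HasFinePartitions K (n + 1)) (hφ : ∀ x, ∃ v, φ v x ≠ 0)
    (h_card : ∀ x, (carrier φ x).card ≤ n + 2) {ω : Fin (n + 2) → V} (hω : Function.Injective ω)
    (h_prime : ∀ p : ℕ, p.Prime → AlexanderSpanierVanishes (ZMod p) (openStarCompl φ ω) n)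
    (h_rat : AlexanderSpanierVanishes ℚ (openStarCompl φ ω) (n + 1)) :
    ∃ g : C(closedCell φ ω, Fin (n + 2) → ℝ), (∀ x i, 0 ≤ g x i) ∧ (∀ x, ∑ i, g x i = 1) ∧
      (∀ x i, g x i ≠ 0 → φ (ω i) x ≠ 0) ∧
      ∃ F : Path (ContinuousMap.const (closedCell φ ω) (northPole (Fin (n + 2))))
          (ContinuousMap.const _ (southPole (Fin (n + 2)))),
        ∀ s, ∀ x : closedCell φ ω, (x : K) ∈ openStarCompl φ ω →
          (F s x : (Fin (n + 2) → ℝ) × ℝ) = suspensionPoint (g x) s := by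
  have : CompactSpace (closedCell φ ω) :=
    isCompact_iff_compactSpace.1 (isClosed_closedCell φ ω).isCompact
  obtain ⟨ε, hε, g, hg⟩ := exists_forall_dist_lt_apply_ne_zero hφ
  obtain ⟨δ, hδ, hδε, ρ, hρ, c, hc⟩ :=
    AlexanderSpanierVanishes.exists_isRelPrimitive_map h_prime h_rat (half_pos hε)
      (isRelCocycle_orientationCochain_openStarCompl hω h_card (half_pos hε)
        fun p x hx => hg p x (by linarith))
  obtain ⟨M, t, p, ht, hp, ht_card⟩ := hK (δ / 2) (half_pos hδ)
  let G (v : Fin M) : V := g (ρ (p v))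
  let i : C(closedCell φ ω, K) := ⟨Subtype.val, continuous_subtype_val⟩
  have hG (v : Fin M) (x : K) (hv : t v x ≠ 0) : φ (G v) x ≠ 0 :=
    hg _ _ (by linarith [dist_triangle (ρ (p v)) (p v) x, hp v x hv, hρ (p v)])
  have hc' : IsObstructionPrimitive t (openStarCompl φ ω) G ω (nerveCochain p δ c) :=
    isObstructionPrimitive_nerveCochain hδ hp (f := g ∘ ρ) (by simpa only [List.map_map] using hc)
  have h_lab := isSimplexLabelling_closedCell ht hω hG (i := i) fun _ => rfl
  obtain ⟨F, hF⟩ := (hc'.comp i).exists_path_suspensionPoint_labelMap h_lab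
    ((isClosed_openStarCompl φ ω).preimage i.continuous) fun x => ht_card x
  refine ⟨_, h_lab.isPartitionOfUnity.labelMap_nonneg G ω,
    fun x => h_lab.isPartitionOfUnity.sum_labelMap hω (h_lab.mem_range · x), fun x j hj => ?_,
    F, hF⟩
  obtain ⟨v, hv, htv⟩ := exists_of_labelMap_ne_zero hj
  exact hv ▸ hG v x htv

end Cell

section CellDesuspension

open scoped unitInterval

/-- The coordinates of a vector modulo the constant vectors. -/
def diffCoords (n : ℕ) : (Fin (n + 1) → ℝ) →L[ℝ] (Fin n → ℝ) :=
  .pi fun j => .proj j.succ - .proj 0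

@[simp]
lemma diffCoords_apply {n : ℕ} (y : Fin (n + 1) → ℝ) (j : Fin n) :
    diffCoords n y j = y j.succ - y 0 :=
  rfl

lemma diffCoords_ne_zero {n : ℕ} {y : Fin (n + 1) → ℝ} (hy : IsNonconstant y) :
    diffCoords n y ≠ 0 := by
  intro h
  have h_eq (i) : y i = y 0 := by
    cases i using Fin.cases with
    | zero => rfl
    | succ j => exact sub_eq_zero.1 (congrFun h j)
  obtain ⟨i, j, hij⟩ := hy
  exact hij ((h_eq i).trans (h_eq j).symm)

lemma HasFinePartitions.exists_extend_diffCoords {B : Type*} [MetricSpace B] [CompactSpace B]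
    {m n : ℕ} (hn : m + 2 < 2 * n) (hB : HasFinePartitions B m) {C : Set B} (hC : IsClosed C)
    (g : C(B, Fin (n + 1) → ℝ))
    (F : Path (ContinuousMap.const B (northPole (Fin (n + 1))))
      (ContinuousMap.const B (southPole (Fin (n + 1)))))
    (hF : ∀ s, ∀ x ∈ C, (F s x : (Fin (n + 1) → ℝ) × ℝ) = suspensionPoint (g x) s) :
    ∃ ψ : C(B, Fin n → ℝ), (∀ x, ψ x ≠ 0) ∧ ∀ x ∈ C, ψ x = diffCoords n (g x) := by
  let q (y : lineCompl (Fin (n + 1))) : (Fin n → ℝ) × ℝ := (diffCoords n y.1.1, y.1.2)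
  let F' : C(B × I, (Fin n → ℝ) × ℝ) := ⟨fun p => q (F p.2 p.1), by fun_prop⟩
  have hF'_ne_zero (p) : F' p ≠ 0 := fun hp => by
    rcases (F p.2 p.1).2 with h | h
    · exact h (congrArg Prod.snd hp)
    · exact diffCoords_ne_zero h (congrArg Prod.fst hp)
  have hF'_zero (x) : F' (x, 0) = (0, 1) := by
    refine (congrArg q (DFunLike.congr_fun F.source x)).trans ?_
    simp [q, northPole]
  have hF'_one (x) : F' (x, 1) = (0, -1) := by
    refine (congrArg q (DFunLike.congr_fun F.target x)).trans ?_
    simp [q, southPole]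
  obtain ⟨ψ, hψ, h_eq⟩ := hB.exists_extend_ne_zero (by simpa using hn) F' hF'_ne_zero hF'_zero
    hF'_one hC ⟨fun x => diffCoords n (g x), by fun_prop⟩ fun x s => by
      simp [F', q, hF s x x.2, suspensionPoint]
  exact ⟨ψ, hψ, fun x hx => h_eq ⟨x, hx⟩⟩

lemma isNonconstant_segment {ι : Type*} [Fintype ι] {p q : ι → ℝ} (hp : ∀ i, 0 ≤ p i)
    (hp_sum : ∑ i, p i = 1) (hq : ∀ i, 0 ≤ q i) (hpq : ∀ i, p i ≠ 0 → q i ≠ 0)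
    (hq_zero : ∃ i, q i = 0) {θ : ℝ} (hθ : θ ∈ I) : IsNonconstant ((1 - θ) • p + θ • q) := by
  obtain ⟨i, hqi⟩ := hq_zero
  have hpi : p i = 0 := not_imp_not.1 (hpq i) hqi
  obtain ⟨k, -, hk⟩ := Finset.exists_ne_zero_of_sum_ne_zero (hp_sum.trans_ne one_ne_zero)
  have hpk : 0 < p k := (hp k).lt_of_ne' hk
  have hqk : 0 < q k := (hq k).lt_of_ne' (hpq k hk)
  refine ⟨k, i, ne_of_gt ?_⟩
  simp only [Pi.add_apply, Pi.smul_apply, smul_eq_mul, hpi, hqi, mul_zero, add_zero]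
  obtain rfl | hθ₀ := hθ.1.eq_or_lt
  · simpa using hpk
  · exact add_pos_of_nonneg_of_pos (mul_nonneg (sub_nonneg.2 hθ.2) hpk.le) (mul_pos hθ₀ hqk)

theorem exists_ne_zero_eq_diffCoords {K V : Type*} [MetricSpace K] [CompactSpace K] [Fintype V]
    {n : ℕ} (hn : 2 ≤ n) (hK : HasFinePartitions K (n + 1)) {φ : V → C(K, ℝ)}
    (hφ_nonneg : ∀ v x, 0 ≤ φ v x) (hφ : ∀ x, ∃ v, φ v x ≠ 0)
    (h_card : ∀ x, (carrier φ x).card ≤ n + 2) {ω : Fin (n + 2) → V} (hω : Function.Injective ω)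
    (h_prime : ∀ p : ℕ, p.Prime → AlexanderSpanierVanishes (ZMod p) (openStarCompl φ ω) n)
    (h_rat : AlexanderSpanierVanishes ℚ (openStarCompl φ ω) (n + 1)) :
    ∃ ψ : C(closedCell φ ω, Fin (n + 1) → ℝ), (∀ x, ψ x ≠ 0) ∧
      ∀ x : closedCell φ ω, (x : K) ∈ openStarCompl φ ω →
        ψ x = diffCoords (n + 1) fun i => φ (ω i) x := by
  have : NeZero n := ⟨by omega⟩
  have : CompactSpace (closedCell φ ω) :=
    isCompact_iff_compactSpace.1 (isClosed_closedCell φ ω).isCompact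
  obtain ⟨g, hg_nonneg, hg_sum, hg, F, hF⟩ :=
    exists_path_suspensionPoint_closedCell hK hφ h_card hω h_prime h_rat
  have hA : IsClosed {x : closedCell φ ω | (x : K) ∈ openStarCompl φ ω} :=
    (isClosed_openStarCompl φ ω).preimage continuous_subtype_val
  obtain ⟨ψ, hψ, h_eq⟩ := (hK.subtype _).exists_extend_diffCoords (by omega) hA g F hF
  have : TietzeExtension (Fin (n + 1) → ℝ) := .of_tvs ℝ
  obtain ⟨ψ', hψ', h_eq'⟩ := exists_extend_mem_of_segment isOpen_compl_singleton hA ψ hψ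
    ⟨fun x => diffCoords (n + 1) fun i => φ (ω i) x, by fun_prop⟩ fun x θ hθ => by
      have h_ne := diffCoords_ne_zero (isNonconstant_segment (hg_nonneg x) (hg_sum x)
        (fun i => hφ_nonneg (ω i) x) (hg x) x.2 hθ)
      rwa [map_add, map_smul, map_smul, ← h_eq x x.2] at h_ne
  exact ⟨ψ', hψ', fun x hx => h_eq' ⟨x, hx⟩⟩

end CellDesuspension

/-! ### Pushing off the top simplices -/

section Push

/-- The representative of `y` modulo the constant vectors that lies on the boundary of the
orthant, that is, the one whose smallest coordinate is zero. -/
noncomputable def subInf {ι : Type*} [Fintype ι] [Nonempty ι] (y : ι → ℝ) : ι → ℝ :=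
  fun i => y i - Finset.univ.inf' Finset.univ_nonempty y

section SubInf

variable {ι : Type*} [Fintype ι] [Nonempty ι] {y : ι → ℝ}

@[fun_prop]
lemma continuous_subInf : Continuous (subInf : (ι → ℝ) → ι → ℝ) :=
  continuous_pi fun i => (continuous_apply i).sub
    (Continuous.finset_inf'_apply _ fun j _ => continuous_apply j)

lemma subInf_nonneg (y : ι → ℝ) (i : ι) : 0 ≤ subInf y i :=
  sub_nonneg.2 (Finset.inf'_le _ (Finset.mem_univ i))

lemma exists_subInf_eq_zero (y : ι → ℝ) : ∃ i, subInf y i = 0 := by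
  obtain ⟨i, -, hi⟩ := Finset.exists_mem_eq_inf' Finset.univ_nonempty y
  exact ⟨i, sub_eq_zero.2 hi.symm⟩

lemma subInf_ne_zero (hy : IsNonconstant y) : subInf y ≠ 0 := by
  obtain ⟨i, j, hij⟩ := hy
  exact fun h => hij ((sub_eq_zero.1 (congrFun h i)).trans (sub_eq_zero.1 (congrFun h j)).symm)

lemma subInf_sub_const_of_nonneg (hy : ∀ i, 0 ≤ y i) (hy_zero : ∃ i, y i = 0) (c : ℝ) :
    subInf (fun i => y i - c) = y := by
  have h_inf : Finset.univ.inf' Finset.univ_nonempty (fun i => y i - c) = -c := by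
    obtain ⟨i, hi⟩ := hy_zero
    refine le_antisymm ((Finset.inf'_le _ (Finset.mem_univ i)).trans_eq (by simp [hi]))
      (Finset.le_inf' _ _ fun j _ => by linarith [hy j])
  ext i
  simp [subInf, h_inf]

end SubInf

lemma cons_zero_diffCoords {n : ℕ} (y : Fin (n + 1) → ℝ) :
    (Fin.cons 0 (diffCoords n y) : Fin (n + 1) → ℝ) = fun i => y i - y 0 := by
  ext i
  cases i using Fin.cases <;> simp

lemma isNonconstant_cons_zero {n : ℕ} {z : Fin n → ℝ} (hz : z ≠ 0) :
    IsNonconstant (Fin.cons 0 z : Fin (n + 1) → ℝ) := by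
  obtain ⟨j, hj⟩ := Function.ne_iff.1 hz
  exact ⟨j.succ, 0, by simpa using hj⟩

lemma exists_extend_of_union_eq_univ {Y : Type*} [TopologicalSpace Y] {A B : Set X}
    (hA : IsClosed A) (hB : IsClosed B) (hAB : A ∪ B = univ) (f : C(X, Y)) (g : C(B, Y))
    (hfg : ∀ x : B, (x : X) ∈ A → g x = f x) :
    ∃ h : C(X, Y), (∀ x ∈ A, h x = f x) ∧ ∀ x : B, h x = g x := by
  classical
  let h (x : X) : Y := if hx : x ∈ B then g ⟨x, hx⟩ else f x
  have h_left : EqOn h f A := fun x hx => by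
    by_cases hxB : x ∈ B
    · simpa [h, hxB] using hfg ⟨x, hxB⟩ hx
    · simp [h, hxB]
  have h_right (x : B) : h x = g x := by simp [h]
  have h_cont : ContinuousOn h (A ∪ B) :=
    (f.continuous.continuousOn.congr h_left).union_of_isClosed
      (continuousOn_iff_continuous_domRestrict.2 (g.continuous.congr fun x => (h_right x).symm))
      hA hB
  rw [hAB, continuousOn_univ] at h_cont
  exact ⟨⟨h, h_cont⟩, h_left, h_right⟩

lemma exists_extend_orthant_boundary {n : ℕ} {A B : Set X} (hA : IsClosed A) (hB : IsClosed B)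
    (hAB : A ∪ B = univ) (f : C(X, Fin (n + 1) → ℝ)) (hf : ∀ x ∈ A, ∀ i, 0 ≤ f x i)
    (hf_zero : ∀ x ∈ A, ∃ i, f x i = 0) (ψ : C(B, Fin n → ℝ)) (hψ : ∀ x, ψ x ≠ 0)
    (hψf : ∀ x : B, (x : X) ∈ A → ψ x = diffCoords n (f x)) :
    ∃ h : C(X, Fin (n + 1) → ℝ), (∀ x ∈ A, h x = f x) ∧ (∀ x i, 0 ≤ h x i) ∧
      (∀ x, ∃ i, h x i = 0) ∧ ∀ x ∉ A, h x ≠ 0 := by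
  let g : C(B, Fin (n + 1) → ℝ) := ⟨fun x => subInf (Fin.cons 0 (ψ x)), by fun_prop⟩
  have hgf (x : B) (hx : (x : X) ∈ A) : g x = f x := by
    simp only [g, ContinuousMap.coe_mk, hψf x hx, cons_zero_diffCoords,
      subInf_sub_const_of_nonneg (hf x hx) (hf_zero x hx)]
  obtain ⟨h, hhA, hhB⟩ := exists_extend_of_union_eq_univ hA hB hAB f g hgf
  have h_mem (x) : x ∈ A ∨ x ∈ B := hAB.ge (mem_univ x)
  refine ⟨h, hhA, fun x => ?_, fun x => ?_, fun x hx => ?_⟩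
  · rcases h_mem x with hx | hx
    · exact hhA x hx ▸ hf x hx
    · exact hhB ⟨x, hx⟩ ▸ subInf_nonneg _
  · rcases h_mem x with hx | hx
    · exact hhA x hx ▸ hf_zero x hx
    · exact hhB ⟨x, hx⟩ ▸ exists_subInf_eq_zero _
  · have hxB : x ∈ B := (h_mem x).resolve_left hx
    exact hhB ⟨x, hxB⟩ ▸ subInf_ne_zero (isNonconstant_cons_zero (hψ _))

lemma openStarCompl_union_closedCell {V : Type*} [Fintype V] {n : ℕ} {φ : V → C(X, ℝ)}
    (h_card : ∀ x, (carrier φ x).card ≤ n) {ω : Fin n → V} (hω : Function.Injective ω) :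
    openStarCompl φ ω ∪ closedCell φ ω = univ :=
  eq_univ_of_forall fun x => or_iff_not_imp_left.2 fun hx =>
    carrier_subset_range_of_card_le hω (fun i hi => hx ⟨i, hi⟩) (h_card x)

section Simplices

variable {K V : Type*} [MetricSpace K] [CompactSpace K] [Fintype V] {n : ℕ} {φ : V → C(K, ℝ)}

theorem exists_support_subset_eq_zero (hn : 2 ≤ n) (hK : HasFinePartitions K (n + 1))
    (hφ_nonneg : ∀ v x, 0 ≤ φ v x) (hφ : ∀ x, ∃ v, φ v x ≠ 0)
    (h_card : ∀ x, (carrier φ x).card ≤ n + 2) {ω : Fin (n + 2) → V} (hω : Function.Injective ω)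
    (h_prime : ∀ p : ℕ, p.Prime → AlexanderSpanierVanishes (ZMod p) (openStarCompl φ ω) n)
    (h_rat : AlexanderSpanierVanishes ℚ (openStarCompl φ ω) (n + 1)) :
    ∃ φ' : V → C(K, ℝ), (∀ v x, 0 ≤ φ' v x) ∧ (∀ x, ∃ v, φ' v x ≠ 0) ∧
      (∀ v x, φ' v x ≠ 0 → φ v x ≠ 0) ∧ ∀ x, ∃ i, φ' (ω i) x = 0 := by
  obtain ⟨ψ, hψ, hψφ⟩ :=
    exists_ne_zero_eq_diffCoords hn hK hφ_nonneg hφ h_card hω h_prime h_rat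
  obtain ⟨f, hfA, hf_nonneg, hf_zero, hf⟩ := exists_extend_orthant_boundary
    (isClosed_openStarCompl φ ω) (isClosed_closedCell φ ω)
    (openStarCompl_union_closedCell h_card hω) ⟨fun x i => φ (ω i) x, by fun_prop⟩
    (fun x _ i => hφ_nonneg (ω i) x) (fun x hx => hx) ψ hψ hψφ
  let φ' : V → C(K, ℝ) := Function.extend ω (fun i => ⟨fun x => f x i, by fun_prop⟩) φ
  have h_face (i x) : φ' (ω i) x = f x i :=
    DFunLike.congr_fun (hω.extend_apply (fun i => (⟨fun x => f x i, by fun_prop⟩ : C(K, ℝ))) φ i) x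
  have h_other (v) (hv : v ∉ range ω) : φ' v = φ v := Function.extend_apply' _ _ _ hv
  have h_eq (v x) (hx : x ∈ openStarCompl φ ω) : φ' v x = φ v x := by
    by_cases hv : v ∈ range ω
    · obtain ⟨i, rfl⟩ := hv
      rw [h_face, hfA x hx]
      rfl
    · rw [h_other v hv]
  refine ⟨φ', fun v x => ?_, fun x => ?_, fun v x hv => ?_,
    fun x => by simpa [h_face] using hf_zero x⟩
  · by_cases hv : v ∈ range ω
    · obtain ⟨i, rfl⟩ := hv
      exact h_face i x ▸ hf_nonneg x i
    · exact h_other v hv ▸ hφ_nonneg v x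
  · by_cases hx : x ∈ openStarCompl φ ω
    · simpa only [h_eq _ x hx] using hφ x
    · obtain ⟨i, hi⟩ := Function.ne_iff.1 (hf x hx)
      exact ⟨ω i, h_face i x ▸ hi⟩
  · by_cases hx : x ∈ openStarCompl φ ω
    · rwa [h_eq v x hx] at hv
    by_cases h_range : v ∈ range ω
    · obtain ⟨i, rfl⟩ := h_range
      exact fun hi => hx ⟨i, hi⟩
    · rwa [h_other v h_range] at hv

/-- The simplices with `k` vertices whose open stars are met by the map with barycentric
coordinates proportional to `φ`. -/
def coveredSimplices {V : Type*} (φ : V → C(X, ℝ)) (k : ℕ) : Set (Finset V) :=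
  {S | S.card = k ∧ ∃ x, ∀ v ∈ S, φ v x ≠ 0}

lemma coveredSimplices_ssubset {V : Type*} {φ φ' : V → C(X, ℝ)} {k : ℕ}
    (h_supp : ∀ v x, φ' v x ≠ 0 → φ v x ≠ 0) {S : Finset V} (hS : S ∈ coveredSimplices φ k)
    (hS' : ∀ x, ∃ v ∈ S, φ' v x = 0) : coveredSimplices φ' k ⊂ coveredSimplices φ k := by
  refine ⟨fun T ⟨hT, x, hx⟩ => ⟨hT, x, fun v hv => h_supp v x (hx v hv)⟩, fun h_sub => ?_⟩
  obtain ⟨-, x, hx⟩ := h_sub hS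
  obtain ⟨v, hv, hvx⟩ := hS' x
  exact hx v hv hvx

lemma exists_carrier_card_le (hn : 2 ≤ n) (hK : HasFinePartitions K (n + 1))
    (h_prime : ∀ (A : Set K) (p : ℕ), p.Prime → AlexanderSpanierVanishes (ZMod p) A n)
    (h_rat : ∀ A : Set K, AlexanderSpanierVanishes ℚ A (n + 1))
    (hφ_nonneg : ∀ v x, 0 ≤ φ v x) (hφ : ∀ x, ∃ v, φ v x ≠ 0)
    (h_card : ∀ x, (carrier φ x).card ≤ n + 2) :
    ∃ φ' : V → C(K, ℝ), (∀ x, ∃ v, φ' v x ≠ 0) ∧ (∀ v x, φ' v x ≠ 0 → φ v x ≠ 0) ∧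
      ∀ x, (carrier φ' x).card ≤ n + 1 := by
  induction h : (coveredSimplices φ (n + 2)).ncard using Nat.strong_induction_on generalizing φ with
  | _ N ih =>
  obtain h_empty | ⟨S, hS⟩ := (coveredSimplices φ (n + 2)).eq_empty_or_nonempty
  · refine ⟨φ, hφ, fun _ _ => id, fun x => Nat.le_of_lt_succ ((h_card x).lt_of_ne fun hx => ?_)⟩
    exact h_empty.le (show carrier φ x ∈ _ from ⟨hx, x, fun v => mem_carrier.1⟩)
  let e : Fin (n + 2) ≃ S := (S.equivFinOfCardEq hS.1).symm
  obtain ⟨φ', hφ'_nonneg, hφ', h_supp, h_zero⟩ :=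
    exists_support_subset_eq_zero hn hK hφ_nonneg hφ h_card
      (Subtype.val_injective.comp e.injective) (h_prime _) (h_rat _)
  have h_card' (x) : (carrier φ' x).card ≤ n + 2 :=
    (Finset.card_le_card fun v hv => mem_carrier.2 (h_supp v x (mem_carrier.1 hv))).trans (h_card x)
  have h_lt : coveredSimplices φ' (n + 2) ⊂ coveredSimplices φ (n + 2) :=
    coveredSimplices_ssubset h_supp hS fun x => let ⟨i, hi⟩ := h_zero x; ⟨e i, (e i).2, hi⟩
  obtain ⟨φ'', hφ'', h_supp', h_card''⟩ :=
    ih _ (h ▸ Set.ncard_lt_ncard h_lt (Set.toFinite _)) hφ'_nonneg hφ' h_card' rfl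
  exact ⟨φ'', hφ'', fun v x hv => h_supp v x (h_supp' v x hv), h_card''⟩

end Simplices

variable {K : Type*} [MetricSpace K] [CompactSpace K] {n : ℕ}

theorem topDim_le_of_alexanderSpanierVanishes (hn : 2 ≤ n) (hK : topDim K ≤ n + 1)
    (h_prime : ∀ (A : Set K) (p : ℕ), p.Prime → AlexanderSpanierVanishes (ZMod p) A n)
    (h_rat : ∀ A : Set K, AlexanderSpanierVanishes ℚ A (n + 1)) : topDim K ≤ n := by
  have hK' : topDim K ≤ ((n + 1 : ℕ) : ℕ∞) := mod_cast hK
  refine iSup₂_le fun α hα => ?_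
  obtain ⟨M, t, ht, h_card, h_sub⟩ := exists_isPartitionOfUnity_of_topDim_le hK' hα
  have ht_ne (x) : ∃ v, t v x ≠ 0 := by
    obtain ⟨v, -, hv⟩ := Finset.exists_ne_zero_of_sum_ne_zero
      ((ht.sum_eq_one x).trans_ne one_ne_zero)
    exact ⟨v, hv⟩
  obtain ⟨φ, hφ, h_supp, hφ_card⟩ := exists_carrier_card_le hn (hasFinePartitions_of_topDim_le hK')
    h_prime h_rat ht.nonneg ht_ne h_card
  refine covD_le_of_support_subset hφ hφ_card fun v => ?_
  obtain ⟨U, hU, hvU⟩ := h_sub v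
  exact ⟨U, hU, fun x hx => hvU (h_supp v x hx)⟩

theorem topDim_le_of_mdim_lt (hn : 2 ≤ n) (hK : topDim K ≤ n + 1)
    {d : (ℤ → K) → (ℤ → K) → ℝ} (hd : IsCompatMetric d) (h_mdim : mdim (shift K) d < n) :
    topDim K ≤ n := by
  refine topDim_le_of_alexanderSpanierVanishes hn hK (fun A p hp => ?_) fun A => ?_
  · have : Fact p.Prime := ⟨hp⟩
    exact alexanderSpanierVanishes_of_mdim_lt (ZMod p) A n hd h_mdim
  · exact alexanderSpanierVanishes_of_mdim_lt ℚ A (n + 1) hd (h_mdim.trans (by norm_cast; simp))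

end Push

/-- for a finite dimensional compact metric space `K`, the mean dimension of
the full shift on the alphabet `K` is at least `dim K - 1`. -/
theorem mdim_fullshift_ge {K : Type*} [MetricSpace K] [CompactSpace K]
    (hfin : topDim K ≠ ⊤)
    (d : (ℤ → K) → (ℤ → K) → ℝ) (hd : IsCompatMetric d) :
    ((topDim K - 1 : ℕ∞) : ℝ≥0∞) ≤ mdim (shift K) d := by
  obtain ⟨D, hD⟩ := ENat.ne_top_iff_exists.1 hfin
  rcases D with _ | _ | _ | n
  · simp [← hD]
  · simp [← hD]
  · have h_one := one_le_mdim hd (by simp [← hD])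
    have h_cast : topDim K - 1 = 1 := by rw [← hD]; rfl
    simpa [h_cast] using h_one
  · by_contra! h_lt
    have h_cast : topDim K - 1 = ((n + 2 : ℕ) : ℕ∞) := by rw [← hD]; rfl
    rw [h_cast] at h_lt
    have h_le := topDim_le_of_mdim_lt (Nat.le_add_left 2 n) (by rw [← hD]; rfl) hd
      (by simpa using h_lt)
    rw [← hD, Nat.cast_le] at h_le
    omega

end MeanDimPaper
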